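/- arXiv:1310.7767 — 3 statements merged into one kernel-verified Lean document; each statement's English description precedes it below -/
import Mathlib

section
/- The set of eigenvalues of the imaginary cubic oscillator is infinite. Moreover, there exist N ∈ ℕ and a sequence (λ_n)_{n ≥ N} of eigenvalues such that λ_n − ((2n+1)·π/(√3·K))^{6/5} → 0 as n → ∞, where K = 2·∫₀¹ √(1 − t³) dt. -/
open MeasureTheory Filter

/-- `lam` is an eigenvalue of the imaginary cubic oscillator `H = p² + i x³`. -/
def IsEigenvalueICO (lam : ℂ) : Prop :=
  ∃ ψ : ℝ → ℂ, ψ ≠ 0 ∧ ContDiff ℝ 2 ψ ∧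
    Integrable (fun x : ℝ => ‖ψ x‖ ^ 2) ∧
    ∀ x : ℝ, -(deriv (deriv ψ) x) + Complex.I * (x : ℂ) ^ 3 * ψ x = lam * ψ x

/-- The turning-point constant `K = 2∫₀¹ √(1-t³) dt`. -/
noncomputable def Kconst : ℝ := 2 * ∫ t in (0:ℝ)..1, Real.sqrt (1 - t ^ 3)

namespace ICO

def IsSol (μ : ℂ) (f f1 : ℂ → ℂ) : Prop :=
  ∀ s, HasDerivAt f (f1 s) s ∧ HasDerivAt f1 ((s ^ 3 + μ) * f s) s

noncomputable def co (a0 a1 μ : ℂ) : ℕ → ℂ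
  | 0 => a0
  | 1 => a1
  | 2 => μ * a0 / 2
  | 3 => μ * a1 / 6
  | 4 => μ * (μ * a0 / 2) / 12
  | n + 5 => (co a0 a1 μ n + μ * co a0 a1 μ (n + 3)) / (((n : ℂ) + 4) * ((n : ℂ) + 5))

lemma co_rec (a0 a1 μ : ℂ) (n : ℕ) :
    ((n : ℂ) + 2) * ((n : ℂ) + 1) * co a0 a1 μ (n + 2) =
      μ * co a0 a1 μ n + (if 3 ≤ n then co a0 a1 μ (n - 3) else 0) := by
  match n with
  | 0 => simp [co]; ring
  | 1 => simp [co]; ring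
  | 2 => simp [co]; ring
  | n + 3 =>
    have h4 : ((n : ℂ) + 4) ≠ 0 := by exact_mod_cast (by omega : n + 4 ≠ 0)
    have h5 : ((n : ℂ) + 5) ≠ 0 := by exact_mod_cast (by omega : n + 5 ≠ 0)
    have : co a0 a1 μ (n + 3 + 2) = (co a0 a1 μ n + μ * co a0 a1 μ (n + 3)) / (((n : ℂ) + 4) * ((n : ℂ) + 5)) := by
      rw [show n + 3 + 2 = n + 5 by ring]; rw [co]
    rw [this]
    have e1 : (((n + 3 : ℕ) : ℂ) + 2) = (n : ℂ) + 5 := by push_cast; ring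
    have e2 : (((n + 3 : ℕ) : ℂ) + 1) = (n : ℂ) + 4 := by push_cast; ring
    rw [e1, e2]
    field_simp
    simp
    ring

lemma co_cont (a0 a1 : ℂ) (n : ℕ) : Continuous (fun μ => co a0 a1 μ n) := by
  induction n using Nat.strong_induction_on with
  | _ n ih =>
    match n with
    | 0 => simp only [co]; fun_prop
    | 1 => simp only [co]; fun_prop
    | 2 => simp only [co]; fun_prop
    | 3 => simp only [co]; fun_prop
    | 4 => simp only [co]; fun_prop
    | n + 5 =>
      simp only [co]
      have h1 := ih n (by omega)
      have h2 := ih (n + 3) (by omega)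
      exact (h1.add (continuous_id.mul h2)).div_const _

lemma co_bound (a0 a1 : ℂ) {ρ B L : ℝ} (hρ : 1 ≤ ρ) (hB : 0 ≤ B)
    (hL : ρ ^ 5 + B * ρ ^ 2 ≤ L) (N : ℕ) (hN : L ≤ N) (μ : ℂ) (hμ : ‖μ‖ ≤ B) (n : ℕ) :
    ‖co a0 a1 μ n‖ * ρ ^ n ≤ (‖a0‖ + ‖a1‖ * ρ) * L ^ N := by
  have hρ5 : (1:ℝ) ≤ ρ ^ 5 := one_le_pow₀ hρ
  have hBρ : 0 ≤ B * ρ ^ 2 := by positivity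
  have hL1 : 1 ≤ L := by linarith
  set c := ‖a0‖ + ‖a1‖ * ρ with hc
  have hc0 : 0 ≤ c := by positivity
  suffices h : ‖co a0 a1 μ n‖ * ρ ^ n ≤ c * L ^ (min n N) by
    refine h.trans ?_
    gcongr
    exact min_le_right _ _
  induction n using Nat.strong_induction_on with
  | _ n ih =>
    match n with
    | 0 => simp [co, hc]; positivity
    | 1 =>
      have : 1 ≤ L ^ (min 1 N) := one_le_pow₀ hL1
      simp only [co, pow_one]
      calc ‖a1‖ * ρ ≤ c * 1 := by simp [hc]
        _ ≤ _ := by gcongr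
    | n + 2 =>
      have hr := co_rec a0 a1 μ n
      have h1 := ih n (by omega)
      have hnn : ‖((n : ℂ) + 2) * ((n : ℂ) + 1)‖ = ((n:ℝ) + 2) * ((n:ℝ) + 1) := by
        rw [norm_mul]
        have e1 : ((n : ℂ) + 2) = (((n:ℝ) + 2 : ℝ) : ℂ) := by push_cast; ring
        have e2 : ((n : ℂ) + 1) = (((n:ℝ) + 1 : ℝ) : ℂ) := by push_cast; ring
        rw [e1, e2, Complex.norm_real, Complex.norm_real, Real.norm_of_nonneg (by positivity),
          Real.norm_of_nonneg (by positivity)]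
      set Mx := c * L ^ (min n N) with hMx
      have hMx0 : 0 ≤ Mx := by positivity
      have h2 : ‖(if 3 ≤ n then co a0 a1 μ (n - 3) else 0)‖ * ρ ^ (n + 2) ≤ ρ ^ 5 * Mx := by
        split_ifs with h3
        · have := ih (n - 3) (by omega)
          have e : ρ ^ (n + 2) = ρ ^ (n - 3) * ρ ^ 5 := by
            rw [← pow_add]; congr 1; omega
          rw [e]
          have h4 : ‖co a0 a1 μ (n - 3)‖ * ρ ^ (n - 3) ≤ Mx := by
            refine this.trans ?_
            rw [hMx]
            gcongr
            omega
          calc _ = (‖co a0 a1 μ (n - 3)‖ * ρ ^ (n - 3)) * ρ ^ 5 := by ring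
            _ ≤ Mx * ρ ^ 5 := by gcongr
            _ = _ := by ring
        · simp; positivity
      have h3 : ‖μ * co a0 a1 μ n‖ * ρ ^ (n + 2) ≤ B * ρ ^ 2 * Mx := by
        rw [norm_mul]
        calc _ = ‖μ‖ * ρ ^ 2 * (‖co a0 a1 μ n‖ * ρ ^ n) := by ring
          _ ≤ B * ρ ^ 2 * Mx := by gcongr
      have h4 : ((n:ℝ) + 2) * ((n:ℝ) + 1) * (‖co a0 a1 μ (n + 2)‖ * ρ ^ (n + 2)) ≤ L * Mx := by
        calc _ = ‖((n : ℂ) + 2) * ((n : ℂ) + 1) * co a0 a1 μ (n + 2)‖ * ρ ^ (n + 2) := by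
              rw [norm_mul, hnn]; ring
          _ ≤ (‖μ * co a0 a1 μ n‖ + ‖(if 3 ≤ n then co a0 a1 μ (n - 3) else 0)‖) * ρ ^ (n + 2) := by
              rw [hr]; gcongr; exact norm_add_le _ _
          _ ≤ (ρ ^ 5 + B * ρ ^ 2) * Mx := by linarith
          _ ≤ L * Mx := by gcongr
      set X := ‖co a0 a1 μ (n + 2)‖ * ρ ^ (n + 2) with hX
      have hX0 : 0 ≤ X := by positivity
      have hn0 : (0:ℝ) ≤ n := Nat.cast_nonneg n
      by_cases hnN : n + 1 ≤ N
      · have : L * Mx ≤ c * L ^ (min (n + 2) N) := by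
          rw [hMx]
          calc L * (c * L ^ (min n N)) = c * L ^ (min n N + 1) := by ring
            _ ≤ _ := by
              gcongr
              omega
        have h6 : 1 * X ≤ ((n:ℝ) + 2) * ((n:ℝ) + 1) * X := by
          gcongr
          nlinarith
        linarith
      · have hNn : (N:ℝ) ≤ n := by exact_mod_cast (by omega : N ≤ n)
        have : Mx ≤ c * L ^ (min (n + 2) N) := by
          rw [hMx]
          gcongr
          omega
        refine le_trans ?_ this
        have h5 : ((n:ℝ) + 2) * ((n:ℝ) + 1) * X ≤ ((n:ℝ) + 2) * ((n:ℝ) + 1) * Mx := by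
          refine h4.trans ?_
          gcongr
          nlinarith
        exact le_of_mul_le_mul_left h5 (by positivity)

lemma co_bound' (a0 a1 : ℂ) {ρ B : ℝ} (hρ : 1 ≤ ρ) (hB : 0 ≤ B) :
    ∃ M : ℝ, 0 ≤ M ∧ ∀ μ : ℂ, ‖μ‖ ≤ B → ∀ n, ‖co a0 a1 μ n‖ * ρ ^ n ≤ M := by
  obtain ⟨N, hN⟩ := exists_nat_ge (ρ ^ 5 + B * ρ ^ 2)
  refine ⟨(‖a0‖ + ‖a1‖ * ρ) * (ρ ^ 5 + B * ρ ^ 2) ^ N, by positivity, fun μ hμ n => ?_⟩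
  exact co_bound a0 a1 hρ hB le_rfl N hN μ hμ n

noncomputable def fs (a0 a1 μ s : ℂ) : ℂ := ∑' n, co a0 a1 μ n * s ^ n
noncomputable def fs1 (a0 a1 μ s : ℂ) : ℂ := ∑' n : ℕ, co a0 a1 μ n * (n * s ^ (n - 1))

lemma term_bound {x : ℂ} {M r : ℝ} {s : ℂ} {n : ℕ} (hr : 1 ≤ r) (hs : ‖s‖ ≤ r)
    (h : ‖x‖ * (2 * r) ^ n ≤ M) : ‖x * s ^ n‖ ≤ M * (1 / 2) ^ n := by
  rw [norm_mul, norm_pow]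
  calc ‖x‖ * ‖s‖ ^ n ≤ ‖x‖ * r ^ n := by gcongr
    _ = ‖x‖ * (2 * r) ^ n * (1 / 2) ^ n := by rw [mul_assoc, ← mul_pow]; congr 2; ring
    _ ≤ _ := by gcongr

lemma term_bound1 {x : ℂ} {M r : ℝ} {s : ℂ} {n : ℕ} (hr : 1 ≤ r) (hs : ‖s‖ ≤ r)
    (h : ‖x‖ * (2 * r) ^ n ≤ M) : ‖x * (n * s ^ (n - 1))‖ ≤ M * ((n:ℝ) ^ 1 * (1 / 2) ^ n) := by
  rw [norm_mul, norm_mul, norm_pow, Complex.norm_natCast]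
  have : ‖s‖ ^ (n - 1) ≤ r ^ n := by
    calc ‖s‖ ^ (n - 1) ≤ r ^ (n - 1) := by gcongr
      _ ≤ r ^ n := by gcongr; exact Nat.sub_le _ _
  calc ‖x‖ * (n * ‖s‖ ^ (n - 1)) ≤ ‖x‖ * (n * r ^ n) := by gcongr
    _ = (‖x‖ * (2 * r) ^ n) * (n ^ 1 * (1 / 2) ^ n) := by
        rw [mul_pow, one_div, inv_pow]; field_simp; try ring
    _ ≤ _ := by gcongr

lemma summ0 (M : ℝ) : Summable (fun n : ℕ => M * (1 / 2 : ℝ) ^ n) :=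
  (summable_geometric_of_lt_one (by norm_num) (by norm_num)).mul_left M
lemma summ1 (M : ℝ) : Summable (fun n : ℕ => M * ((n : ℝ) ^ 1 * (1 / 2 : ℝ) ^ n)) :=
  (summable_pow_mul_geometric_of_norm_lt_one 1 (by norm_num)).mul_left M

lemma fs_isSol (a0 a1 μ : ℂ) : IsSol μ (fs a0 a1 μ) (fs1 a0 a1 μ) := by
  intro s
  set r := ‖s‖ + 1 with hr
  have hr1 : 1 ≤ r := by rw [hr]; linarith [norm_nonneg s]
  obtain ⟨M, hM0, hM⟩ := co_bound' a0 a1 (ρ := 2 * r) (B := ‖μ‖) (by linarith) (norm_nonneg _)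
  have hU : IsOpen (Metric.ball (0:ℂ) r) := Metric.isOpen_ball
  have hs : s ∈ Metric.ball (0:ℂ) r := by simp [hr]
  have hb : ∀ w ∈ Metric.ball (0:ℂ) r, ‖w‖ ≤ r := fun w hw => by
    simpa using (mem_ball_zero_iff.1 hw).le
  have hd0 : ∀ n : ℕ, DifferentiableOn ℂ (fun s => co a0 a1 μ n * s ^ n) (Metric.ball (0:ℂ) r) :=
    fun n => by fun_prop
  have hd1 : ∀ n : ℕ, DifferentiableOn ℂ (fun s => co a0 a1 μ n * (n * s ^ (n - 1))) (Metric.ball (0:ℂ) r) :=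
    fun n => by fun_prop
  have b0 : ∀ n : ℕ, ∀ w ∈ Metric.ball (0:ℂ) r, ‖co a0 a1 μ n * w ^ n‖ ≤ M * (1 / 2) ^ n :=
    fun n w hw => term_bound hr1 (hb w hw) (hM μ le_rfl n)
  have b1 : ∀ n : ℕ, ∀ w ∈ Metric.ball (0:ℂ) r, ‖co a0 a1 μ n * (n * w ^ (n-1))‖ ≤ M * ((n:ℝ) ^ 1 * (1 / 2) ^ n) :=
    fun n w hw => term_bound1 hr1 (hb w hw) (hM μ le_rfl n)
  have D0 := Complex.differentiableOn_tsum_of_summable_norm (summ0 M) hd0 hU b0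
  have D1 := Complex.differentiableOn_tsum_of_summable_norm (summ1 M) hd1 hU b1
  have S0 := Complex.hasSum_deriv_of_summable_norm (summ0 M) hd0 hU b0 hs
  have S1 := Complex.hasSum_deriv_of_summable_norm (summ1 M) hd1 hU b1 hs
  have e0 := (D0.differentiableAt (hU.mem_nhds hs)).hasDerivAt
  have e1 := (D1.differentiableAt (hU.mem_nhds hs)).hasDerivAt
  have hf : HasSum (fun n => co a0 a1 μ n * s ^ n) (fs a0 a1 μ s) :=
    ((summ0 M).of_norm_bounded (fun n => b0 n s hs)).hasSum
  constructor
  · have : deriv (fun w => ∑' n, co a0 a1 μ n * w ^ n) s = fs1 a0 a1 μ s := by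
      rw [← S0.tsum_eq, fs1]
      congr 1; ext n
      simp
    rw [this] at e0
    exact e0
  · have h1 : HasSum (fun n => (if 3 ≤ n then co a0 a1 μ (n - 3) else 0) * s ^ n)
        (s ^ 3 * fs a0 a1 μ s) := by
      rw [← hasSum_nat_add_iff' 3]
      simp [Finset.sum_range_succ]
      have h0 := hf.mul_left (s ^ 3)
      have e : (fun n => co a0 a1 μ n * s ^ (n + 3)) = fun n => s ^ 3 * (co a0 a1 μ n * s ^ n) := by
        funext n; ring
      rw [e]; exact h0
    have h2 := (hf.mul_left μ).add h1
    have h3 : HasSum (fun n : ℕ => deriv (fun w => co a0 a1 μ n * ((n:ℂ) * w ^ (n - 1))) s)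
        (μ * fs a0 a1 μ s + s ^ 3 * fs a0 a1 μ s) := by
      rw [← hasSum_nat_add_iff' 2]
      simp only [Finset.sum_range_succ, Finset.sum_range_zero]
      have ez : (0 + deriv (fun w : ℂ => co a0 a1 μ 0 * (((0 : ℕ) : ℂ) * w ^ (0 - 1))) s +
        deriv (fun w : ℂ => co a0 a1 μ 1 * (((1 : ℕ) : ℂ) * w ^ (1 - 1))) s) = 0 := by simp
      rw [ez, sub_zero]
      have ef : (fun n : ℕ => deriv (fun w : ℂ => co a0 a1 μ (n + 2) * (((n + 2 : ℕ):ℂ) * w ^ (n + 2 - 1))) s)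
          = fun n => μ * (co a0 a1 μ n * s ^ n) + (if 3 ≤ n then co a0 a1 μ (n - 3) else 0) * s ^ n := by
        funext n
        have := co_rec a0 a1 μ n
        have e : deriv (fun w : ℂ => co a0 a1 μ (n + 2) * (((n + 2 : ℕ):ℂ) * w ^ (n + 2 - 1))) s
          = ((n : ℂ) + 2) * ((n : ℂ) + 1) * co a0 a1 μ (n + 2) * s ^ n := by
          have : HasDerivAt (fun w : ℂ => co a0 a1 μ (n + 2) * (((n + 2 : ℕ):ℂ) * w ^ (n + 1)))
            (co a0 a1 μ (n + 2) * (((n + 2 : ℕ):ℂ) * (((n + 1 : ℕ) : ℂ) * s ^ n))) s := by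
            have := (hasDerivAt_pow (n + 1) s)
            simpa using (this.const_mul ((n + 2 : ℕ):ℂ)).const_mul (co a0 a1 μ (n + 2))
          rw [show n + 2 - 1 = n + 1 by omega, this.deriv]
          push_cast; ring
        rw [e, this]; ring
      rw [ef]; exact h2
    rw [S1.unique h3] at e1
    exact e1.congr_deriv (by ring)

lemma fs_cont (a0 a1 s : ℂ) : Continuous (fun μ => fs a0 a1 μ s) ∧ Continuous (fun μ => fs1 a0 a1 μ s) := by
  have key : ∀ μ0 : ℂ, ContinuousAt (fun μ => fs a0 a1 μ s) μ0 ∧ ContinuousAt (fun μ => fs1 a0 a1 μ s) μ0 := by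
    intro μ0
    set r := ‖s‖ + 1 with hr
    have hr1 : 1 ≤ r := by rw [hr]; linarith [norm_nonneg s]
    obtain ⟨M, hM0, hM⟩ := co_bound' a0 a1 (ρ := 2 * r) (B := ‖μ0‖ + 1) (by linarith) (by positivity)
    have hn : Metric.ball μ0 1 ∈ nhds μ0 := Metric.ball_mem_nhds _ one_pos
    have hb : ∀ μ ∈ Metric.ball μ0 1, ‖μ‖ ≤ ‖μ0‖ + 1 := by
      intro μ hμ
      have : ‖μ - μ0‖ < 1 := by simpa [dist_eq_norm] using hμ
      have := norm_le_insert' μ μ0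
      linarith
    constructor
    · refine ContinuousOn.continuousAt (s := Metric.ball μ0 1) ?_ hn
      refine continuousOn_tsum (fun n => ((co_cont a0 a1 n).mul continuous_const).continuousOn) (summ0 M)
        (fun n μ hμ => term_bound hr1 (by linarith) (hM μ (hb μ hμ) n))
    · refine ContinuousOn.continuousAt (s := Metric.ball μ0 1) ?_ hn
      refine continuousOn_tsum (fun n => ((co_cont a0 a1 n).mul continuous_const).continuousOn) (summ1 M)
        (fun n μ hμ => term_bound1 hr1 (by linarith) (hM μ (hb μ hμ) n))
  exact ⟨continuous_iff_continuousAt.2 fun μ => (key μ).1, continuous_iff_continuousAt.2 fun μ => (key μ).2⟩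

lemma fs_zero (a0 a1 μ : ℂ) : fs a0 a1 μ 0 = a0 ∧ fs1 a0 a1 μ 0 = a1 := by
  constructor
  · rw [fs, tsum_eq_single 0]
    · simp [co]
    · intro n hn; simp [hn]
  · rw [fs1, tsum_eq_single 1]
    · simp [co]
    · intro n hn
      rcases n with _ | _ | n
      · simp
      · simp at hn
      · simp

lemma wronsk {μ : ℂ} {f f1 g g1 : ℂ → ℂ} (hf : IsSol μ f f1) (hg : IsSol μ g g1) (s t : ℂ) :
    f s * g1 s - f1 s * g s = f t * g1 t - f1 t * g t := by
  have h : ∀ x, HasDerivAt (fun s => f s * g1 s - f1 s * g s) 0 x := by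
    intro x
    exact (((hf x).1.mul (hg x).2).sub ((hf x).2.mul (hg x).1)).congr_deriv (by ring)
  exact is_const_of_deriv_eq_zero (fun x => (h x).differentiableAt) (fun x => (h x).deriv) s t

lemma IsSol.lin {μ : ℂ} {f f1 g g1 : ℂ → ℂ} (hf : IsSol μ f f1) (hg : IsSol μ g g1) (a b : ℂ) :
    IsSol μ (fun s => a * f s + b * g s) (fun s => a * f1 s + b * g1 s) := by
  intro s
  refine ⟨((hf s).1.const_mul a).add ((hg s).1.const_mul b), ?_⟩
  exact (((hf s).2.const_mul a).add ((hg s).2.const_mul b)).congr_deriv (by ring)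

end ICO

namespace ICO

lemma energy {t0 t1 : ℝ} (h : t0 ≤ t1) (a β m k : ℝ → ℂ) (κ Kp : ℝ → ℝ)
    (ha : ∀ t ∈ Set.Icc t0 t1, HasDerivAt a (m t * a t + k t * (a t + β t)) t)
    (hβ : ∀ t ∈ Set.Icc t0 t1, HasDerivAt β (-(k t * (a t + β t))) t)
    (hm : ∀ t ∈ Set.Icc t0 t1, (m t).re ≤ 0)
    (hk : ∀ t ∈ Set.Icc t0 t1, ‖k t‖ ≤ κ t)
    (hK : ∀ t ∈ Set.Icc t0 t1, HasDerivAt Kp (κ t) t) (b0 : ℂ) :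
    ‖a t1‖ ^ 2 + ‖β t1 - b0‖ ^ 2 ≤
      (‖a t0‖ ^ 2 + ‖β t0 - b0‖ ^ 2) * Real.exp (6 * (Kp t1 - Kp t0))
        + ‖b0‖ ^ 2 * ((Real.exp (6 * (Kp t1 - Kp t0)) - 1) / 6) := by
  set E : ℝ → ℝ := fun t => ‖a t‖ ^ 2 + ‖β t - b0‖ ^ 2 with hE
  set F : ℝ → ℝ := fun t => (E t + ‖b0‖ ^ 2 / 6) * Real.exp (-(6 * Kp t)) with hF
  have hder : ∀ t ∈ Set.Icc t0 t1, ∃ F', HasDerivAt F F' t ∧ F' ≤ 0 := by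
    intro t ht
    have d1 := (ha t ht).norm_sq
    have d2 := ((hβ t ht).sub_const b0).norm_sq
    have dE := (d1.add d2).add_const (‖b0‖ ^ 2 / 6)
    have dK := (((hK t ht).const_mul 6).neg).exp
    refine ⟨_, dE.mul dK, ?_⟩
    set A := ‖a t‖ with hA
    set b := β t - b0 with hb
    set Bn := ‖b‖ with hBn
    have hw : ‖a t + β t‖ ≤ A + Bn + ‖b0‖ := by
      have : a t + β t = a t + b + b0 := by rw [hb]; ring
      rw [this]
      exact (norm_add_le _ _).trans (by gcongr; exact norm_add_le _ _)
    have i1 : inner ℝ (a t) (m t * a t + k t * (a t + β t)) ≤ A * (κ t * (A + Bn + ‖b0‖)) := by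
      rw [inner_add_right]
      have e1 : inner ℝ (a t) (m t * a t) = (m t).re * A ^ 2 := by
        rw [Complex.inner, hA, ← Complex.normSq_eq_norm_sq]
        simp [Complex.normSq_apply]; ring
      have e2 : inner ℝ (a t) (k t * (a t + β t)) ≤ A * (κ t * (A + Bn + ‖b0‖)) := by
        refine (real_inner_le_norm _ _).trans ?_
        rw [norm_mul]
        have := hk t ht
        have h0 : 0 ≤ κ t := (norm_nonneg _).trans this
        gcongr
      have := hm t ht
      have : (m t).re * A ^ 2 ≤ 0 := mul_nonpos_of_nonpos_of_nonneg this (by positivity)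
      linarith
    have i2 : inner ℝ b (-(k t * (a t + β t))) ≤ Bn * (κ t * (A + Bn + ‖b0‖)) := by
      refine (real_inner_le_norm _ _).trans ?_
      rw [norm_neg, norm_mul]
      have := hk t ht
      have h0 : 0 ≤ κ t := (norm_nonneg _).trans this
      gcongr
    have h0 : 0 ≤ κ t := (norm_nonneg _).trans (hk t ht)
    have hA0 : 0 ≤ A := norm_nonneg _
    have hB0 : 0 ≤ Bn := norm_nonneg _
    have hb0 : 0 ≤ ‖b0‖ := norm_nonneg _
    set e := Real.exp (-(6 * Kp t)) with he
    have he0 : 0 < e := Real.exp_pos _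
    have key : 2 * inner ℝ (a t) (m t * a t + k t * (a t + β t)) + 2 * inner ℝ b (-(k t * (a t + β t)))
        ≤ (A ^ 2 + Bn ^ 2 + ‖b0‖ ^ 2 / 6) * (6 * κ t) := by
      have : (A + Bn) * (A + Bn + ‖b0‖) * 2 ≤ (A ^ 2 + Bn ^ 2 + ‖b0‖ ^ 2 / 6) * 6 := by
        nlinarith [sq_nonneg (A - Bn), sq_nonneg (A + Bn - ‖b0‖)]
      nlinarith
    have : (2 * inner ℝ (a t) (m t * a t + k t * (a t + β t)) + 2 * inner ℝ b (-(k t * (a t + β t)))) * e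
        ≤ (A ^ 2 + Bn ^ 2 + ‖b0‖ ^ 2 / 6) * (6 * κ t) * e := by gcongr
    have goal : (2 * inner ℝ (a t) (m t * a t + k t * (a t + β t)) + 2 * inner ℝ b (-(k t * (a t + β t)))) * e
      + (A ^ 2 + Bn ^ 2 + ‖b0‖ ^ 2 / 6) * (e * -(6 * κ t)) ≤ 0 := by linarith
    exact goal
  have hanti : AntitoneOn F (Set.Icc t0 t1) := by
    refine antitoneOn_of_deriv_nonpos (convex_Icc _ _) ?_ ?_ ?_
    · intro t ht
      obtain ⟨F', h1, -⟩ := hder t ht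
      exact h1.continuousAt.continuousWithinAt
    · intro t ht
      obtain ⟨F', h1, -⟩ := hder t (interior_subset ht)
      exact h1.differentiableAt.differentiableWithinAt
    · intro t ht
      obtain ⟨F', h1, h2⟩ := hder t (interior_subset ht)
      rw [h1.deriv]; exact h2
  have := hanti (Set.left_mem_Icc.2 h) (Set.right_mem_Icc.2 h) h
  simp only [hF] at this
  have e1 : Real.exp (6 * (Kp t1 - Kp t0)) = Real.exp (-(6 * Kp t0)) * Real.exp (6 * Kp t1) := by
    rw [← Real.exp_add]; congr 1; ring
  have e2 : Real.exp (-(6 * Kp t1)) * Real.exp (6 * Kp t1) = 1 := by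
    rw [← Real.exp_add]; simp
  have h3 := mul_le_mul_of_nonneg_right this (Real.exp_pos (6 * Kp t1)).le
  rw [mul_assoc, e2, mul_assoc, ← e1] at h3
  simp only [hE] at h3 ⊢
  linarith

noncomputable def aF (y y1 P G Φ : ℂ) : ℂ := (y / Φ + (y1 + G * y) / (P * Φ)) / 2
noncomputable def bF (y y1 P G Φ : ℂ) : ℂ := (y / Φ - (y1 + G * y) / (P * Φ)) / 2

lemma wkb {t0 t1 : ℝ} (h : t0 ≤ t1) (y y1 P G G1 Φ q γ1 : ℝ → ℂ) (κ Kp : ℝ → ℝ)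
    (hy : ∀ t ∈ Set.Icc t0 t1, HasDerivAt y (γ1 t * y1 t) t)
    (hy1 : ∀ t ∈ Set.Icc t0 t1, HasDerivAt y1 (γ1 t * (q t * y t)) t)
    (hP : ∀ t ∈ Set.Icc t0 t1, HasDerivAt P (2 * P t * G t * γ1 t) t)
    (hG : ∀ t ∈ Set.Icc t0 t1, HasDerivAt G (G1 t * γ1 t) t)
    (hΦ : ∀ t ∈ Set.Icc t0 t1, HasDerivAt Φ (-((P t + G t) * Φ t * γ1 t)) t)
    (hP0 : ∀ t ∈ Set.Icc t0 t1, P t ≠ 0) (hΦ0 : ∀ t ∈ Set.Icc t0 t1, Φ t ≠ 0)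
    (hm : ∀ t ∈ Set.Icc t0 t1, (2 * P t * γ1 t).re ≤ 0)
    (hk : ∀ t ∈ Set.Icc t0 t1, ‖(q t - P t ^ 2 + G1 t - G t ^ 2) / P t * γ1 t / 2‖ ≤ κ t)
    (hK : ∀ t ∈ Set.Icc t0 t1, HasDerivAt Kp (κ t) t) (b0 : ℂ) :
    ‖aF (y t1) (y1 t1) (P t1) (G t1) (Φ t1)‖ ^ 2 + ‖bF (y t1) (y1 t1) (P t1) (G t1) (Φ t1) - b0‖ ^ 2 ≤
      (‖aF (y t0) (y1 t0) (P t0) (G t0) (Φ t0)‖ ^ 2 + ‖bF (y t0) (y1 t0) (P t0) (G t0) (Φ t0) - b0‖ ^ 2)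
        * Real.exp (6 * (Kp t1 - Kp t0))
        + ‖b0‖ ^ 2 * ((Real.exp (6 * (Kp t1 - Kp t0)) - 1) / 6) := by
  refine energy h (fun t => aF (y t) (y1 t) (P t) (G t) (Φ t)) (fun t => bF (y t) (y1 t) (P t) (G t) (Φ t))
    (fun t => 2 * P t * γ1 t) (fun t => (q t - P t ^ 2 + G1 t - G t ^ 2) / P t * γ1 t / 2) κ Kp ?_ ?_ hm hk hK b0
  all_goals
    intro t ht
    have p0 := hP0 t ht
    have f0 := hΦ0 t ht
    have dW := (hy t ht).div (hΦ t ht) f0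
    have dZ := ((hy1 t ht).add ((hG t ht).mul (hy t ht))).div ((hP t ht).mul (hΦ t ht)) (mul_ne_zero p0 f0)
  · refine ((dW.add dZ).div_const 2).congr_deriv ?_
    simp only [aF, bF, Pi.add_apply, Pi.mul_apply]
    field_simp
    ring
  · refine ((dW.sub dZ).div_const 2).congr_deriv ?_
    simp only [aF, bF, Pi.add_apply, Pi.mul_apply]
    field_simp
    ring

end ICO

namespace ICO

noncomputable def p0 (s : ℂ) : ℂ := s ^ (((3/2 : ℝ)) : ℂ)
noncomputable def g0 (s : ℂ) : ℂ := 3 / (4 * s)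
noncomputable def φ0 (s : ℂ) : ℂ := s ^ (((-3/4 : ℝ)) : ℂ) * Complex.exp (-((2/5) * s ^ (((5/2 : ℝ)) : ℂ)))

lemma slit_ne {s : ℂ} (hs : s ∈ Complex.slitPlane) : s ≠ 0 := Complex.slitPlane_ne_zero hs

lemma p0_ne {s : ℂ} (hs : s ∈ Complex.slitPlane) : p0 s ≠ 0 := by
  simp [p0, Complex.cpow_eq_zero_iff, slit_ne hs]

lemma φ0_ne {s : ℂ} (hs : s ∈ Complex.slitPlane) : φ0 s ≠ 0 := by
  simp [φ0, Complex.cpow_eq_zero_iff, slit_ne hs]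

lemma p0_sq {s : ℂ} (hs : s ∈ Complex.slitPlane) : p0 s ^ 2 = s ^ 3 := by
  rw [p0, ← Complex.cpow_nat_mul]
  rw [show ((2:ℕ):ℂ) * (((3/2:ℝ)):ℂ) = ((3:ℕ):ℂ) by push_cast; norm_num, Complex.cpow_natCast]

lemma p0_norm (s : ℂ) : ‖p0 s‖ = ‖s‖ ^ (3/2:ℝ) := by
  rw [p0, Complex.norm_cpow_real]

lemma p0_mul {s : ℂ} (hs : s ∈ Complex.slitPlane) : p0 s * s = s ^ (((5/2 : ℝ)) : ℂ) := by
  have := slit_ne hs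
  rw [show (((5/2 : ℝ)) : ℂ) = (((3/2 : ℝ)) : ℂ) + 1 by push_cast; norm_num, Complex.cpow_add _ _ this,
    Complex.cpow_one, p0]

lemma p0_der {s : ℂ} (hs : s ∈ Complex.slitPlane) : HasDerivAt p0 (2 * p0 s * g0 s) s := by
  have h0 := slit_ne hs
  refine ((hasDerivAt_id s).cpow_const (c := (((3/2 : ℝ)) : ℂ)) hs).congr_deriv ?_
  simp only [id, p0, g0]
  rw [Complex.cpow_sub _ _ h0, Complex.cpow_one]
  field_simp
  push_cast; ring

lemma g0_der {s : ℂ} (hs : s ∈ Complex.slitPlane) : HasDerivAt g0 (-3 / (4 * s ^ 2)) s := by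
  have h0 := slit_ne hs
  have := (hasDerivAt_const s (3:ℂ)).div ((hasDerivAt_id s).const_mul 4) (by simpa using h0)
  refine this.congr_deriv ?_
  simp only [id]
  field_simp
  ring

lemma φ0_der {s : ℂ} (hs : s ∈ Complex.slitPlane) : HasDerivAt φ0 (-((p0 s + g0 s) * φ0 s)) s := by
  have h0 := slit_ne hs
  have d1 := (hasDerivAt_id s).cpow_const (c := (((-3/4 : ℝ)) : ℂ)) hs
  have d2 := (((hasDerivAt_id s).cpow_const (c := (((5/2 : ℝ)) : ℂ)) hs).const_mul (2/5)).neg.cexp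
  refine (d1.mul d2).congr_deriv ?_
  simp only [id, g0, φ0, Pi.neg_apply]
  rw [Complex.cpow_sub _ _ h0, Complex.cpow_sub _ _ h0, Complex.cpow_one, ← p0_mul hs]
  field_simp
  push_cast; ring

noncomputable def E0 (f f1 : ℂ → ℂ) (s b0 : ℂ) : ℝ :=
  ‖aF (f s) (f1 s) (p0 s) (g0 s) (φ0 s)‖ ^ 2 + ‖bF (f s) (f1 s) (p0 s) (g0 s) (φ0 s) - b0‖ ^ 2

noncomputable def XX (μ : ℂ) (R : ℝ) : ℝ := Real.exp (6 * ((‖μ‖ + 2) * R ^ (-(1/2) : ℝ)))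

lemma rho_bound {s μ : ℂ} (hs : s ∈ Complex.slitPlane) (h1 : 1 ≤ ‖s‖) :
    ‖((s ^ 3 + μ) - p0 s ^ 2 + -3 / (4 * s ^ 2) - g0 s ^ 2) / p0 s‖ ≤ (‖μ‖ + 2) * ‖s‖ ^ (-(3/2) : ℝ) := by
  have h0 := slit_ne hs
  have e : (s ^ 3 + μ) - p0 s ^ 2 + -3 / (4 * s ^ 2) - g0 s ^ 2 = μ - (21/16) / s ^ 2 := by
    rw [p0_sq hs, g0]; field_simp; ring
  rw [e, norm_div, p0_norm, div_eq_mul_inv, Real.rpow_neg (norm_nonneg _)]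
  gcongr
  refine (norm_sub_le _ _).trans ?_
  gcongr
  rw [norm_div, norm_pow]
  have : (1:ℝ) ≤ ‖s‖ ^ 2 := one_le_pow₀ h1
  rw [div_le_iff₀ (by positivity)]
  norm_num
  linarith

lemma E0_nonneg (f f1 : ℂ → ℂ) (s b0 : ℂ) : 0 ≤ E0 f f1 s b0 := by unfold E0; positivity

lemma mono_final {a b K X E : ℝ} (ha : 0 ≤ a) (hb : 0 ≤ b) (hK : K ≤ X)
    (h : E ≤ a * Real.exp (6 * K) + b * ((Real.exp (6 * K) - 1) / 6)) :
    E ≤ a * Real.exp (6 * X) + b * ((Real.exp (6 * X) - 1) / 6) := by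
  refine h.trans ?_
  gcongr

lemma real_slit {R : ℝ} (h : 0 < R) : (R : ℂ) ∈ Complex.slitPlane := by simp [h]

lemma back_real {μ : ℂ} {f f1 : ℂ → ℂ} (hf : IsSol μ f f1) {R0 R : ℝ} (h0 : 1 ≤ R0) (h : R0 ≤ R) (b0 : ℂ) :
    E0 f f1 R0 b0 ≤ E0 f f1 R b0 * XX μ R0 + ‖b0‖ ^ 2 * ((XX μ R0 - 1) / 6) := by
  set c := ‖μ‖ + 2 with hc
  have hc0 : 0 ≤ c := by positivity
  have hpos : ∀ t ∈ Set.Icc (-R) (-R0), 1 ≤ -t := fun t ht => by linarith [ht.2]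
  have hsl : ∀ t ∈ Set.Icc (-R) (-R0), ((-t : ℝ) : ℂ) ∈ Complex.slitPlane := fun t ht =>
    real_slit (by linarith [hpos t ht])
  have comp : ∀ {F : ℂ → ℂ} {F' : ℂ} (t : ℝ), HasDerivAt F F' ((-t : ℝ):ℂ) →
      HasDerivAt (fun t : ℝ => F ((-t : ℝ):ℂ)) (-F') t := by
    intro F F' t hF
    have h1 : HasDerivAt (fun t : ℝ => ((-t : ℝ) : ℂ)) (-1 : ℂ) t := by
      have := (hasDerivAt_neg t).ofReal_comp
      simpa using this
    have := HasDerivAt.scomp t hF h1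
    exact this.congr_deriv (by simp)
  have := wkb (t0 := -R) (t1 := -R0) (by linarith) (fun t => f ((-t : ℝ):ℂ)) (fun t => f1 ((-t : ℝ):ℂ))
    (fun t => p0 ((-t : ℝ):ℂ)) (fun t => g0 ((-t : ℝ):ℂ)) (fun t => -3 / (4 * ((-t : ℝ):ℂ) ^ 2))
    (fun t => φ0 ((-t : ℝ):ℂ)) (fun t => ((-t : ℝ):ℂ) ^ 3 + μ) (fun _ => -1)
    (fun t => c / 2 * (-t) ^ (-(3/2) : ℝ)) (fun t => c * (-t) ^ (-(1/2) : ℝ))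
    (fun t ht => (comp t (hf _).1).congr_deriv (by ring))
    (fun t ht => (comp t (hf _).2).congr_deriv (by ring))
    (fun t ht => (comp t (p0_der (hsl t ht))).congr_deriv (by ring))
    (fun t ht => (comp t (g0_der (hsl t ht))).congr_deriv (by ring))
    (fun t ht => (comp t (φ0_der (hsl t ht))).congr_deriv (by ring))
    (fun t ht => p0_ne (hsl t ht)) (fun t ht => φ0_ne (hsl t ht)) ?_ ?_ ?_ b0
  · simp only [neg_neg] at this
    refine mono_final (E0_nonneg _ _ _ _) (by positivity) ?_ this
    have : 0 ≤ c * R ^ (-(1/2) : ℝ) := mul_nonneg hc0 (Real.rpow_nonneg (by linarith) _)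
    linarith
  · intro t ht
    have e : p0 ((-t : ℝ):ℂ) = (((-t) ^ (3/2:ℝ) : ℝ) : ℂ) := by
      rw [p0, Complex.ofReal_cpow (by linarith [hpos t ht])]
    rw [e]
    have : 0 ≤ (-t) ^ (3/2:ℝ) := Real.rpow_nonneg (by linarith [hpos t ht]) _
    have e2 : (2 * (((-t) ^ (3/2:ℝ) : ℝ) : ℂ) * -1) = ((-(2 * (-t) ^ (3/2:ℝ)) : ℝ) : ℂ) := by push_cast; ring
    rw [e2, Complex.ofReal_re]; linarith
  · intro t ht
    have hn : ‖((-t : ℝ):ℂ)‖ = -t := by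
      rw [Complex.norm_real, Real.norm_of_nonneg (by linarith [hpos t ht])]
    have := rho_bound (μ := μ) (hsl t ht) (by rw [hn]; exact hpos t ht)
    rw [hn] at this
    rw [norm_div, norm_mul]
    simp only [norm_neg, norm_one, mul_one, Complex.norm_ofNat]
    linarith
  · intro t ht
    have h1 := (hasDerivAt_neg t)
    have := (h1.rpow_const (p := (-(1/2) : ℝ)) (Or.inl (by linarith [hpos t ht]))).const_mul c
    refine this.congr_deriv ?_
    rw [show (-(1/2) : ℝ) - 1 = -(3/2) by norm_num]
    ring

lemma polar_log {r η : ℝ} (hr : 0 < r) (h1 : -Real.pi < η) (h2 : η ≤ Real.pi) :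
    Complex.log (r * Complex.exp (η * Complex.I)) = Real.log r + η * Complex.I := by
  have : (r : ℂ) * Complex.exp (η * Complex.I) = Complex.exp (Real.log r + η * Complex.I) := by
    rw [Complex.exp_add, ← Complex.ofReal_exp, Real.exp_log hr]
  rw [this, Complex.log_exp]
  · simpa using h1
  · simpa using h2

lemma polar_cpow {r η : ℝ} (hr : 0 < r) (h1 : -Real.pi < η) (h2 : η ≤ Real.pi) (c : ℝ) :
    ((r:ℂ) * Complex.exp (η * Complex.I)) ^ (c : ℂ) = (r ^ c : ℝ) * Complex.exp ((c * η : ℝ) * Complex.I) := by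
  have h0 : (r:ℂ) * Complex.exp (η * Complex.I) ≠ 0 := by
    simp [hr.ne']
  rw [Complex.cpow_def_of_ne_zero h0, polar_log hr h1 h2, Real.rpow_def_of_pos hr, Complex.ofReal_exp,
    ← Complex.exp_add]
  congr 1; push_cast; ring

lemma polar_slit {r η : ℝ} (hr : 0 < r) (h1 : -(Real.pi/2) < η) (h2 : η < Real.pi/2) :
    (r:ℂ) * Complex.exp (η * Complex.I) ∈ Complex.slitPlane := by
  left
  have : 0 < Real.cos η := Real.cos_pos_of_mem_Ioo ⟨h1, h2⟩
  rw [Complex.re_ofReal_mul, Complex.exp_ofReal_mul_I_re]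
  positivity

lemma polar_norm {r η : ℝ} (hr : 0 < r) : ‖(r:ℂ) * Complex.exp (η * Complex.I)‖ = r := by
  rw [norm_mul, Complex.norm_exp_ofReal_mul_I, Complex.norm_real, Real.norm_of_nonneg hr.le, mul_one]

lemma arc {μ : ℂ} {f f1 : ℂ → ℂ} (hf : IsSol μ f f1) {r : ℝ} (h0 : 1 ≤ r) {σ : ℝ} (hσ : σ = 1 ∨ σ = -1)
    {θ : ℝ} (hθ : 0 ≤ θ) (hθ2 : θ ≤ Real.pi / 5) (b0 : ℂ) :
    E0 f f1 (r * Complex.exp ((σ * θ : ℝ) * Complex.I)) b0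
      ≤ E0 f f1 r b0 * XX μ r + ‖b0‖ ^ 2 * ((XX μ r - 1) / 6) := by
  have hr : 0 < r := by linarith
  have hpi := Real.pi_pos
  set c := ‖μ‖ + 2 with hc
  have hc0 : 0 ≤ c := by positivity
  set γ : ℝ → ℂ := fun t => r * Complex.exp ((σ * t : ℝ) * Complex.I) with hγ
  have hrange : ∀ t ∈ Set.Icc 0 θ, -(Real.pi/2) < σ * t ∧ σ * t < Real.pi / 2 := by
    intro t ht
    rcases hσ with rfl | rfl <;> constructor <;> linarith [ht.1, ht.2]
  have hsl : ∀ t ∈ Set.Icc 0 θ, γ t ∈ Complex.slitPlane := fun t ht =>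
    polar_slit hr (hrange t ht).1 (hrange t ht).2
  have hn : ∀ t, ‖γ t‖ = r := fun t => polar_norm hr
  have hγd : ∀ t, HasDerivAt γ (σ * Complex.I * γ t) t := by
    intro t
    have h1 : HasDerivAt (fun t : ℝ => (σ * t : ℝ)) σ t := by simpa using (hasDerivAt_id t).const_mul σ
    have := ((h1.ofReal_comp.mul_const Complex.I).cexp).const_mul (r:ℂ)
    refine this.congr_deriv ?_
    simp only [hγ]; push_cast; ring
  have comp : ∀ {F : ℂ → ℂ} {F' : ℂ} (t : ℝ), HasDerivAt F F' (γ t) →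
      HasDerivAt (fun t : ℝ => F (γ t)) (σ * Complex.I * γ t * F') t := by
    intro F F' t hF
    have := HasDerivAt.scomp t hF (hγd t)
    exact this.congr_deriv (by simp)
  have := wkb (t0 := 0) (t1 := θ) hθ (fun t => f (γ t)) (fun t => f1 (γ t))
    (fun t => p0 (γ t)) (fun t => g0 (γ t)) (fun t => -3 / (4 * (γ t) ^ 2))
    (fun t => φ0 (γ t)) (fun t => (γ t) ^ 3 + μ) (fun t => σ * Complex.I * γ t)
    (fun t => c / 2 * r ^ (-(1/2) : ℝ)) (fun t => c / 2 * r ^ (-(1/2) : ℝ) * t)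
    (fun t ht => (comp t (hf _).1).congr_deriv (by ring))
    (fun t ht => (comp t (hf _).2).congr_deriv (by ring))
    (fun t ht => (comp t (p0_der (hsl t ht))).congr_deriv (by ring))
    (fun t ht => (comp t (g0_der (hsl t ht))).congr_deriv (by ring))
    (fun t ht => (comp t (φ0_der (hsl t ht))).congr_deriv (by ring))
    (fun t ht => p0_ne (hsl t ht)) (fun t ht => φ0_ne (hsl t ht)) ?_ ?_ ?_ b0
  · have e0 : γ 0 = r := by simp [hγ]
    simp only [e0] at this
    refine mono_final (E0_nonneg _ _ _ _) (by positivity) ?_ this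
    have h3 : 0 ≤ c * r ^ (-(1/2) : ℝ) := mul_nonneg hc0 (Real.rpow_nonneg (by linarith) _)
    have : θ ≤ 2 := by linarith [Real.pi_le_four]
    nlinarith
  · intro t ht
    have e : 2 * p0 (γ t) * (σ * Complex.I * γ t) = 2 * σ * Complex.I * (γ t) ^ (((5/2 : ℝ)) : ℂ) := by
      rw [← p0_mul (hsl t ht)]; ring
    rw [e]
    simp only [hγ]
    rw [polar_cpow hr (by linarith [(hrange t ht).1]) (by linarith [(hrange t ht).2])]
    have e2 : 2 * σ * Complex.I * (((r ^ (5/2:ℝ) : ℝ) : ℂ) * Complex.exp (((5/2) * (σ * t) : ℝ) * Complex.I))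
      = ((2 * σ * r ^ (5/2:ℝ) : ℝ) : ℂ) * (Complex.I * Complex.exp (((5/2) * (σ * t) : ℝ) * Complex.I)) := by
      push_cast; ring
    rw [e2, Complex.re_ofReal_mul, Complex.I_mul_re, Complex.exp_ofReal_mul_I_im]
    have hs : 0 ≤ Real.sin (5/2 * t) := Real.sin_nonneg_of_nonneg_of_le_pi (by linarith [ht.1]) (by linarith [ht.2])
    have hrp : 0 ≤ r ^ (5/2:ℝ) := Real.rpow_nonneg hr.le _
    have := mul_nonneg hrp hs
    rcases hσ with rfl | rfl
    · rw [one_mul]; linarith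
    · rw [show (5/2:ℝ) * (-1 * t) = -(5/2 * t) by ring, Real.sin_neg]; linarith
  · intro t ht
    have := rho_bound (μ := μ) (hsl t ht) (by rw [hn]; exact h0)
    rw [hn] at this
    have hσn : ‖(σ:ℂ)‖ = 1 := by rcases hσ with rfl | rfl <;> simp
    rw [norm_div, norm_mul, norm_mul, norm_mul, hn, hσn]
    simp only [Complex.norm_I, one_mul, Complex.norm_ofNat]
    have e : r ^ (-(1/2) : ℝ) = r ^ (-(3/2) : ℝ) * r := by
      rw [← Real.rpow_add_one hr.ne']; norm_num
    rw [e]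
    have := mul_le_mul_of_nonneg_right this hr.le
    linarith
  · intro t ht
    simpa using (hasDerivAt_id t).const_mul (c / 2 * r ^ (-(1/2) : ℝ))

end ICO

namespace ICO

noncomputable def dφ0 (s : ℂ) : ℂ := -((p0 s + g0 s) * φ0 s)
noncomputable def AR (μ : ℂ) (R : ℝ) : ℂ := φ0 R * fs1 0 1 μ R - dφ0 R * fs 0 1 μ R
noncomputable def BR (μ : ℂ) (R : ℝ) : ℂ := -(φ0 R * fs1 1 0 μ R - dφ0 R * fs 1 0 μ R)
noncomputable def YY (μ a b : ℂ) (s : ℂ) : ℂ := a * fs 1 0 μ s + b * fs 0 1 μ s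
noncomputable def YY1 (μ a b : ℂ) (s : ℂ) : ℂ := a * fs1 1 0 μ s + b * fs1 0 1 μ s

lemma YY_sol (μ a b : ℂ) : IsSol μ (YY μ a b) (YY1 μ a b) :=
  (fs_isSol 1 0 μ).lin (fs_isSol 0 1 μ) a b

lemma W01 (μ s : ℂ) : fs 1 0 μ s * fs1 0 1 μ s - fs1 1 0 μ s * fs 0 1 μ s = 1 := by
  rw [wronsk (fs_isSol 1 0 μ) (fs_isSol 0 1 μ) s 0, (fs_zero 1 0 μ).1, (fs_zero 1 0 μ).2,
    (fs_zero 0 1 μ).1, (fs_zero 0 1 μ).2]; ring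

lemma YR_at (μ : ℂ) (R : ℝ) : YY μ (AR μ R) (BR μ R) R = φ0 R := by
  have := W01 μ R
  unfold YY AR BR
  linear_combination (φ0 R) * this

lemma YR1_at (μ : ℂ) (R : ℝ) : YY1 μ (AR μ R) (BR μ R) R = dφ0 R := by
  have := W01 μ R
  unfold YY1 AR BR
  linear_combination (dφ0 R) * this

lemma aF_at {R : ℝ} (h : 1 ≤ R) : aF (φ0 R) (dφ0 R) (p0 R) (g0 R) (φ0 R) = 0 := by
  have h1 := p0_ne (real_slit (by linarith : 0 < R))
  have h2 := φ0_ne (real_slit (by linarith : 0 < R))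
  unfold aF dφ0; field_simp; ring

lemma bF_at {R : ℝ} (h : 1 ≤ R) : bF (φ0 R) (dφ0 R) (p0 R) (g0 R) (φ0 R) = 1 := by
  have h1 := p0_ne (real_slit (by linarith : 0 < R))
  have h2 := φ0_ne (real_slit (by linarith : 0 < R))
  unfold bF dφ0; field_simp; ring

lemma YR_E (μ : ℂ) {R0 R : ℝ} (h0 : 1 ≤ R0) (h : R0 ≤ R) :
    E0 (YY μ (AR μ R) (BR μ R)) (YY1 μ (AR μ R) (BR μ R)) R0 1 ≤ (XX μ R0 - 1) / 6 := by
  have := back_real (YY_sol μ (AR μ R) (BR μ R)) h0 h 1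
  have e : E0 (YY μ (AR μ R) (BR μ R)) (YY1 μ (AR μ R) (BR μ R)) R 1 = 0 := by
    unfold E0
    rw [YR_at, YR1_at, aF_at (h0.trans h), bF_at (h0.trans h)]; simp
  rw [e] at this
  simpa using this

lemma YR_D (μ : ℂ) {R R' : ℝ} (h0 : 1 ≤ R) (h : R ≤ R') :
    E0 (YY μ (AR μ R' - AR μ R) (BR μ R' - BR μ R)) (YY1 μ (AR μ R' - AR μ R) (BR μ R' - BR μ R)) 1 0
      ≤ (XX μ R - 1) / 6 * XX μ 1 := by
  have h1 := back_real (YY_sol μ (AR μ R' - AR μ R) (BR μ R' - BR μ R)) le_rfl h0 0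
  have e : E0 (YY μ (AR μ R' - AR μ R) (BR μ R' - BR μ R)) (YY1 μ (AR μ R' - AR μ R) (BR μ R' - BR μ R)) R 0
     = E0 (YY μ (AR μ R') (BR μ R')) (YY1 μ (AR μ R') (BR μ R')) R 1 := by
    have l0 : YY μ (AR μ R' - AR μ R) (BR μ R' - BR μ R) R = YY μ (AR μ R') (BR μ R') R - φ0 R := by
      rw [← YR_at μ R]; unfold YY; ring
    have l1 : YY1 μ (AR μ R' - AR μ R) (BR μ R' - BR μ R) R = YY1 μ (AR μ R') (BR μ R') R - dφ0 R := by
      rw [← YR1_at μ R]; unfold YY1; ring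
    unfold E0
    rw [l0, l1]
    have m1 : ∀ y y1 z z1 P G Φ, aF (y - z) (y1 - z1) P G Φ = aF y y1 P G Φ - aF z z1 P G Φ := by
      intros; unfold aF; ring
    have m2 : ∀ y y1 z z1 P G Φ, bF (y - z) (y1 - z1) P G Φ = bF y y1 P G Φ - bF z z1 P G Φ := by
      intros; unfold bF; ring
    rw [m1, m2, aF_at h0, bF_at h0]; simp
  rw [e] at h1
  have h2 := YR_E μ h0 h
  have : (0:ℝ) ≤ XX μ 1 := (Real.exp_pos _).le
  simp only [Complex.ofReal_one, norm_zero] at h1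
  refine h1.trans ?_
  have := mul_le_mul_of_nonneg_right h2 this
  simpa using this

noncomputable def MM (μ : ℂ) : ℝ := 8 * (‖fs 0 1 μ 1‖ + ‖fs1 0 1 μ 1‖ + ‖fs 1 0 μ 1‖ + ‖fs1 1 0 μ 1‖)
noncomputable def ee (μ : ℂ) (R : ℝ) : ℝ := MM μ * Real.sqrt ((XX μ R - 1) / 6 * XX μ 1)

lemma p0_one : p0 1 = 1 := by simp [p0]
lemma g0_one : g0 1 = 3/4 := by simp [g0]
lemma φ0_one : ‖φ0 1‖ ≤ 1 := by
  have : φ0 1 = ((Real.exp (-(2/5)) : ℝ) : ℂ) := by simp [φ0]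
  rw [this, Complex.norm_real, Real.norm_of_nonneg (Real.exp_pos _).le]
  exact Real.exp_le_one_iff.2 (by norm_num)

lemma coef_bound (μ a b : ℂ) {E : ℝ} (h : E0 (YY μ a b) (YY1 μ a b) 1 0 ≤ E) :
    ‖a‖ ≤ MM μ * Real.sqrt E ∧ ‖b‖ ≤ MM μ * Real.sqrt E := by
  set y := YY μ a b 1 with hy
  set y1 := YY1 μ a b 1 with hy1
  have hφ := φ0_ne (s := 1) (by simp)
  have hw := W01 μ 1
  have ha : a = y * fs1 0 1 μ 1 - y1 * fs 0 1 μ 1 := by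
    rw [hy, hy1]; unfold YY YY1; linear_combination (-a) * hw
  have hb : b = y1 * fs 1 0 μ 1 - y * fs1 1 0 μ 1 := by
    rw [hy, hy1]; unfold YY YY1; linear_combination (-b) * hw
  unfold E0 at h
  rw [← hy, ← hy1, p0_one, g0_one, sub_zero] at h
  set α := aF y y1 1 (3/4) (φ0 1) with hα
  set β := bF y y1 1 (3/4) (φ0 1) with hβ
  have hαn : ‖α‖ ≤ Real.sqrt E := Real.le_sqrt_of_sq_le (by nlinarith [sq_nonneg ‖β‖])
  have hβn : ‖β‖ ≤ Real.sqrt E := Real.le_sqrt_of_sq_le (by nlinarith [sq_nonneg ‖α‖])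
  have ey : y = (α + β) * φ0 1 := by rw [hα, hβ]; unfold aF bF; field_simp; ring
  have ey1 : y1 = (α - β) * φ0 1 - 3/4 * ((α + β) * φ0 1) := by
    rw [hα, hβ]; unfold aF bF; field_simp; ring
  have q := Real.sqrt_nonneg E
  have n1 : ‖(α + β) * φ0 1‖ ≤ 2 * Real.sqrt E := by
    rw [norm_mul]
    calc _ ≤ ‖α + β‖ * 1 := by gcongr; exact φ0_one
      _ ≤ _ := by linarith [norm_add_le α β]
  have n2 : ‖(α - β) * φ0 1‖ ≤ 2 * Real.sqrt E := by
    rw [norm_mul]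
    calc _ ≤ ‖α - β‖ * 1 := by gcongr; exact φ0_one
      _ ≤ _ := by linarith [norm_sub_le α β]
  have ny : ‖y‖ ≤ 8 * Real.sqrt E := by rw [ey]; linarith
  have ny1 : ‖y1‖ ≤ 8 * Real.sqrt E := by
    rw [ey1]
    refine (norm_sub_le _ _).trans ?_
    rw [norm_mul (3/4 : ℂ)]
    rw [show ‖(3/4 : ℂ)‖ = 3/4 by norm_num]
    linarith
  have g : ∀ u v : ℂ, ‖y * u - y1 * v‖ ≤ 8 * (‖u‖ + ‖v‖) * Real.sqrt E := by
    intro u v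
    refine (norm_sub_le _ _).trans ?_
    rw [norm_mul, norm_mul]
    have := mul_le_mul_of_nonneg_right ny (norm_nonneg u)
    have := mul_le_mul_of_nonneg_right ny1 (norm_nonneg v)
    linarith
  constructor
  · rw [ha]
    refine (g _ _).trans ?_
    unfold MM; refine mul_le_mul_of_nonneg_right ?_ q
    linarith [norm_nonneg (fs 1 0 μ 1), norm_nonneg (fs1 1 0 μ 1)]
  · rw [hb, norm_sub_rev]
    refine (g _ _).trans ?_
    unfold MM; refine mul_le_mul_of_nonneg_right ?_ q
    linarith [norm_nonneg (fs 0 1 μ 1), norm_nonneg (fs1 0 1 μ 1)]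

lemma diff_bound (μ : ℂ) {R R' : ℝ} (h0 : 1 ≤ R) (h : R ≤ R') :
    ‖AR μ R' - AR μ R‖ ≤ ee μ R ∧ ‖BR μ R' - BR μ R‖ ≤ ee μ R :=
  coef_bound _ _ _ (YR_D μ h0 h)

lemma XX_tendsto (μ : ℂ) : Tendsto (fun R => XX μ R) atTop (nhds 1) := by
  have h := (tendsto_rpow_neg_atTop (y := (1/2:ℝ)) (by norm_num))
  have := ((h.const_mul (‖μ‖ + 2)).const_mul 6).rexp
  simpa [XX] using this

lemma ee_tendsto (μ : ℂ) : Tendsto (fun R => ee μ R) atTop (nhds 0) := by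
  have h := ((((XX_tendsto μ).sub_const 1).div_const 6).mul_const (XX μ 1)).sqrt.const_mul (MM μ)
  simpa [ee] using h

lemma XX_cont (R : ℝ) : Continuous (fun μ => XX μ R) := by unfold XX; fun_prop

lemma ee_cont (R : ℝ) : Continuous (fun μ => ee μ R) := by
  have := XX_cont R
  have := XX_cont 1
  have := (fs_cont 0 1 1).1
  have := (fs_cont 0 1 1).2
  have := (fs_cont 1 0 1).1
  have := (fs_cont 1 0 1).2
  unfold ee MM
  fun_prop

lemma AR_cont (R : ℝ) : Continuous (fun μ => AR μ R) := by
  have := (fs_cont 0 1 R).1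
  have := (fs_cont 0 1 R).2
  unfold AR; fun_prop

lemma lim_exists (F : ℝ → ℂ) (e : ℝ → ℝ) (he : Tendsto e atTop (nhds 0))
    (h : ∀ R R', 1 ≤ R → R ≤ R' → ‖F R' - F R‖ ≤ e R) :
    ∃ A, Tendsto (fun n : ℕ => F (n + 1)) atTop (nhds A) ∧ ∀ R, 1 ≤ R → ‖A - F R‖ ≤ e R := by
  have hn : Tendsto (fun n : ℕ => (n : ℝ) + 1) atTop atTop :=
    tendsto_atTop_add_const_right _ _ tendsto_natCast_atTop_atTop
  have hc : CauchySeq (fun n : ℕ => F (n + 1)) := by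
    refine cauchySeq_of_le_tendsto_0 (fun n : ℕ => 2 * e (n + 1)) ?_ ?_
    · intro n m N hn hm
      have hN : (1:ℝ) ≤ N + 1 := by linarith [(Nat.cast_nonneg N : (0:ℝ) ≤ N)]
      have h1 := h (N + 1) (n + 1) hN (by gcongr)
      have h2 := h (N + 1) (m + 1) hN (by gcongr)
      rw [dist_eq_norm, show F (n + 1) - F (m + 1) = (F (n + 1) - F (N + 1)) - (F (m + 1) - F (N + 1)) by ring]
      linarith [norm_sub_le (F (n + 1) - F (N + 1)) (F (m + 1) - F (N + 1))]
    · simpa using (he.comp hn).const_mul 2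
  obtain ⟨A, hA⟩ := cauchySeq_tendsto_of_complete hc
  refine ⟨A, hA, fun R hR => ?_⟩
  refine le_of_tendsto ((hA.sub_const (F R)).norm) ?_
  filter_upwards [hn.eventually_ge_atTop R] with n hn
  exact h R _ hR hn

theorem exists_Y : ∃ Y Y1 : ℂ → ℂ → ℂ, (∀ μ, IsSol μ (Y μ) (Y1 μ)) ∧ Continuous (fun μ => Y μ 0) ∧
    ∀ μ (R : ℝ), 1 ≤ R → E0 (Y μ) (Y1 μ) R 1 ≤ (XX μ R - 1) / 6 := by
  choose A hA hA2 using fun μ => lim_exists (AR μ) (ee μ) (ee_tendsto μ) (fun R R' h h' => (diff_bound μ h h').1)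
  choose B hB hB2 using fun μ => lim_exists (BR μ) (ee μ) (ee_tendsto μ) (fun R R' h h' => (diff_bound μ h h').2)
  refine ⟨fun μ => YY μ (A μ) (B μ), fun μ => YY1 μ (A μ) (B μ), fun μ => YY_sol _ _ _, ?_, ?_⟩
  · have e : (fun μ => YY μ (A μ) (B μ) 0) = A := by
      funext μ; unfold YY; rw [(fs_zero 1 0 μ).1, (fs_zero 0 1 μ).1]; ring
    rw [e]
    refine continuous_of_locally_uniform_approx_of_continuousAt ?_
    intro μ u hu
    obtain ⟨ε, hε, hu⟩ := Metric.mem_uniformity_dist.1 hu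
    obtain ⟨R, h1, h2⟩ := (((ee_tendsto μ).eventually_lt_const hε).and (eventually_ge_atTop 1)).exists
    refine ⟨{ν | ee ν R < ε}, ((ee_cont R).continuousAt.eventually_lt_const h1), fun ν => AR ν R,
      (AR_cont R).continuousAt, ?_⟩
    intro ν hν
    apply hu
    rw [dist_eq_norm]
    exact (hA2 ν R h2).trans_lt hν
  · intro μ R hR
    have hn : Tendsto (fun n : ℕ => (n : ℝ) + 1) atTop atTop :=
      tendsto_atTop_add_const_right _ _ tendsto_natCast_atTop_atTop
    have hcont : Continuous (fun ab : ℂ × ℂ => E0 (YY μ ab.1 ab.2) (YY1 μ ab.1 ab.2) R 1) := by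
      unfold E0 YY YY1 aF bF
      fun_prop
    have := (hcont.tendsto (A μ, B μ)).comp ((hA μ).prodMk_nhds (hB μ))
    refine le_of_tendsto this ?_
    filter_upwards [hn.eventually_ge_atTop R] with n hn
    exact YR_E μ hR hn

end ICO

namespace ICO

def IsRec (μ : ℂ) (f f1 : ℂ → ℂ) : Prop :=
  IsSol μ f f1 ∧ ∀ R : ℝ, 1 ≤ R → E0 f f1 R 1 ≤ (XX μ R - 1) / 6

noncomputable def ray (η r : ℝ) : ℂ := r * Complex.exp (η * Complex.I)

lemma ray_E {μ : ℂ} {f f1 : ℂ → ℂ} (h : IsRec μ f f1) {η : ℝ} (hη : |η| ≤ Real.pi / 5) {r : ℝ} (hr : 1 ≤ r) :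
    E0 f f1 (ray η r) 1 ≤ (XX μ r - 1) / 6 * XX μ r + (XX μ r - 1) / 6 := by
  have h1 : E0 f f1 (ray η r) 1 ≤ E0 f f1 r 1 * XX μ r + ‖(1:ℂ)‖ ^ 2 * ((XX μ r - 1) / 6) := by
    rcases le_total 0 η with h0 | h0
    · have := arc h.1 hr (σ := 1) (Or.inl rfl) h0 (by rwa [abs_of_nonneg h0] at hη) 1
      simpa [ray] using this
    · have := arc h.1 hr (σ := -1) (Or.inr rfl) (θ := -η) (by linarith) (by rwa [abs_of_nonpos h0] at hη) 1
      simpa [ray] using this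
  have := mul_le_mul_of_nonneg_right (h.2 r hr) (Real.exp_pos (6 * ((‖μ‖ + 2) * r ^ (-(1/2) : ℝ)))).le
  simp only [norm_one, one_pow, one_mul] at h1
  exact h1.trans (add_le_add_left this _)

lemma ray_ab {μ : ℂ} {f f1 : ℂ → ℂ} (h : IsRec μ f f1) {η : ℝ} (hη : |η| ≤ Real.pi / 5) :
    Tendsto (fun r => aF (f (ray η r)) (f1 (ray η r)) (p0 (ray η r)) (g0 (ray η r)) (φ0 (ray η r))) atTop (nhds 0) ∧
    Tendsto (fun r => bF (f (ray η r)) (f1 (ray η r)) (p0 (ray η r)) (g0 (ray η r)) (φ0 (ray η r))) atTop (nhds 1) := by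
  have hlim : Tendsto (fun r => Real.sqrt ((XX μ r - 1) / 6 * XX μ r + (XX μ r - 1) / 6)) atTop (nhds 0) := by
    have hX := XX_tendsto μ
    have h1 := (hX.sub_const 1).div_const 6
    simpa using ((h1.mul hX).add h1).sqrt
  constructor
  · refine squeeze_zero_norm' ?_ hlim
    filter_upwards [eventually_ge_atTop 1] with r hr
    refine Real.le_sqrt_of_sq_le ?_
    have := ray_E h hη hr
    unfold E0 at this
    refine le_trans ?_ this
    have : ∀ x y : ℝ, x ^ 2 ≤ x ^ 2 + y ^ 2 := fun x y => by nlinarith [sq_nonneg y]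
    exact this _ _
  · rw [tendsto_iff_norm_sub_tendsto_zero]
    refine squeeze_zero' (Eventually.of_forall fun _ => norm_nonneg _) ?_ hlim
    filter_upwards [eventually_ge_atTop 1] with r hr
    refine Real.le_sqrt_of_sq_le ?_
    have := ray_E h hη hr
    unfold E0 at this
    refine le_trans ?_ this
    have : ∀ x y : ℝ, y ^ 2 ≤ x ^ 2 + y ^ 2 := fun x y => by nlinarith [sq_nonneg x]
    exact this _ _

noncomputable def Wr (f : ℂ → ℂ) (s : ℂ) : ℂ := f s / φ0 s
noncomputable def Zr (f f1 : ℂ → ℂ) (s : ℂ) : ℂ := (f1 s + g0 s * f s) / (p0 s * φ0 s)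

lemma ray_W {μ : ℂ} {f f1 : ℂ → ℂ} (h : IsRec μ f f1) {η : ℝ} (hη : |η| ≤ Real.pi / 5) :
    Tendsto (fun r => Wr f (ray η r)) atTop (nhds 1) := by
  have := (ray_ab h hη).1.add (ray_ab h hη).2
  rw [zero_add] at this
  refine this.congr fun r => ?_
  unfold aF bF Wr; ring

lemma ray_Z {μ : ℂ} {f f1 : ℂ → ℂ} (h : IsRec μ f f1) {η : ℝ} (hη : |η| ≤ Real.pi / 5) :
    Tendsto (fun r => Zr f f1 (ray η r)) atTop (nhds (-1)) := by
  have := (ray_ab h hη).1.sub (ray_ab h hη).2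
  rw [zero_sub] at this
  refine this.congr fun r => ?_
  unfold aF bF Zr; ring

lemma ray_slit {η : ℝ} (hη : |η| ≤ Real.pi / 5) {r : ℝ} (hr : 0 < r) : ray η r ∈ Complex.slitPlane := by
  have := Real.pi_pos
  obtain ⟨h1, h2⟩ := abs_le.1 hη
  exact polar_slit hr (by linarith) (by linarith)

lemma ray_cpow {η : ℝ} (hη : |η| ≤ Real.pi / 5) {r : ℝ} (hr : 0 < r) (c : ℝ) :
    (ray η r) ^ (c : ℂ) = (r ^ c : ℝ) * Complex.exp ((c * η : ℝ) * Complex.I) := by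
  have := Real.pi_pos
  obtain ⟨h1, h2⟩ := abs_le.1 hη
  exact polar_cpow hr (by linarith) (by linarith) c

lemma φ0_ray_norm {η : ℝ} (hη : |η| ≤ Real.pi / 5) {r : ℝ} (hr : 0 < r) :
    ‖φ0 (ray η r)‖ ≤ r ^ (-3/4 : ℝ) := by
  unfold φ0
  rw [norm_mul, Complex.norm_exp, ray_cpow hη hr, ray_cpow hη hr]
  rw [norm_mul, Complex.norm_exp_ofReal_mul_I, mul_one, Complex.norm_real,
    Real.norm_of_nonneg (Real.rpow_nonneg hr.le _)]
  have : Real.exp (-(2 / 5 * (((r ^ (5/2:ℝ) : ℝ):ℂ) * Complex.exp (((5/2) * η : ℝ) * Complex.I)))).re ≤ 1 := by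
    rw [Real.exp_le_one_iff]
    rw [show (2 / 5 * (((r ^ (5/2:ℝ) : ℝ):ℂ) * Complex.exp (((5/2) * η : ℝ) * Complex.I)))
      = ((2 / 5 * r ^ (5/2:ℝ) : ℝ) : ℂ) * Complex.exp (((5/2) * η : ℝ) * Complex.I) by push_cast; ring]
    rw [Complex.neg_re, Complex.re_ofReal_mul, Complex.exp_ofReal_mul_I_re]
    have h1 : 0 ≤ Real.cos (5/2 * η) := by
      obtain ⟨h1, h2⟩ := abs_le.1 hη
      exact Real.cos_nonneg_of_mem_Icc ⟨by linarith, by linarith⟩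
    have h2 : 0 ≤ r ^ (5/2:ℝ) := Real.rpow_nonneg hr.le _
    have := mul_nonneg h2 h1
    linarith
  exact mul_le_of_le_one_right (Real.rpow_nonneg hr.le _) this

lemma f_eq (f : ℂ → ℂ) {s : ℂ} (hs : s ∈ Complex.slitPlane) : f s = Wr f s * φ0 s := by
  have := φ0_ne hs
  unfold Wr; field_simp

lemma f1_eq (f f1 : ℂ → ℂ) {s : ℂ} (hs : s ∈ Complex.slitPlane) :
    f1 s = (Zr f f1 s * p0 s - g0 s * Wr f s) * φ0 s := by
  have := φ0_ne hs
  have := p0_ne hs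
  unfold Wr Zr; field_simp; ring

noncomputable def cis (x : ℝ) : ℂ := Complex.exp (x * Complex.I)
lemma cis_add (x y : ℝ) : cis (x + y) = cis x * cis y := by
  unfold cis; rw [← Complex.exp_add]; congr 1; push_cast; ring
lemma cis_ne (x : ℝ) : cis x ≠ 0 := Complex.exp_ne_zero _
lemma cis_zero : cis 0 = 1 := by simp [cis]
lemma cis_pi : cis Real.pi = -1 := by simp [cis, Complex.exp_pi_mul_I]
lemma cis_two_pi : cis (2 * Real.pi) = 1 := by simp [cis]
lemma cis_neg_two_pi : cis (-(2 * Real.pi)) = 1 := by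
  have := cis_add (2 * Real.pi) (-(2 * Real.pi))
  rw [cis_two_pi, one_mul, add_neg_cancel, cis_zero] at this
  exact this.symm
lemma cis_pow (x : ℝ) (n : ℕ) : cis x ^ n = cis (n * x) := by
  unfold cis; rw [← Complex.exp_nat_mul]; congr 1; push_cast; ring
lemma cis_norm (x : ℝ) : ‖cis x‖ = 1 := Complex.norm_exp_ofReal_mul_I x
lemma cis_conj (x : ℝ) : (starRingEnd ℂ) (cis x) = cis (-x) := by
  unfold cis; rw [← Complex.exp_conj]; congr 1; simp

lemma cis_npi {σ : ℝ} (hσ : σ = 1 ∨ σ = -1) : cis (-(σ * Real.pi)) = -1 := by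
  rcases hσ with rfl | rfl
  · have := cis_add (Real.pi) (-(Real.pi))
    rw [cis_pi, add_neg_cancel, cis_zero] at this
    rw [one_mul]; linear_combination this
  · rw [show -(-1 * Real.pi) = Real.pi by ring, cis_pi]

lemma conn {lam : ℂ} {σ : ℝ} (hσ : σ = 1 ∨ σ = -1) {μ : ℂ} {f f1 g g1 : ℂ → ℂ}
    (hf : IsRec lam f f1) (hg : IsRec μ g g1) (h : ℂ → ℂ) (h1 : ℂ → ℂ)
    (hh : ∀ s, h s = g (cis (-(σ * (2 * Real.pi / 5))) * s))
    (hh1 : ∀ s, h1 s = cis (-(σ * (2 * Real.pi / 5))) * g1 (cis (-(σ * (2 * Real.pi / 5))) * s))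
    (hs : IsSol lam h h1) (s : ℂ) :
    f s * h1 s - f1 s * h s = 2 * cis (σ * (3 * Real.pi / 10)) := by
  have hpi := Real.pi_pos
  have habs : |σ| = 1 := by rcases hσ with rfl | rfl <;> simp
  have e1 : |σ * (Real.pi / 5)| ≤ Real.pi / 5 := by
    rw [abs_mul, habs, one_mul, abs_of_pos (by linarith)]
  have e2 : |-(σ * (Real.pi / 5))| ≤ Real.pi / 5 := by rw [abs_neg]; exact e1
  have hlim : Tendsto (fun r => cis (σ * (3 * Real.pi / 10)) *
      (-(Wr f (ray (σ * (Real.pi / 5)) r) * Zr g g1 (ray (-(σ * (Real.pi / 5))) r))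
        - Zr f f1 (ray (σ * (Real.pi / 5)) r) * Wr g (ray (-(σ * (Real.pi / 5))) r)))
      atTop (nhds (2 * cis (σ * (3 * Real.pi / 10)))) := by
    have := ((((ray_W hf e1).mul (ray_Z hg e2)).neg).sub ((ray_Z hf e1).mul (ray_W hg e2))).const_mul
      (cis (σ * (3 * Real.pi / 10)))
    have e : (2 * cis (σ * (3 * Real.pi / 10))) = cis (σ * (3 * Real.pi / 10)) * (-(1 * -1) - -1 * 1) := by ring
    rw [e]; exact this
  refine tendsto_nhds_unique (f := fun _ : ℝ => f s * h1 s - f1 s * h s) tendsto_const_nhds (hlim.congr' ?_)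
  filter_upwards [eventually_ge_atTop 1] with r hr
  have hr0 : 0 < r := by linarith
  rw [wronsk hf.1 hs s (ray (σ * (Real.pi / 5)) r), hh, hh1]
  have et : cis (-(σ * (2 * Real.pi / 5))) * ray (σ * (Real.pi / 5)) r = ray (-(σ * (Real.pi / 5))) r := by
    have : ∀ η, ray η r = r * cis η := fun η => rfl
    rw [this, this, mul_left_comm, ← cis_add]; congr 2; ring
  rw [et]
  have s1 := ray_slit e1 hr0
  have s2 := ray_slit e2 hr0
  have hne := slit_ne s2
  rw [f_eq f s1, f1_eq f f1 s1, f_eq g s2, f1_eq g g1 s2]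
  have eg : cis (-(σ * (2 * Real.pi / 5))) * g0 (ray (-(σ * (Real.pi / 5))) r) = g0 (ray (σ * (Real.pi / 5)) r) := by
    have := slit_ne s1
    have := cis_ne (-(σ * (2 * Real.pi / 5)))
    rw [← et]; unfold g0
    generalize cis (-(σ * (2 * Real.pi / 5))) = v at *
    generalize ray (σ * (Real.pi / 5)) r = s at *
    field_simp
  have ep1 : p0 (ray (σ * (Real.pi / 5)) r) = (r ^ (3/2:ℝ) : ℝ) * cis (σ * (3 * Real.pi / 10)) := by
    unfold p0; rw [ray_cpow e1 hr0]; unfold cis; congr 4; ring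
  have ep2 : cis (-(σ * (2 * Real.pi / 5))) * p0 (ray (-(σ * (Real.pi / 5))) r)
      = -((r ^ (3/2:ℝ) : ℝ) * cis (σ * (3 * Real.pi / 10))) := by
    unfold p0; rw [ray_cpow e2 hr0]
    change cis (-(σ * (2 * Real.pi / 5))) * (((r ^ (3/2:ℝ) : ℝ):ℂ) * cis ((3/2) * (-(σ * (Real.pi / 5))))) = _
    rw [mul_left_comm, ← cis_add,
      show -(σ * (2 * Real.pi / 5)) + 3/2 * (-(σ * (Real.pi / 5))) = -(σ * Real.pi) + σ * (3 * Real.pi / 10) by ring,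
      cis_add, cis_npi hσ]
    ring
  have eφ : φ0 (ray (σ * (Real.pi / 5)) r) * φ0 (ray (-(σ * (Real.pi / 5))) r) * ((r ^ (3/2:ℝ) : ℝ):ℂ) = 1 := by
    unfold φ0
    rw [ray_cpow e1 hr0, ray_cpow e1 hr0, ray_cpow e2 hr0, ray_cpow e2 hr0]
    change ((r ^ (-3/4:ℝ) : ℝ):ℂ) * cis (-3/4 * (σ * (Real.pi / 5))) *
      Complex.exp (-(2 / 5 * (((r ^ (5/2:ℝ) : ℝ):ℂ) * cis (5/2 * (σ * (Real.pi / 5)))))) *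
      (((r ^ (-3/4:ℝ) : ℝ):ℂ) * cis (-3/4 * -(σ * (Real.pi / 5))) *
      Complex.exp (-(2 / 5 * (((r ^ (5/2:ℝ) : ℝ):ℂ) * cis (5/2 * -(σ * (Real.pi / 5))))))) * _ = 1
    have c1 : cis (-3/4 * (σ * (Real.pi / 5))) * cis (-3/4 * -(σ * (Real.pi / 5))) = 1 := by
      rw [← cis_add, ← cis_zero]; congr 1; ring
    have c2 : cis (5/2 * (σ * (Real.pi / 5))) = - cis (5/2 * -(σ * (Real.pi / 5))) := by
      rw [show 5/2 * -(σ * (Real.pi / 5)) = -(σ * Real.pi) + 5/2 * (σ * (Real.pi / 5)) by ring, cis_add, cis_npi hσ]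
      ring
    have c3 : Complex.exp (-(2 / 5 * (((r ^ (5/2:ℝ) : ℝ):ℂ) * cis (5/2 * (σ * (Real.pi / 5)))))) *
      Complex.exp (-(2 / 5 * (((r ^ (5/2:ℝ) : ℝ):ℂ) * cis (5/2 * -(σ * (Real.pi / 5)))))) = 1 := by
      rw [← Complex.exp_add, c2, ← Complex.exp_zero]; congr 1; ring
    have c4 : ((r ^ (-3/4:ℝ) : ℝ):ℂ) * ((r ^ (-3/4:ℝ) : ℝ):ℂ) * ((r ^ (3/2:ℝ) : ℝ):ℂ) = 1 := by
      rw [← Complex.ofReal_mul, ← Complex.ofReal_mul, ← Real.rpow_add hr0, ← Real.rpow_add hr0]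
      norm_num
    calc _ = (cis (-3/4 * (σ * (Real.pi / 5))) * cis (-3/4 * -(σ * (Real.pi / 5)))) *
      (Complex.exp (-(2 / 5 * (((r ^ (5/2:ℝ) : ℝ):ℂ) * cis (5/2 * (σ * (Real.pi / 5)))))) *
      Complex.exp (-(2 / 5 * (((r ^ (5/2:ℝ) : ℝ):ℂ) * cis (5/2 * -(σ * (Real.pi / 5))))))) *
      (((r ^ (-3/4:ℝ) : ℝ):ℂ) * ((r ^ (-3/4:ℝ) : ℝ):ℂ) * ((r ^ (3/2:ℝ) : ℝ):ℂ)) := by ring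
      _ = 1 := by rw [c1, c3, c4]; ring
  rw [ep1]
  generalize ray (σ * (Real.pi / 5)) r = s at *
  generalize ray (-(σ * (Real.pi / 5))) r = t at *
  generalize ((r ^ (3/2:ℝ) : ℝ):ℂ) = q at *
  generalize cis (σ * (3 * Real.pi / 10)) = u at *
  generalize cis (-(σ * (2 * Real.pi / 5))) = v at *
  linear_combination (u * (Wr f s * Zr g g1 t + Zr f f1 s * Wr g t)) * eφ
    - (Wr f s * φ0 s * φ0 t * Zr g g1 t) * ep2 + (Wr f s * φ0 s * φ0 t * Wr g t) * eg

end ICO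

namespace ICO

local notation "cj" => starRingEnd ℂ

lemma rot {μ lam v : ℂ} {g g1 : ℂ → ℂ} (hg : IsSol μ g g1) (h5 : v ^ 5 = 1) (hμ : v ^ 2 * μ = lam) :
    IsSol lam (fun s => g (v * s)) (fun s => v * g1 (v * s)) := by
  intro s
  have d : HasDerivAt (fun s => v * s) v s := by simpa using (hasDerivAt_id s).const_mul v
  refine ⟨((hg (v * s)).1.comp s d).congr_deriv (by ring), ?_⟩
  refine (((hg (v * s)).2.comp s d).const_mul v).congr_deriv ?_
  rw [← hμ]
  linear_combination (s ^ 3 * g (v * s)) * h5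

lemma IsSol.cj {μ : ℂ} {g g1 : ℂ → ℂ} (hg : IsSol μ g g1) :
    IsSol (cj μ) (fun s => cj (g (cj s))) (fun s => cj (g1 (cj s))) := by
  intro s
  refine ⟨((hg (cj s)).1.conj_conj).congr_deriv (by simp) |> fun h => by simpa [Function.comp_def] using h, ?_⟩
  have := ((hg (cj s)).2.conj_conj)
  have := this.congr_deriv (g' := (s ^ 3 + cj μ) * cj (g (cj s))) (by simp)
  simpa [Function.comp_def] using this

lemma p0_real {R : ℝ} (h : 1 ≤ R) : cj (p0 R) = p0 R := by
  unfold p0; rw [← Complex.ofReal_cpow (by linarith)]; exact Complex.conj_ofReal _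
lemma g0_real (R : ℝ) : cj (g0 R) = g0 R := by
  unfold g0; simp [Complex.conj_ofNat]
lemma φ0_real {R : ℝ} (h : 1 ≤ R) : cj (φ0 R) = φ0 R := by
  unfold φ0; rw [← Complex.ofReal_cpow (by linarith), ← Complex.ofReal_cpow (by linarith)]
  simp [← Complex.exp_conj, Complex.conj_ofNat]

lemma IsRec.cj {μ : ℂ} {g g1 : ℂ → ℂ} (hg : IsRec μ g g1) :
    IsRec (cj μ) (fun s => cj (g (cj s))) (fun s => cj (g1 (cj s))) := by
  refine ⟨hg.1.cj, fun R hR => ?_⟩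
  have e1 : XX (cj μ) R = XX μ R := by unfold XX; simp
  have e2 : E0 (fun s => cj (g (cj s))) (fun s => cj (g1 (cj s))) R 1 = E0 g g1 R 1 := by
    have a1 : aF (cj (g R)) (cj (g1 R)) (p0 R) (g0 R) (φ0 R) = cj (aF (g R) (g1 R) (p0 R) (g0 R) (φ0 R)) := by
      unfold aF; simp [p0_real hR, g0_real R, φ0_real hR, Complex.conj_ofNat]
    have a2 : bF (cj (g R)) (cj (g1 R)) (p0 R) (g0 R) (φ0 R) - 1 = cj (bF (g R) (g1 R) (p0 R) (g0 R) (φ0 R) - 1) := by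
      unfold bF; simp [p0_real hR, g0_real R, φ0_real hR, Complex.conj_ofNat]
    unfold E0
    simp only [Complex.conj_ofReal]
    rw [a1, a2, Complex.norm_conj, Complex.norm_conj]
  rw [e1, e2]; exact hg.2 R hR

lemma rec_ne {μ : ℂ} {f f1 : ℂ → ℂ} (h : IsRec μ f f1) {η : ℝ} (hη : |η| ≤ Real.pi / 5) :
    ∀ᶠ r in atTop, f (ray η r) ≠ 0 := by
  have h1 := (ray_W h hη).eventually_ne (one_ne_zero)
  filter_upwards [h1] with r h1 h2
  apply h1; unfold Wr; rw [h2, zero_div]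

lemma rec_bound {μ : ℂ} {f f1 : ℂ → ℂ} (h : IsRec μ f f1) {η : ℝ} (hη : |η| ≤ Real.pi / 5) :
    ∀ᶠ r in atTop, ‖f (ray η r)‖ ≤ 2 * r ^ (-3/4 : ℝ) := by
  have h1 := (ray_W h hη).norm.eventually_le_const (u := 2) (by simp)
  filter_upwards [h1, eventually_ge_atTop 1] with r h1 h2
  rw [f_eq f (ray_slit hη (by linarith)), norm_mul]
  have := φ0_ray_norm hη (by linarith : 0 < r)
  gcongr

lemma y0_ne {lam : ℝ} (hl : 0 ≤ lam) {f f1 : ℂ → ℂ} (h : IsRec lam f f1) : f 0 ≠ 0 := by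
  intro h0
  have hd : ∀ x : ℝ, HasDerivAt (fun x : ℝ => f x) (f1 x) x := fun x => (h.1 x).1.comp_ofReal
  have hd1 : ∀ x : ℝ, HasDerivAt (fun x : ℝ => f1 x) ((x ^ 3 + lam) * f x) x := fun x => (h.1 x).2.comp_ofReal
  have dk : ∀ x : ℝ, HasDerivAt (fun x : ℝ => inner ℝ (f x) (f1 x))
      (inner ℝ (f x) ((x ^ 3 + lam) * f x) + inner ℝ (f1 x) (f1 x)) x := fun x => (hd x).inner ℝ (hd1 x)
  have dh : ∀ x : ℝ, HasDerivAt (fun x : ℝ => ‖f x‖ ^ 2) (2 * inner ℝ (f x) (f1 x)) x := fun x => (hd x).norm_sq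
  have m1 : MonotoneOn (fun x : ℝ => inner ℝ (f x) (f1 x)) (Set.Ici 0) := by
    refine monotoneOn_of_deriv_nonneg (convex_Ici 0) (fun x _ => (dk x).continuousAt.continuousWithinAt)
      (fun x _ => (dk x).differentiableAt.differentiableWithinAt) ?_
    intro x hx
    rw [interior_Ici, Set.mem_Ioi] at hx
    rw [(dk x).deriv]
    have e : ((x:ℂ) ^ 3 + lam) * f x = ((x ^ 3 + lam : ℝ)) • f x := by
      rw [Complex.real_smul]; push_cast; ring
    rw [e, real_inner_smul_right, real_inner_self_eq_norm_sq, real_inner_self_eq_norm_sq]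
    positivity
  have k0 : ∀ x : ℝ, 0 ≤ x → 0 ≤ inner ℝ (f x) (f1 x) := by
    intro x hx
    have := m1 (Set.mem_Ici.2 le_rfl) (Set.mem_Ici.2 hx) hx
    simpa [h0] using this
  have m2 : MonotoneOn (fun x : ℝ => ‖f x‖ ^ 2) (Set.Ici 0) := by
    refine monotoneOn_of_deriv_nonneg (convex_Ici 0) (fun x _ => (dh x).continuousAt.continuousWithinAt)
      (fun x _ => (dh x).differentiableAt.differentiableWithinAt) ?_
    intro x hx
    rw [interior_Ici, Set.mem_Ioi] at hx
    rw [(dh x).deriv]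
    linarith [k0 x hx.le]
  have er : ∀ r : ℝ, ray 0 r = r := fun r => by simp [ray]
  have hη : |(0:ℝ)| ≤ Real.pi / 5 := by simp; positivity
  have hb := rec_bound h hη
  have hn := rec_ne h hη
  simp only [er] at hb hn
  obtain ⟨r, hr, hr1⟩ := (hn.and (eventually_ge_atTop 1)).exists
  have hlim : Tendsto (fun r : ℝ => (2 * r ^ (-3/4 : ℝ)) ^ 2) atTop (nhds 0) := by
    have := ((tendsto_rpow_neg_atTop (y := (3/4:ℝ)) (by norm_num)).const_mul 2).pow 2
    simpa [neg_div] using this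
  have hpos : 0 < ‖f r‖ ^ 2 := by positivity
  obtain ⟨x, hx1, hx2, hx3⟩ := ((hlim.eventually_lt_const hpos).and (hb.and (eventually_ge_atTop r))).exists
  have c1 := m2 (Set.mem_Ici.2 (by linarith)) (Set.mem_Ici.2 (by linarith)) hx3
  have c2 : ‖f x‖ ^ 2 ≤ (2 * x ^ (-3/4 : ℝ)) ^ 2 := by gcongr
  simp only at c1
  linarith

noncomputable def Yf : ℂ → ℂ → ℂ := exists_Y.choose
noncomputable def Yf1 : ℂ → ℂ → ℂ := exists_Y.choose_spec.choose
lemma Y_rec (μ : ℂ) : IsRec μ (Yf μ) (Yf1 μ) :=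
  ⟨exists_Y.choose_spec.choose_spec.1 μ, exists_Y.choose_spec.choose_spec.2.2 μ⟩
lemma Y_cont : Continuous (fun μ => Yf μ 0) := exists_Y.choose_spec.choose_spec.2.1

lemma IsSol.cd {μ : ℂ} {f f1 : ℂ → ℂ} (h : IsSol μ f f1) : ContDiff ℂ ⊤ f :=
  (show Differentiable ℂ f from fun s => (h s).1.differentiableAt).contDiff

lemma eigen_crit {lam : ℝ} (hl : 0 < lam)
    (him : (cis (-(3 * Real.pi / 10)) * Yf (cis (4 * Real.pi / 5) * lam) 0).im = 0) :
    ∃ ψ : ℝ → ℂ, ψ ≠ 0 ∧ ContDiff ℝ 2 ψ ∧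
    Integrable (fun x : ℝ => ‖ψ x‖ ^ 2) ∧
    ∀ x : ℝ, -(deriv (deriv ψ) x) + Complex.I * (x : ℂ) ^ 3 * ψ x = lam * ψ x := by
  set μ := cis (4 * Real.pi / 5) * lam with hμ
  have hpi := Real.pi_pos
  have Hy := Y_rec μ
  have H0 := Y_rec lam
  have Hc := Hy.cj
  set g := Yf μ with hg
  set g1 := Yf1 μ with hg1
  set f := Yf lam with hf
  set f1 := Yf1 lam with hf1
  set v := cis (-(1 * (2 * Real.pi / 5))) with hv
  set w := cis (-(-1 * (2 * Real.pi / 5))) with hw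
  have hv5 : v ^ 5 = 1 := by
    rw [hv, cis_pow, ← cis_neg_two_pi]; congr 1; push_cast; ring
  have hw5 : w ^ 5 = 1 := by
    rw [hw, cis_pow, ← cis_two_pi]; congr 1; push_cast; ring
  have hvμ : v ^ 2 * μ = lam := by
    rw [hv, cis_pow, hμ, ← mul_assoc, ← cis_add]
    rw [show ((2:ℕ):ℝ) * -(1 * (2 * Real.pi / 5)) + 4 * Real.pi / 5 = 0 by push_cast; ring, cis_zero, one_mul]
  have hwμ : w ^ 2 * cj μ = lam := by
    rw [hw, cis_pow, hμ, map_mul, cis_conj, Complex.conj_ofReal, ← mul_assoc, ← cis_add]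
    rw [show ((2:ℕ):ℝ) * -(-1 * (2 * Real.pi / 5)) + -(4 * Real.pi / 5) = 0 by push_cast; ring, cis_zero, one_mul]
  have hcv : cj v = w := by rw [hv, hw, cis_conj]; congr 1; ring
  have hcw : cj w = v := by rw [← hcv, Complex.conj_conj]
  have S1 := rot Hy.1 hv5 hvμ
  have S2 := rot Hc.1 hw5 hwμ
  have c1 := conn (σ := 1) (Or.inl rfl) H0 Hy _ _ (fun s => rfl) (fun s => rfl) S1
  have c2 := conn (σ := -1) (Or.inr rfl) H0 Hc _ _ (fun s => rfl) (fun s => rfl) S2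
  rw [← hv] at c1
  rw [← hw] at c2
  set h : ℂ → ℂ := fun s => g (v * s) with hh
  set h1 : ℂ → ℂ := fun s => v * g1 (v * s) with hh1
  set k : ℂ → ℂ := fun s => cj (g (cj (w * s))) with hk
  set k1 : ℂ → ℂ := fun s => w * cj (g1 (cj (w * s))) with hk1
  have T := wronsk S1 S2
  have ident : ∀ s, f s * (h 0 * k1 0 - h1 0 * k 0) = h s * (2 * cis (-1 * (3 * Real.pi / 10)))
      - k s * (2 * cis (1 * (3 * Real.pi / 10))) := by
    intro s
    rw [← T s 0]
    linear_combination (h s) * (c2 s) - (k s) * (c1 s)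
  have hT : h 0 * k1 0 - h1 0 * k 0 = 0 := by
    have i0 := ident 0
    have e : h 0 * (2 * cis (-1 * (3 * Real.pi / 10))) - k 0 * (2 * cis (1 * (3 * Real.pi / 10))) = 0 := by
      have hr := Complex.conj_eq_iff_im.2 him
      rw [map_mul, cis_conj] at hr
      simp only [hh, hk, mul_zero, map_zero]
      rw [show -1 * (3 * Real.pi / 10) = -(3 * Real.pi / 10) by ring, show 1 * (3 * Real.pi / 10) = - -(3 * Real.pi / 10) by ring]
      linear_combination -2 * hr
    rw [e] at i0
    exact (mul_eq_zero.1 i0).resolve_left (y0_ne hl.le H0)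
  have hhk : ∀ s, ‖h s‖ = ‖k s‖ := by
    intro s
    have := ident s
    rw [hT, mul_zero] at this
    have e : h s * (2 * cis (-1 * (3 * Real.pi / 10))) = k s * (2 * cis (1 * (3 * Real.pi / 10))) := by
      linear_combination -this
    have := congrArg norm e
    simp only [norm_mul, cis_norm] at this
    simp at this
    exact this
  have hkc : ∀ s, ‖k s‖ = ‖h (cj s)‖ := by
    intro s
    simp only [hh, hk]
    rw [Complex.norm_conj, map_mul, hcw]
  have hη : |Real.pi / 10| ≤ Real.pi / 5 := by rw [abs_of_pos (by linarith)]; linarith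
  have hray : ∀ x : ℝ, h (Complex.I * x) = g (ray (Real.pi / 10) x) := by
    intro x
    simp only [hh]
    congr 1
    have : Complex.I = cis (Real.pi / 2) := by simp [cis, Complex.exp_pi_div_two_mul_I]
    rw [this, ← mul_assoc, hv, ← cis_add, show -(1 * (2 * Real.pi / 5)) + Real.pi / 2 = Real.pi / 10 by ring]
    unfold ray cis; ring
  have dI : ∀ x : ℝ, HasDerivAt (fun x : ℝ => Complex.I * (x:ℂ)) Complex.I x := fun x => by
    simpa using (Complex.ofRealCLM.hasDerivAt (x := x)).const_mul Complex.I
  have comp : ∀ {F : ℂ → ℂ} {F' : ℂ} (t : ℝ), HasDerivAt F F' (Complex.I * t) →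
      HasDerivAt (fun t : ℝ => F (Complex.I * t)) (Complex.I * F') t := by
    intro F F' t hF
    have := HasDerivAt.scomp t hF (dI t)
    exact this.congr_deriv (by simp)
  have d1 : ∀ x : ℝ, HasDerivAt (fun x : ℝ => h (Complex.I * x)) (Complex.I * h1 (Complex.I * x)) x :=
    fun x => comp x (S1 _).1
  have d2 : ∀ x : ℝ, HasDerivAt (fun x : ℝ => Complex.I * h1 (Complex.I * x))
      (Complex.I * (Complex.I * (((Complex.I * x) ^ 3 + lam) * h (Complex.I * x)))) x :=
    fun x => (comp x (S1 _).2).const_mul Complex.I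
  have hcd : ContDiff ℝ 2 (fun x : ℝ => h (Complex.I * x)) := by
    have a1 : ContDiff ℝ 2 h := (S1.cd.restrict_scalars ℝ).of_le le_top
    have a2 : ContDiff ℝ 2 (fun x : ℝ => Complex.I * (x:ℂ)) :=
      contDiff_const.mul Complex.ofRealCLM.contDiff
    exact a1.comp a2
  refine ⟨fun x => h (Complex.I * x), ?_, hcd, ?_, ?_⟩
  · intro h0
    obtain ⟨r, hr⟩ := (rec_ne Hy hη).exists
    apply hr
    rw [← hray r]
    exact congrFun h0 r
  · have hcont : Continuous (fun x : ℝ => ‖h (Complex.I * x)‖ ^ 2) := (hcd.continuous.norm).pow 2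
    refine LocallyIntegrable.integrable_of_isBigO_atTop_of_norm_isNegInvariant
      (g := fun x : ℝ => x ^ (-3/2 : ℝ)) hcont.locallyIntegrable ?_ ?_ ?_
    · refine Eventually.of_forall fun x => ?_
      simp only [Function.comp]
      have : ‖h (Complex.I * ((-x : ℝ):ℂ))‖ = ‖h (Complex.I * x)‖ := by
        rw [hhk, hkc]; congr 2; simp
      rw [this]
    · refine Asymptotics.IsBigO.of_bound 4 ?_
      filter_upwards [rec_bound Hy hη, eventually_ge_atTop 1] with r hr h1
      rw [hray]
      have hr0 : 0 < r := by linarith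
      rw [Real.norm_of_nonneg (by positivity), Real.norm_of_nonneg (Real.rpow_nonneg hr0.le _)]
      have e : r ^ (-3/2 : ℝ) = (r ^ (-3/4 : ℝ)) ^ 2 := by
        rw [← Real.rpow_natCast, ← Real.rpow_mul hr0.le]; norm_num
      rw [e]
      have : ‖g (ray (Real.pi / 10) r)‖ ^ 2 ≤ (2 * r ^ (-3/4 : ℝ)) ^ 2 := by gcongr
      nlinarith
    · exact integrableAtFilter_rpow_atTop_iff.2 (by norm_num)
  · intro x
    have e1 : deriv (fun x : ℝ => h (Complex.I * x)) = fun x : ℝ => Complex.I * h1 (Complex.I * x) :=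
      funext fun x => (d1 x).deriv
    rw [e1, (d2 x).deriv]
    have i2 : Complex.I ^ 2 = -1 := Complex.I_sq
    have i5 : Complex.I ^ 5 = Complex.I := by
      rw [show (5:ℕ) = 2 * 2 + 1 by norm_num, pow_add, pow_mul, i2]; norm_num
    linear_combination (-(x:ℂ) ^ 3 * h (Complex.I * x)) * i5 - (lam * h (Complex.I * x)) * i2

end ICO

namespace ICO

noncomputable def sq (z : ℂ) : ℂ := z ^ (((1/2 : ℝ)) : ℂ)

lemma cpow_polar {z : ℂ} (hz : z ≠ 0) (c : ℝ) :
    z ^ (c : ℂ) = (‖z‖ ^ c : ℝ) * cis (c * z.arg) := by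
  have h := polar_cpow (norm_pos_iff.2 hz) (Complex.neg_pi_lt_arg z) (Complex.arg_le_pi z) c
  rw [Complex.norm_mul_exp_arg_mul_I] at h
  exact h

lemma cpow_contOn {c : ℝ} (hc : 0 < c) : ContinuousOn (fun z : ℂ => z ^ (c : ℂ)) {z | 0 ≤ z.im} := by
  have hpi := Real.pi_pos
  have e : Set.EqOn (fun z : ℂ => z ^ (c : ℂ)) (fun z : ℂ => cis (c * (Real.pi / 2)) * (-Complex.I * z) ^ (c : ℂ)) {z | 0 ≤ z.im} := by
    intro z hz
    simp only
    rcases eq_or_ne z 0 with rfl | h0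
    · have : (c:ℂ) ≠ 0 := by exact_mod_cast hc.ne'
      simp [Complex.zero_cpow this]
    · have h1 : -Complex.I * z = ‖z‖ * Complex.exp ((z.arg - Real.pi / 2 : ℝ) * Complex.I) := by
        conv_lhs => rw [← Complex.norm_mul_exp_arg_mul_I z]
        have : -Complex.I = Complex.exp ((-(Real.pi/2) : ℝ) * Complex.I) := by
          push_cast; rw [neg_mul, Complex.exp_neg, Complex.exp_pi_div_two_mul_I, Complex.inv_I]
        rw [this, mul_left_comm, ← Complex.exp_add]; congr 2; push_cast; ring
      have ha : 0 ≤ z.arg := Complex.arg_nonneg_iff.2 hz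
      have hb := Complex.arg_le_pi z
      rw [h1, polar_cpow (norm_pos_iff.2 h0) (by linarith) (by linarith), cpow_polar h0]
      change _ = _ * (_ * cis (c * (z.arg - Real.pi / 2)))
      rw [mul_left_comm, ← cis_add]; congr 2; ring
  refine ContinuousOn.congr ?_ e
  intro z hz
  apply ContinuousAt.continuousWithinAt
  have h1 : ContinuousAt (fun x : ℂ => x ^ (c:ℂ)) (-Complex.I * z) := by
    refine Complex.continuousAt_cpow_const_of_re_pos (Or.inl ?_) (by simpa using hc)
    simpa using hz
  exact continuousAt_const.mul (ContinuousAt.comp (f := fun z => -Complex.I * z) (g := fun x : ℂ => x ^ (c:ℂ)) h1 (by fun_prop))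

lemma sq_sq (z : ℂ) : sq z ^ 2 = z := by
  rw [sq, ← Complex.cpow_nat_mul]
  norm_num

lemma sq_norm (z : ℂ) : ‖sq z‖ ^ 2 = ‖z‖ := by rw [← norm_pow, sq_sq]

lemma sq_ne {z : ℂ} (h : z ≠ 0) : sq z ≠ 0 := by
  intro h0; apply h; rw [← sq_sq z, h0]; ring

lemma sq_re {z : ℂ} (hz : 0 ≤ z.im) : 0 ≤ (sq z).re ∧ 0 ≤ (sq z).im := by
  have hpi := Real.pi_pos
  rcases eq_or_ne z 0 with rfl | h0
  · simp [sq]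
  · have ha : 0 ≤ z.arg := Complex.arg_nonneg_iff.2 hz
    have hb := Complex.arg_le_pi z
    unfold sq; rw [cpow_polar h0]; unfold cis
    rw [Complex.re_ofReal_mul, Complex.im_ofReal_mul, Complex.exp_ofReal_mul_I_re, Complex.exp_ofReal_mul_I_im]
    have hn : 0 ≤ ‖z‖ ^ (1/2:ℝ) := Real.rpow_nonneg (norm_nonneg _) _
    exact ⟨mul_nonneg hn (Real.cos_nonneg_of_mem_Icc ⟨by linarith, by linarith⟩),
      mul_nonneg hn (Real.sin_nonneg_of_nonneg_of_le_pi (by linarith) (by linarith))⟩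

lemma sq_real (x : ℝ) : sq x = (Real.sqrt x : ℂ) + (Real.sqrt (-x) : ℂ) * Complex.I := by
  have h := sq_re (z := (x:ℂ)) (by simp)
  have hs := sq_sq x
  set w := sq x
  have h1 : w.re ^ 2 - w.im ^ 2 = x := by
    have := congrArg Complex.re hs
    simp [pow_two] at this; linarith
  have h2 : w.re * w.im = 0 := by
    have := congrArg Complex.im hs
    simp [pow_two] at this; linarith
  rcases mul_eq_zero.1 h2 with h3 | h3
  · have : x ≤ 0 := by nlinarith
    rw [Real.sqrt_eq_zero_of_nonpos this]
    have : Real.sqrt (-x) = w.im := by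
      rw [show -x = w.im ^ 2 by rw [← h1, h3]; ring]; exact Real.sqrt_sq h.2
    rw [this]; apply Complex.ext <;> simp [h3]
  · have : 0 ≤ x := by nlinarith
    rw [Real.sqrt_eq_zero_of_nonpos (by linarith : -x ≤ 0)]
    have : Real.sqrt (x) = w.re := by
      rw [show x = w.re ^ 2 by rw [← h1, h3]; ring]; exact Real.sqrt_sq h.1
    rw [this]; apply Complex.ext <;> simp [h3]

lemma im_slit {z : ℂ} (h : 0 < z.im) : z ∈ Complex.slitPlane := Or.inr h.ne'

lemma sq_der {z : ℂ} (hz : z ∈ Complex.slitPlane) : HasDerivAt sq (1 / (2 * sq z)) z := by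
  have h0 := slit_ne hz
  refine ((hasDerivAt_id z).cpow_const (c := (((1/2 : ℝ)) : ℂ)) hz).congr_deriv ?_
  have := sq_sq z
  have h2 := sq_ne h0
  simp only [id]
  rw [Complex.cpow_sub _ _ h0, Complex.cpow_one]
  change ((1/2:ℝ):ℂ) * (sq z / z) * 1 = _
  field_simp
  push_cast
  linear_combination this

noncomputable def HR (R : ℝ) (z : ℂ) : ℂ := ∫ t in (0:ℝ)..R, sq (t ^ 3 + z)

lemma im_cube (t : ℝ) (z : ℂ) : ((t:ℂ) ^ 3 + z).im = z.im := by
  rw [← Complex.ofReal_pow, Complex.add_im, Complex.ofReal_im, zero_add]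

lemma sq_contOn : ContinuousOn sq {z | 0 ≤ z.im} := cpow_contOn (by norm_num)

lemma sq_cont_t {z : ℂ} (hz : 0 ≤ z.im) : Continuous (fun t : ℝ => sq (t ^ 3 + z)) :=
  sq_contOn.comp_continuous (by fun_prop) (fun t => by simp only [Set.mem_ofPred_eq]; rw [im_cube]; exact hz)

lemma HR_cont (R : ℝ) : ContinuousOn (HR R) {z | 0 ≤ z.im} := by
  have h1 : Continuous (fun z : ℂ => (z.re : ℂ) + (max z.im 0 : ℝ) * Complex.I) := by fun_prop
  have h2 : Continuous (Function.uncurry fun (z : ℂ) (t : ℝ) => sq (t ^ 3 + ((z.re : ℂ) + (max z.im 0 : ℝ) * Complex.I))) := by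
    refine sq_contOn.comp_continuous (by fun_prop) ?_
    rintro ⟨z, t⟩
    simp only [Set.mem_ofPred_eq]; rw [im_cube]; simp
  have h3 := intervalIntegral.continuous_parametric_intervalIntegral_of_continuous' (μ := volume) h2 0 R
  refine h3.continuousOn.congr ?_
  intro z hz
  simp only [Set.mem_ofPred_eq] at hz
  simp only [HR, max_eq_left hz, Complex.re_add_im]

lemma HR_der (R : ℝ) {z : ℂ} (hz : 0 < z.im) :
    HasDerivAt (HR R) (∫ t in (0:ℝ)..R, 1 / (2 * sq (t ^ 3 + z))) z := by
  have hnear : {w : ℂ | z.im / 2 < w.im} ∈ nhds z :=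
    (isOpen_lt continuous_const Complex.continuous_im).mem_nhds (by simp only [Set.mem_ofPred_eq]; linarith)
  have hcont : ∀ w : ℂ, 0 < w.im → Continuous (fun t : ℝ => sq (t ^ 3 + w)) := fun w hw => sq_cont_t hw.le
  have hne : ∀ (w : ℂ) (t : ℝ), 0 < w.im → sq (t ^ 3 + w) ≠ 0 := fun w t hw => sq_ne (fun h0 => by
    have := im_cube t w; rw [h0] at this; simp at this; linarith)
  refine (intervalIntegral.hasDerivAt_integral_of_dominated_loc_of_deriv_le (𝕜 := ℂ) (μ := volume)
    (F := fun w t => sq (t ^ 3 + w)) (F' := fun w t => 1 / (2 * sq (t ^ 3 + w)))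
    (bound := fun _ => 1 / (2 * Real.sqrt (z.im / 2))) hnear ?_ ?_ ?_ ?_ ?_ ?_).2
  · filter_upwards [hnear] with w hw
    exact (hcont w (by have : z.im / 2 < w.im := hw; linarith)).aestronglyMeasurable
  · exact (hcont z hz).intervalIntegrable _ _
  · exact (continuous_const.div (continuous_const.mul (hcont z hz))
      (fun t => mul_ne_zero two_ne_zero (hne z t hz))).aestronglyMeasurable
  · refine Eventually.of_forall fun t _ w hw => ?_
    have hw : z.im / 2 < w.im := hw
    rw [norm_div, norm_mul, norm_one, Complex.norm_ofNat]
    have : 0 < Real.sqrt (z.im / 2) := Real.sqrt_pos.2 (by linarith)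
    gcongr
    apply Real.sqrt_le_iff.2 ⟨norm_nonneg _, ?_⟩
    rw [sq_norm]
    have := Complex.abs_im_le_norm ((t:ℂ) ^ 3 + w)
    rw [im_cube] at this
    linarith [le_abs_self w.im]
  · exact intervalIntegrable_const
  · refine Eventually.of_forall fun t _ w hw => ?_
    have hw : z.im / 2 < w.im := hw
    have d := sq_der (z := (t:ℂ) ^ 3 + w) (im_slit (by rw [im_cube]; linarith))
    have := HasDerivAt.comp w d ((hasDerivAt_id w).const_add ((t:ℂ) ^ 3))
    exact this.congr_deriv (by ring)

lemma HR_id (R : ℝ) {z : ℂ} (hz : 0 < z.im) :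
    (5/2) * HR R z = R * sq (R ^ 3 + z) + 3 * z * ∫ t in (0:ℝ)..R, 1 / (2 * sq (t ^ 3 + z)) := by
  have hne : ∀ t : ℝ, sq (t ^ 3 + z) ≠ 0 := fun t => sq_ne (fun h0 => by
    have := im_cube t z; rw [h0] at this; simp at this; linarith)
  have hc := sq_cont_t hz.le
  have hc2 : Continuous (fun t : ℝ => 1 / (2 * sq (t ^ 3 + z))) := continuous_const.div (continuous_const.mul hc)
      (fun t => mul_ne_zero two_ne_zero (hne t))
  have hd : ∀ t ∈ Set.uIcc 0 R, HasDerivAt (fun t : ℝ => (t:ℂ) * sq (t ^ 3 + z))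
      ((5/2) * sq (t ^ 3 + z) - 3 * z * (1 / (2 * sq (t ^ 3 + z)))) t := by
    intro t _
    have d := sq_der (z := (t:ℂ) ^ 3 + z) (im_slit (by rw [im_cube]; linarith))
    have d0 : HasDerivAt (fun t : ℂ => t ^ 3 + z) (3 * (t:ℂ) ^ 2) t := by
      simpa using (hasDerivAt_pow 3 (t:ℂ)).add_const z
    have d1 := HasDerivAt.comp (t:ℂ) d d0
    have d2 := ((hasDerivAt_id (t:ℂ)).mul d1).comp_ofReal
    refine d2.congr_deriv ?_
    have h1 := sq_sq ((t:ℂ) ^ 3 + z)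
    have h2 := hne t
    simp only [Function.comp, id]
    generalize sq ((t:ℂ) ^ 3 + z) = w at *
    field_simp
    linear_combination (-3) * h1
  have := intervalIntegral.integral_eq_sub_of_hasDerivAt hd
    (((continuous_const.mul hc).sub (continuous_const.mul hc2)).intervalIntegrable _ _)
  rw [intervalIntegral.integral_sub ((hc.const_mul _).intervalIntegrable _ _)
    ((hc2.const_mul _).intervalIntegrable _ _), intervalIntegral.integral_const_mul,
    intervalIntegral.integral_const_mul] at this
  unfold HR
  simp only [Complex.ofReal_zero, zero_mul, sub_zero] at this
  linear_combination this

end ICO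

namespace ICO

noncomputable def FR (R lam θ : ℝ) : ℂ := cis (-(5/6 * θ)) * (HR R (lam * cis θ) - ((2/5 * (R * R ^ (3/2:ℝ)) : ℝ) : ℂ))

lemma cis_der (a x : ℝ) : HasDerivAt (fun θ : ℝ => cis (a * θ)) (a * Complex.I * cis (a * x)) x := by
  have h1 : HasDerivAt (fun t : ℝ => (a * t : ℝ)) a x := by simpa using (hasDerivAt_id x).const_mul a
  have := ((h1.ofReal_comp.mul_const Complex.I).cexp)
  exact this.congr_deriv (by unfold cis; ring)

lemma cis_im (x : ℝ) : (cis x).im = Real.sin x := Complex.exp_ofReal_mul_I_im x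
lemma cis_re (x : ℝ) : (cis x).re = Real.cos x := Complex.exp_ofReal_mul_I_re x

lemma FR_der {R lam θ : ℝ} (hl : 0 < lam) (h0 : 0 < θ) (h1 : θ < Real.pi) :
    HasDerivAt (FR R lam) (-(Complex.I / 3) * cis (-(5/6 * θ)) *
      (R * sq (R ^ 3 + lam * cis θ) - ((R * R ^ (3/2:ℝ) : ℝ) : ℂ))) θ := by
  have him : 0 < ((lam:ℂ) * cis θ).im := by
    rw [Complex.im_ofReal_mul, cis_im]; exact mul_pos hl (Real.sin_pos_of_pos_of_lt_pi h0 h1)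
  have d1 : HasDerivAt (fun θ : ℝ => (lam:ℂ) * cis θ) (lam * (Complex.I * cis θ)) θ := by
    have := (cis_der 1 θ).const_mul (lam:ℂ)
    simpa using this
  have d2 := HasDerivAt.scomp θ (HR_der R him) d1
  have d3 : HasDerivAt (fun θ : ℝ => cis (-(5/6 * θ))) (-(5/6) * Complex.I * cis (-(5/6 * θ))) θ := by
    have := cis_der (-(5/6)) θ
    simp only [neg_mul] at this
    exact this.congr_deriv (by push_cast; ring)
  have d4 := d3.mul (d2.sub_const (((2/5 * (R * R ^ (3/2:ℝ)) : ℝ) : ℂ)))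
  refine d4.congr_deriv ?_
  have hid := HR_id R him
  simp only [Function.comp, smul_eq_mul]
  push_cast
  linear_combination (-(1/3) * Complex.I * cis (-(5/6 * θ))) * hid

lemma sq_diff {x : ℝ} (hx : 0 < x) {z : ℂ} (hz : 0 ≤ z.im) :
    ‖sq (x ^ 3 + z) - ((x ^ (3/2:ℝ) : ℝ) : ℂ)‖ ≤ ‖z‖ / x ^ (3/2:ℝ) := by
  have hp : 0 < x ^ (3/2:ℝ) := Real.rpow_pos_of_pos hx _
  have hre := (sq_re (z := (x:ℂ) ^ 3 + z) (by rw [im_cube]; exact hz)).1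
  have hs := sq_sq ((x:ℂ) ^ 3 + z)
  have e2 : (((x ^ (3/2:ℝ) : ℝ) : ℂ)) ^ 2 = x ^ 3 := by
    rw [← Complex.ofReal_pow, ← Complex.ofReal_pow]; congr 1
    rw [← Real.rpow_natCast, ← Real.rpow_mul hx.le, ← Real.rpow_natCast]; norm_num
  rw [le_div_iff₀ hp]
  set w := sq ((x:ℂ) ^ 3 + z)
  set q := x ^ (3/2:ℝ)
  have : z = (w - q) * (w + q) := by linear_combination -hs + e2
  rw [this, norm_mul]
  gcongr
  calc q ≤ (w + q).re := by simp; exact hre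
    _ ≤ _ := Complex.re_le_norm _

lemma FR_bound {R lam : ℝ} (hR : 0 < R) (hl : 0 < lam) {θ1 θ2 : ℝ} (h1 : θ1 ∈ Set.Icc 0 Real.pi) (h2 : θ2 ∈ Set.Icc 0 Real.pi) :
    ‖FR R lam θ1 - FR R lam θ2‖ ≤ lam * R ^ (-(1/2):ℝ) / 3 * 4 := by
  have hpi := Real.pi_pos
  have hC : 0 ≤ lam * R ^ (-(1/2):ℝ) / 3 := by
    have := Real.rpow_nonneg hR.le (-(1/2)); positivity
  have hcont : ContinuousOn (FR R lam) (Set.Icc 0 Real.pi) := by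
    have hc : Continuous cis := by unfold cis; fun_prop
    unfold FR
    refine ContinuousOn.mul (by fun_prop) (ContinuousOn.sub ?_ continuousOn_const)
    refine (HR_cont R).comp (by fun_prop) ?_
    intro θ hθ
    change 0 ≤ ((lam:ℂ) * cis θ).im
    rw [Complex.im_ofReal_mul, cis_im]; exact mul_nonneg hl.le (Real.sin_nonneg_of_nonneg_of_le_pi hθ.1 hθ.2)
  have hL : LipschitzOnWith (Real.toNNReal (lam * R ^ (-(1/2):ℝ) / 3)) (FR R lam) (Set.Ioo 0 Real.pi) := by
    refine (convex_Ioo _ _).lipschitzOnWith_of_nnnorm_hasDerivWithin_le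
      (fun θ hθ => (FR_der hl hθ.1 hθ.2).hasDerivWithinAt) ?_
    intro θ hθ
    rw [← NNReal.coe_le_coe, coe_nnnorm, Real.coe_toNNReal _ hC]
    rw [norm_mul, norm_mul, cis_norm, norm_neg, norm_div, Complex.norm_I, Complex.norm_ofNat]
    have him : 0 ≤ ((lam:ℂ) * cis θ).im := by
      rw [Complex.im_ofReal_mul, cis_im]; exact mul_nonneg hl.le (Real.sin_nonneg_of_nonneg_of_le_pi hθ.1.le hθ.2.le)
    have b := sq_diff hR him
    rw [norm_mul, cis_norm, Complex.norm_real, Real.norm_of_nonneg hl.le, mul_one] at b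
    have e : (R:ℂ) * sq (R ^ 3 + lam * cis θ) - ((R * R ^ (3/2:ℝ) : ℝ) : ℂ)
      = R * (sq (R ^ 3 + lam * cis θ) - ((R ^ (3/2:ℝ) : ℝ) : ℂ)) := by push_cast; ring
    rw [e, norm_mul, Complex.norm_real, Real.norm_of_nonneg hR.le]
    have e2 : R * (lam / R ^ (3/2:ℝ)) = lam * R ^ (-(1/2):ℝ) := by
      have : R ^ (-(1/2):ℝ) = R ^ (-(3/2):ℝ) * R := by rw [← Real.rpow_add_one hR.ne']; norm_num
      rw [this, Real.rpow_neg hR.le]; ring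
    have := mul_le_mul_of_nonneg_left b hR.le
    rw [e2] at this
    linarith
  have hL2 := LipschitzOnWith.closure (by rw [closure_Ioo hpi.ne]; exact hcont) hL
  rw [closure_Ioo hpi.ne] at hL2
  have := hL2.dist_le_mul θ1 h1 θ2 h2
  rw [dist_eq_norm, dist_eq_norm, Real.coe_toNNReal _ hC] at this
  refine this.trans ?_
  gcongr
  rw [Real.norm_eq_abs, abs_le]
  constructor <;> linarith [h1.1, h1.2, h2.1, h2.2, Real.pi_le_four]

lemma FR_zero (R lam : ℝ) (hR : 0 < R) (hl : 0 < lam) : (FR R lam 0).im = 0 := by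
  unfold FR HR
  rw [mul_zero, neg_zero, cis_zero, one_mul, mul_one]
  have : ∀ t ∈ Set.uIcc 0 R, sq ((t:ℂ) ^ 3 + lam) = ((Real.sqrt (t ^ 3 + lam) : ℝ) : ℂ) := by
    intro t ht
    rw [Set.uIcc_of_le hR.le] at ht
    have h0 := ht.1
    rw [← Complex.ofReal_pow, ← Complex.ofReal_add, sq_real, Real.sqrt_eq_zero_of_nonpos (x := -(t ^ 3 + lam))]
    · simp
    · have : 0 ≤ t ^ 3 := by positivity
      linarith
  rw [intervalIntegral.integral_congr this, intervalIntegral.integral_ofReal]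
  rw [← Complex.ofReal_sub, Complex.ofReal_im]

lemma K_int {R lam : ℝ} (hl : 0 < lam) (hR : lam ^ (1/3:ℝ) ≤ R) :
    ∫ t in (0:ℝ)..R, Real.sqrt (lam - t ^ 3) = lam ^ (5/6:ℝ) * Kconst / 2 := by
  set c := lam ^ (1/3:ℝ) with hc
  have hc0 : 0 < c := Real.rpow_pos_of_pos hl _
  have hc3 : c ^ 3 = lam := by rw [hc, ← Real.rpow_natCast, ← Real.rpow_mul hl.le]; norm_num
  have hcont : Continuous (fun t : ℝ => Real.sqrt (lam - t ^ 3)) := by fun_prop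
  rw [← intervalIntegral.integral_add_adjacent_intervals (b := c) (hcont.intervalIntegrable _ _) (hcont.intervalIntegrable _ _)]
  have z : ∫ t in c..R, Real.sqrt (lam - t ^ 3) = 0 := by
    rw [← intervalIntegral.integral_zero (a := c) (b := R) (μ := volume)]
    apply intervalIntegral.integral_congr
    intro t ht
    rw [Set.uIcc_of_le hR] at ht
    simp only
    apply Real.sqrt_eq_zero_of_nonpos
    have : c ^ 3 ≤ t ^ 3 := by gcongr; exact ht.1
    linarith
  rw [z, add_zero]
  have s := intervalIntegral.smul_integral_comp_mul_left (a := 0) (b := 1) (fun t : ℝ => Real.sqrt (lam - t ^ 3)) c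
  rw [mul_zero, mul_one] at s
  rw [← s]
  have : ∀ u : ℝ, Real.sqrt (lam - (c * u) ^ 3) = Real.sqrt lam * Real.sqrt (1 - u ^ 3) := by
    intro u
    rw [← Real.sqrt_mul hl.le]; congr 1; rw [mul_pow, hc3]; ring
  simp only [this]
  rw [intervalIntegral.integral_const_mul, smul_eq_mul, Kconst]
  have : lam ^ (5/6:ℝ) = c * Real.sqrt lam := by
    rw [hc, Real.sqrt_eq_rpow, ← Real.rpow_add hl]; norm_num
  rw [this]; ring

lemma FR_pi {R lam : ℝ} (hl : 0 < lam) (hR : lam ^ (1/3:ℝ) ≤ R) :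
    (cis (5/6 * Real.pi) * FR R lam Real.pi).im = lam ^ (5/6:ℝ) * Kconst / 2 := by
  unfold FR
  rw [← mul_assoc, ← cis_add, add_neg_cancel, cis_zero, one_mul, Complex.sub_im, Complex.ofReal_im, sub_zero, cis_pi]
  unfold HR
  have hc := sq_cont_t (z := (lam:ℂ) * -1) (by simp)
  have := Complex.imCLM.intervalIntegral_comp_comm (hc.intervalIntegrable (μ := volume) 0 R)
  simp only [Complex.imCLM_apply] at this
  rw [← this, ← K_int hl hR]
  apply intervalIntegral.integral_congr
  intro t _
  simp only
  rw [show (t:ℂ) ^ 3 + (lam:ℂ) * -1 = ((t ^ 3 - lam : ℝ) : ℂ) by push_cast; ring, sq_real]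
  simp

lemma FR_lim {lam : ℝ} (hl : 0 < lam) {θ : ℝ} (hθ : θ ∈ Set.Icc 0 Real.pi) :
    Tendsto (fun R => FR R lam θ) atTop (nhds ((Kconst * lam ^ (5/6:ℝ) : ℝ) : ℂ)) := by
  have hpi := Real.pi_pos
  rw [tendsto_iff_norm_sub_tendsto_zero]
  have hlim : Tendsto (fun R : ℝ => 3 * (lam * R ^ (-(1/2):ℝ) / 3 * 4)) atTop (nhds 0) := by
    have := (((((tendsto_rpow_neg_atTop (y := (1/2:ℝ)) (by norm_num)).const_mul lam).div_const 3).mul_const 4).const_mul 3)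
    simpa using this
  refine squeeze_zero' (Eventually.of_forall fun _ => norm_nonneg _) ?_ hlim
  filter_upwards [eventually_gt_atTop 0, eventually_ge_atTop (lam ^ (1/3:ℝ))] with R hR hR2
  have b1 := FR_bound hR hl hθ (Set.left_mem_Icc.2 hpi.le)
  have b2 := FR_bound hR hl (Set.left_mem_Icc.2 hpi.le) (Set.right_mem_Icc.2 hpi.le)
  set B := lam * R ^ (-(1/2):ℝ) / 3 * 4
  have hz := FR_zero R lam hR hl
  have hp := FR_pi hl hR2
  set x := (FR R lam 0).re
  have hx : FR R lam 0 = x := by apply Complex.ext <;> simp [x, hz]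
  have e3 : (cis (5/6 * Real.pi) * (FR R lam 0 - FR R lam Real.pi)).im = x / 2 - lam ^ (5/6:ℝ) * Kconst / 2 := by
    rw [mul_sub, Complex.sub_im, hp, hx, mul_comm, Complex.im_ofReal_mul, cis_im,
      show 5/6 * Real.pi = Real.pi - Real.pi / 6 by ring, Real.sin_pi_sub, Real.sin_pi_div_six]
    ring
  have b3 : |x / 2 - lam ^ (5/6:ℝ) * Kconst / 2| ≤ B := by
    rw [← e3]
    refine (Complex.abs_im_le_norm _).trans ?_
    rw [norm_mul, cis_norm, one_mul]; exact b2
  have b4 : ‖((x - Kconst * lam ^ (5/6:ℝ) : ℝ):ℂ)‖ ≤ 2 * B := by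
    rw [Complex.norm_real, Real.norm_eq_abs]
    rw [abs_le] at b3 ⊢
    constructor <;> linarith [b3.1, b3.2]
  have e4 : FR R lam θ - ((Kconst * lam ^ (5/6:ℝ) : ℝ) : ℂ) = (FR R lam θ - FR R lam 0) + ((x - Kconst * lam ^ (5/6:ℝ) : ℝ):ℂ) := by
    rw [hx]; push_cast; ring
  rw [e4]
  linarith [norm_add_le (FR R lam θ - FR R lam 0) ((x - Kconst * lam ^ (5/6:ℝ) : ℝ):ℂ)]

/-- The main phase integral. -/
lemma HR_lim {lam : ℝ} (hl : 0 < lam) :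
    Tendsto (fun R : ℝ => HR R (lam * cis (4 * Real.pi / 5)) - ((2/5 * (R * R ^ (3/2:ℝ)) : ℝ) : ℂ)) atTop
      (nhds (cis (2 * Real.pi / 3) * ((Kconst * lam ^ (5/6:ℝ) : ℝ) : ℂ))) := by
  have hpi := Real.pi_pos
  have := (FR_lim hl (θ := 4 * Real.pi / 5) ⟨by positivity, by linarith⟩).const_mul (cis (2 * Real.pi / 3))
  refine this.congr fun R => ?_
  unfold FR
  rw [← mul_assoc, ← cis_add, show 2 * Real.pi / 3 + -(5/6 * (4 * Real.pi / 5)) = 0 by ring, cis_zero, one_mul]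

end ICO

namespace ICO

noncomputable def Qs (μ : ℂ) (s : ℝ) : ℂ := (s:ℂ) ^ 3 + μ
noncomputable def Ps (μ : ℂ) (s : ℝ) : ℂ := sq ((s:ℂ) ^ 3 + μ)
noncomputable def Gs (μ : ℂ) (s : ℝ) : ℂ := 3 * (s:ℂ) ^ 2 / (4 * ((s:ℂ) ^ 3 + μ))
noncomputable def G1s (μ : ℂ) (s : ℝ) : ℂ := 3 * (s:ℂ) / (2 * ((s:ℂ) ^ 3 + μ)) - 9 * (s:ℂ) ^ 4 / (4 * ((s:ℂ) ^ 3 + μ) ^ 2)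
noncomputable def Φs (μ : ℂ) (s : ℝ) : ℂ := ((s:ℂ) ^ 3 + μ) ^ (((-1/4:ℝ)):ℂ) * Complex.exp (-HR s μ)

lemma Q_slit {μ : ℂ} (hμ : 0 < μ.im) (s : ℝ) : (s:ℂ) ^ 3 + μ ∈ Complex.slitPlane :=
  im_slit (by rw [im_cube]; exact hμ)

lemma Q_der (μ : ℂ) (s : ℝ) : HasDerivAt (fun s : ℝ => (s:ℂ) ^ 3 + μ) (3 * (s:ℂ) ^ 2) s := by
  have := (((hasDerivAt_id s).ofReal_comp).pow 3).add_const μ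
  exact this.congr_deriv (by simp)

lemma Ps_der {μ : ℂ} (hμ : 0 < μ.im) (s : ℝ) : HasDerivAt (Ps μ) (2 * Ps μ s * Gs μ s) s := by
  have hs := Q_slit hμ s
  have h0 := slit_ne hs
  have := HasDerivAt.scomp s (sq_der hs) (Q_der μ s)
  refine this.congr_deriv ?_
  have hn := sq_ne h0
  have h2 := sq_sq ((s:ℂ) ^ 3 + μ)
  simp only [smul_eq_mul, Ps, Gs]
  field_simp
  linear_combination (-4 * (s:ℂ) ^ 2) * h2

lemma Gs_der {μ : ℂ} (hμ : 0 < μ.im) (s : ℝ) : HasDerivAt (Gs μ) (G1s μ s) s := by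
  have hs := Q_slit hμ s
  have h0 := slit_ne hs
  have d1 : HasDerivAt (fun s : ℝ => 3 * (s:ℂ) ^ 2) (6 * (s:ℂ)) s := by
    have := (((hasDerivAt_id s).ofReal_comp).pow 2).const_mul (3:ℂ)
    exact this.congr_deriv (by simp; ring)
  have := d1.div ((Q_der μ s).const_mul (4:ℂ)) (mul_ne_zero (by norm_num) h0)
  refine this.congr_deriv ?_
  unfold G1s
  field_simp
  ring

lemma HR_der_R {μ : ℂ} (hμ : 0 < μ.im) (s : ℝ) : HasDerivAt (fun s : ℝ => HR s μ) (Ps μ s) s := by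
  have hc := sq_cont_t hμ.le
  exact intervalIntegral.integral_hasDerivAt_right (hc.intervalIntegrable _ _)
    (hc.stronglyMeasurableAtFilter _ _) hc.continuousAt

lemma Φs_der {μ : ℂ} (hμ : 0 < μ.im) (s : ℝ) : HasDerivAt (Φs μ) (-((Ps μ s + Gs μ s) * Φs μ s)) s := by
  have hs := Q_slit hμ s
  have h0 := slit_ne hs
  have d1 := HasDerivAt.scomp s ((hasDerivAt_id ((s:ℂ) ^ 3 + μ)).cpow_const (c := (((-1/4:ℝ)):ℂ)) hs) (Q_der μ s)
  have d2 := (HR_der_R hμ s).neg.cexp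
  refine (d1.mul d2).congr_deriv ?_
  simp only [smul_eq_mul, Function.comp, id, Φs, Gs, Pi.neg_apply]
  rw [Complex.cpow_sub _ _ h0, Complex.cpow_one]
  field_simp
  push_cast; ring

lemma Φs_ne {μ : ℂ} (hμ : 0 < μ.im) (s : ℝ) : Φs μ s ≠ 0 := by
  simp [Φs, Complex.cpow_eq_zero_iff, slit_ne (Q_slit hμ s)]

lemma Ps_ne {μ : ℂ} (hμ : 0 < μ.im) (s : ℝ) : Ps μ s ≠ 0 := sq_ne (slit_ne (Q_slit hμ s))

lemma scale {μ : ℂ} (hμ : 0 < μ.im) {s : ℝ} (hs : 0 < s) (c : ℝ) :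
    ((s:ℂ) ^ 3 + μ) ^ (c:ℂ) = ((s ^ (3 * c) : ℝ) : ℂ) * (1 + μ / (s:ℂ) ^ 3) ^ (c:ℂ) := by
  have h0 := slit_ne (Q_slit hμ s)
  have hsc : (s:ℂ) ≠ 0 := by exact_mod_cast hs.ne'
  have e : (s:ℂ) ^ 3 + μ = ((s ^ 3 : ℝ) : ℂ) * (1 + μ / (s:ℂ) ^ 3) := by push_cast; field_simp
  have h1 : 1 + μ / (s:ℂ) ^ 3 ≠ 0 := by intro h; rw [h, mul_zero] at e; exact h0 e
  rw [e, Complex.cpow_def_of_ne_zero (by rw [← e]; exact h0), Complex.cpow_def_of_ne_zero h1,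
    Complex.log_ofReal_mul (by positivity) h1, add_mul, Complex.exp_add]
  congr 1
  rw [Real.rpow_mul hs.le, Real.rpow_def_of_pos (by positivity)]
  push_cast
  congr 3
  norm_cast

lemma u_lim (μ : ℂ) (c : ℝ) : Tendsto (fun s : ℝ => (1 + μ / (s:ℂ) ^ 3) ^ (c:ℂ)) atTop (nhds 1) := by
  have h1 : Tendsto (fun s : ℝ => ((s ^ 3)⁻¹ : ℝ)) atTop (nhds 0) :=
    tendsto_inv_atTop_zero.comp (tendsto_pow_atTop (by norm_num))
  have h2 : Tendsto (fun s : ℝ => 1 + μ / (s:ℂ) ^ 3) atTop (nhds 1) := by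
    have := ((Complex.continuous_ofReal.tendsto 0).comp h1).const_mul μ |>.const_add 1
    simp only [Complex.ofReal_zero, mul_zero, add_zero] at this
    refine this.congr fun s => ?_
    simp [div_eq_mul_inv]
  have h3 : ContinuousAt (fun z : ℂ => z ^ (c:ℂ)) 1 := continuousAt_cpow_const Complex.one_mem_slitPlane
  have := h3.tendsto.comp h2
  rw [Complex.one_cpow] at this
  exact this

lemma ray_zero (r : ℝ) : ray 0 r = r := by simp [ray]

lemma ratio_lim {lam : ℝ} (hl : 0 < lam) {μ : ℂ} (hμ0 : μ = lam * cis (4 * Real.pi / 5)) (hμ : 0 < μ.im) :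
    Tendsto (fun s : ℝ => φ0 s / Φs μ s) atTop
      (nhds (Complex.exp (cis (2 * Real.pi / 3) * ((Kconst * lam ^ (5/6:ℝ) : ℝ) : ℂ)))) := by
  have h1 := (Complex.continuous_exp.tendsto _).comp (HR_lim hl)
  rw [← hμ0] at h1
  have h2 := ((u_lim μ (-1/4)).inv₀ one_ne_zero).mul h1
  rw [inv_one, one_mul] at h2
  refine h2.congr' ?_
  filter_upwards [eventually_gt_atTop 0] with s hs
  have hu := scale hμ hs (-1/4)
  unfold φ0 Φs
  rw [hu, ← p0_mul (real_slit hs), p0, ← Complex.ofReal_cpow hs.le, ← Complex.ofReal_cpow hs.le,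
    show (3 * (-1/4) : ℝ) = -3/4 by norm_num]
  have hp : ((s ^ (-3/4:ℝ) : ℝ) : ℂ) ≠ 0 := by exact_mod_cast (Real.rpow_pos_of_pos hs _).ne'
  have hq : (1 + μ / (s:ℂ) ^ 3) ^ (((-1/4:ℝ)):ℂ) ≠ 0 := by
    intro h
    rw [h, mul_zero] at hu
    simp [Complex.cpow_eq_zero_iff, slit_ne (Q_slit hμ s)] at hu
  simp only [Function.comp]
  rw [Complex.exp_sub, Complex.exp_neg, Complex.exp_neg]
  generalize (1 + μ / (s:ℂ) ^ 3) ^ (((-1/4:ℝ)):ℂ) = U at *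
  generalize ((s ^ (-3/4:ℝ) : ℝ) : ℂ) = V at *
  have e : ((2/5 * (s * s ^ (3/2:ℝ)) : ℝ) : ℂ) = 2/5 * (((s ^ (3/2:ℝ) : ℝ):ℂ) * s) := by push_cast; ring
  rw [e]
  have e1 := Complex.exp_ne_zero (HR s μ)
  have e2 := Complex.exp_ne_zero (2/5 * (((s ^ (3/2:ℝ) : ℝ):ℂ) * s))
  field_simp

lemma pP_lim {μ : ℂ} (hμ : 0 < μ.im) : Tendsto (fun s : ℝ => p0 s / Ps μ s) atTop (nhds 1) := by
  have h2 := ((u_lim μ (1/2)).inv₀ one_ne_zero)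
  rw [inv_one] at h2
  refine h2.congr' ?_
  filter_upwards [eventually_gt_atTop 0] with s hs
  have hu := scale hμ hs (1/2)
  unfold p0 Ps sq
  rw [hu, ← Complex.ofReal_cpow hs.le, show (3 * (1/2) : ℝ) = 3/2 by norm_num]
  have hp : ((s ^ (3/2:ℝ) : ℝ) : ℂ) ≠ 0 := by exact_mod_cast (Real.rpow_pos_of_pos hs _).ne'
  generalize ((s ^ (3/2:ℝ) : ℝ) : ℂ) = V at *
  rw [div_mul_eq_div_div, div_self hp, one_div, one_div]

lemma invp_lim : Tendsto (fun s : ℝ => (p0 s)⁻¹) atTop (nhds 0) := by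
  have h := (Complex.continuous_ofReal.tendsto 0).comp (tendsto_rpow_neg_atTop (y := (3/2:ℝ)) (by norm_num))
  rw [Complex.ofReal_zero] at h
  refine h.congr' ?_
  filter_upwards [eventually_gt_atTop 0] with s hs
  simp only [Function.comp]
  rw [p0, ← Complex.ofReal_cpow hs.le, Real.rpow_neg hs.le, Complex.ofReal_inv]

lemma invs_lim : Tendsto (fun s : ℝ => ((s:ℂ))⁻¹) atTop (nhds 0) := by
  have h := (Complex.continuous_ofReal.tendsto 0).comp tendsto_inv_atTop_zero
  rw [Complex.ofReal_zero] at h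
  refine h.congr fun s => ?_
  simp

lemma Gg_lim {μ : ℂ} (hμ : 0 < μ.im) : Tendsto (fun s : ℝ => Gs μ s - g0 s) atTop (nhds 0) := by
  have h1 := ((u_lim μ (-1)).sub_const 1).mul (invs_lim.const_mul (3/4))
  rw [mul_zero, mul_zero] at h1
  refine h1.congr' ?_
  filter_upwards [eventually_gt_atTop 0] with s hs
  have h0 := slit_ne (Q_slit hμ s)
  have hsc : (s:ℂ) ≠ 0 := by exact_mod_cast hs.ne'
  unfold Gs g0
  rw [show (((-1:ℝ)):ℂ) = -1 by push_cast; ring, Complex.cpow_neg_one]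
  have e : 1 + μ / (s:ℂ) ^ 3 = ((s:ℂ) ^ 3 + μ) / (s:ℂ) ^ 3 := by field_simp
  rw [e]
  field_simp

lemma match_lim {lam : ℝ} (hl : 0 < lam) {μ : ℂ} (hμ0 : μ = lam * cis (4 * Real.pi / 5)) (hμ : 0 < μ.im) (c : ℂ)
    (hc : c = cis (2 * Real.pi / 3) * ((Kconst * lam ^ (5/6:ℝ) : ℝ) : ℂ)) :
    Tendsto (fun s : ℝ => ‖aF (Yf μ s) (Yf1 μ s) (Ps μ s) (Gs μ s) (Φs μ s)‖ ^ 2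
      + ‖bF (Yf μ s) (Yf1 μ s) (Ps μ s) (Gs μ s) (Φs μ s) - Complex.exp c‖ ^ 2) atTop (nhds 0) := by
  have hpi := Real.pi_pos
  have hW := ray_W (Y_rec μ) (η := 0) (by rw [abs_zero]; positivity)
  have hZ := ray_Z (Y_rec μ) (η := 0) (by rw [abs_zero]; positivity)
  simp only [ray_zero] at hW hZ
  have hr := ratio_lim hl hμ0 hμ
  rw [← hc] at hr
  have hp := pP_lim hμ
  have hg := (Gg_lim hμ).mul (invp_lim.mul hp)
  have h1 := hW.mul hr
  have h2 := ((hZ.mul hp).add (hg.mul hW)).mul hr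
  simp only [mul_one, zero_mul, one_mul, add_zero, neg_mul] at h1 h2
  have ha := (h1.add h2).div_const 2
  have hb := ((h1.sub h2).div_const 2).sub_const (Complex.exp c)
  have hn := (ha.norm.pow 2).add (hb.norm.pow 2)
  have e0 : ‖(Complex.exp c + -Complex.exp c) / 2‖ ^ 2 + ‖(Complex.exp c - -Complex.exp c) / 2 - Complex.exp c‖ ^ 2 = 0 := by
    rw [show (Complex.exp c - -Complex.exp c) / 2 - Complex.exp c = 0 by ring]; simp
  rw [e0] at hn
  refine hn.congr' ?_
  filter_upwards [eventually_gt_atTop 0] with s hs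
  have hsl := real_slit hs
  have n1 := φ0_ne hsl
  have n2 := p0_ne hsl
  have n3 := Φs_ne hμ s
  have n4 := Ps_ne hμ s
  have eY := f_eq (Yf μ) hsl
  have eY1 := f1_eq (Yf μ) (Yf1 μ) hsl
  have q1 : Yf μ s / Φs μ s = Wr (Yf μ) s * (φ0 s / Φs μ s) := by
    rw [eY]; unfold Wr; field_simp
  have q2 : (Yf1 μ s + Gs μ s * Yf μ s) / (Ps μ s * Φs μ s) =
      (Zr (Yf μ) (Yf1 μ) s * (p0 s / Ps μ s) + (Gs μ s - g0 s) * ((p0 s)⁻¹ * (p0 s / Ps μ s)) * Wr (Yf μ) s) * (φ0 s / Φs μ s) := by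
    generalize Wr (Yf μ) s = W at *
    generalize Zr (Yf μ) (Yf1 μ) s = Z at *
    rw [eY, eY1]
    field_simp
    ring
  unfold aF bF
  rw [q1, q2]

lemma cos45 : -(7/8) ≤ Real.cos (4 * Real.pi / 5) := by
  rw [show 4 * Real.pi / 5 = Real.pi - Real.pi / 5 by ring, Real.cos_pi_sub, Real.cos_pi_div_five]
  have : Real.sqrt 5 ≤ 5/2 := by rw [Real.sqrt_le_left (by norm_num)]; norm_num
  linarith

lemma Q_lower {lam : ℝ} (hl : 0 < lam) {s : ℝ} (hs : 0 ≤ s) :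
    (s ^ 3 + lam) / 4 ≤ ‖(s:ℂ) ^ 3 + lam * cis (4 * Real.pi / 5)‖ := by
  have hx : 0 ≤ s ^ 3 := by positivity
  rw [← abs_of_nonneg (a := (s ^ 3 + lam) / 4) (by positivity), ← abs_of_nonneg (norm_nonneg ((s:ℂ) ^ 3 + _)), ← sq_le_sq]
  rw [← Complex.normSq_eq_norm_sq, Complex.normSq_apply, ← Complex.ofReal_pow]
  simp only [Complex.add_re, Complex.add_im, Complex.re_ofReal_mul, Complex.im_ofReal_mul, Complex.ofReal_re, Complex.ofReal_im, cis_im, cis_re]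
  have hc := cos45
  have h1 := Real.sin_sq_add_cos_sq (4 * Real.pi / 5)
  set C := Real.cos (4 * Real.pi / 5)
  set S := Real.sin (4 * Real.pi / 5)
  set x := s ^ 3
  have e : (x + lam * C) * (x + lam * C) + (0 + lam * S) * (0 + lam * S) = x ^ 2 + 2 * x * lam * C + lam ^ 2 := by
    linear_combination lam ^ 2 * h1
  rw [e]
  have h3 : x * lam * (-(7/8)) ≤ x * lam * C := mul_le_mul_of_nonneg_left hc (by positivity)
  nlinarith [sq_nonneg (x - lam)]

lemma kap {lam : ℝ} (hl : 1 ≤ lam) {s : ℝ} (hs : 0 ≤ s) {μ : ℂ} (hμ0 : μ = lam * cis (4 * Real.pi / 5)) :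
    ‖(((s:ℂ) ^ 3 + μ) - Ps μ s ^ 2 + G1s μ s - Gs μ s ^ 2) / Ps μ s * (-1) / 2‖ ≤ 108 / Real.sqrt lam * (1 / (1 + s ^ 2)) := by
  have hl0 : 0 < lam := by linarith
  have hQ := Q_lower hl0 hs
  rw [← hμ0] at hQ
  have hx : 0 ≤ s ^ 3 := by positivity
  set D := s ^ 3 + lam with hD
  have hD0 : 0 < D := by positivity
  set Q := (s:ℂ) ^ 3 + μ with hQd
  have hQ0 : 0 < ‖Q‖ := by linarith
  have hQn : Q ≠ 0 := norm_pos_iff.1 hQ0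
  have hP2 : Ps μ s ^ 2 = Q := sq_sq _
  have hPn : ‖Ps μ s‖ ^ 2 = ‖Q‖ := sq_norm _
  have hPl : Real.sqrt D / 2 ≤ ‖Ps μ s‖ := by
    rw [← abs_of_nonneg (a := Real.sqrt D / 2) (by positivity), ← abs_of_nonneg (norm_nonneg (Ps μ s)), ← sq_le_sq, hPn, div_pow, Real.sq_sqrt hD0.le]
    linarith
  have hsl : Real.sqrt lam ≤ Real.sqrt D := Real.sqrt_le_sqrt (by linarith)
  have hl1 : 0 < Real.sqrt lam := Real.sqrt_pos.2 hl0
  have e : (Q - Ps μ s ^ 2 + G1s μ s - Gs μ s ^ 2) = (3 * s / 2) / Q - (45 * s ^ 4 / 16) / Q ^ 2 := by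
    rw [hP2]; unfold G1s Gs; rw [← hQd]; field_simp; ring
  have n1 : ‖(3 * (s:ℂ) / 2) / Q‖ ≤ 6 * s / D := by
    rw [norm_div, norm_div, norm_mul, Complex.norm_real, Real.norm_of_nonneg hs, Complex.norm_ofNat, Complex.norm_ofNat]
    rw [div_le_div_iff₀ hQ0 hD0]
    nlinarith
  have n2 : ‖(45 * (s:ℂ) ^ 4 / 16) / Q ^ 2‖ ≤ 48 * s / D := by
    rw [norm_div, norm_div, norm_mul, norm_pow, norm_pow, Complex.norm_real, Real.norm_of_nonneg hs, Complex.norm_ofNat, Complex.norm_ofNat]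
    rw [div_le_div_iff₀ (by positivity) hD0]
    have h2 : (D / 4) ^ 2 ≤ ‖Q‖ ^ 2 := by gcongr
    have h3 : s * (D / 4) ^ 2 ≤ s * ‖Q‖ ^ 2 := by gcongr
    have h4 : s * (s ^ 3 * D) ≤ s * (D * D) := by gcongr; linarith
    have : 0 ≤ s * (D * D) := by positivity
    nlinarith
  have n3 : ‖(3 * s / 2) / Q - (45 * (s:ℂ) ^ 4 / 16) / Q ^ 2‖ ≤ 54 * s / D := by
    refine (norm_sub_le _ _).trans ((add_le_add n1 n2).trans (le_of_eq ?_)); ring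
  rw [e, norm_div, norm_mul, norm_div, norm_neg, norm_one, mul_one, Complex.norm_ofNat]
  have hsD : s / D ≤ 2 * (1 / (1 + s ^ 2)) := by
    rw [mul_one_div, div_le_div_iff₀ hD0 (by positivity)]
    nlinarith [sq_nonneg (s - 1)]
  calc _ ≤ (54 * s / D) / (Real.sqrt lam / 2) / 2 := by
        gcongr; linarith
    _ = 54 / Real.sqrt lam * (s / D) := by field_simp
    _ ≤ 54 / Real.sqrt lam * (2 * (1 / (1 + s ^ 2))) := by gcongr
    _ = _ := by ring

lemma E_zero {lam : ℝ} (hl : 1 ≤ lam) {μ : ℂ} (hμ0 : μ = lam * cis (4 * Real.pi / 5)) (hμ : 0 < μ.im) (c : ℂ)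
    (hc : c = cis (2 * Real.pi / 3) * ((Kconst * lam ^ (5/6:ℝ) : ℝ) : ℂ)) :
    ‖Yf μ 0 / Φs μ 0 - Complex.exp c‖ ^ 2 ≤ ‖Complex.exp c‖ ^ 2 * ((Real.exp (6 * (216 / Real.sqrt lam)) - 1) / 3) := by
  have hl0 : 0 < lam := by linarith
  have hl1 : 0 < Real.sqrt lam := Real.sqrt_pos.2 hl0
  set b0 := Complex.exp c
  set X := 216 / Real.sqrt lam with hX
  have comp : ∀ {F : ℝ → ℂ} {F' : ℂ} (t : ℝ), HasDerivAt F F' (-t) → HasDerivAt (fun t : ℝ => F (-t)) (-F') t := by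
    intro F F' t hF
    have := HasDerivAt.scomp t hF (hasDerivAt_neg t)
    exact this.congr_deriv (by simp)
  have cR : ∀ {F : ℂ → ℂ} {F' : ℂ} (s : ℝ), HasDerivAt F F' (s:ℂ) → HasDerivAt (fun t : ℝ => F t) F' s :=
    fun s h => h.comp_ofReal
  have hsol := (Y_rec μ).1
  have key : ∀ R : ℝ, 0 ≤ R → ‖aF (Yf μ 0) (Yf1 μ 0) (Ps μ 0) (Gs μ 0) (Φs μ 0)‖ ^ 2
      + ‖bF (Yf μ 0) (Yf1 μ 0) (Ps μ 0) (Gs μ 0) (Φs μ 0) - b0‖ ^ 2 ≤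
      (‖aF (Yf μ R) (Yf1 μ R) (Ps μ R) (Gs μ R) (Φs μ R)‖ ^ 2
      + ‖bF (Yf μ R) (Yf1 μ R) (Ps μ R) (Gs μ R) (Φs μ R) - b0‖ ^ 2) * Real.exp (6 * X)
        + ‖b0‖ ^ 2 * ((Real.exp (6 * X) - 1) / 6) := by
    intro R hR
    have := wkb (t0 := -R) (t1 := 0) (by linarith) (fun t => Yf μ ((-t : ℝ):ℂ)) (fun t => Yf1 μ ((-t : ℝ):ℂ))
      (fun t => Ps μ (-t)) (fun t => Gs μ (-t)) (fun t => G1s μ (-t))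
      (fun t => Φs μ (-t)) (fun t => ((-t : ℝ):ℂ) ^ 3 + μ) (fun _ => -1)
      (fun t => 108 / Real.sqrt lam * (1 / (1 + t ^ 2))) (fun t => 108 / Real.sqrt lam * Real.arctan t)
      (fun t ht => (comp t (cR _ (hsol _).1)).congr_deriv (by ring))
      (fun t ht => (comp t (cR _ (hsol _).2)).congr_deriv (by ring))
      (fun t ht => (comp t (Ps_der hμ _)).congr_deriv (by ring))
      (fun t ht => (comp t (Gs_der hμ _)).congr_deriv (by ring))
      (fun t ht => (comp t (Φs_der hμ _)).congr_deriv (by ring))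
      (fun t ht => Ps_ne hμ _) (fun t ht => Φs_ne hμ _) ?_ ?_ ?_ b0
    · simp only [neg_neg, neg_zero, Complex.ofReal_zero] at this
      refine mono_final (by positivity) (by positivity) ?_ this
      rw [Real.arctan_zero, Real.arctan_neg, mul_zero, zero_sub, mul_neg, neg_neg, hX]
      have h1 := Real.arctan_lt_pi_div_two R
      have h2 := Real.pi_le_four
      calc 108 / Real.sqrt lam * Real.arctan R ≤ 108 / Real.sqrt lam * 2 := by gcongr; linarith
        _ = _ := by ring
    · intro t ht
      have := (sq_re (z := ((-t:ℝ):ℂ) ^ 3 + μ) (by rw [im_cube]; exact hμ.le)).1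
      have e : (2 * Ps μ (-t) * -1).re = -(2 * (Ps μ (-t)).re) := by simp
      rw [e]
      have e3 : (Ps μ (-t)).re = (sq (((-t:ℝ):ℂ) ^ 3 + μ)).re := rfl
      rw [e3]; linarith
    · intro t ht
      have := kap hl (s := -t) (by linarith [ht.2]) hμ0
      rw [neg_sq] at this
      exact this
    · intro t ht
      exact (Real.hasDerivAt_arctan t).const_mul _
  have lim := ((match_lim hl0 hμ0 hμ c hc).mul_const (Real.exp (6 * X))).add_const (‖b0‖ ^ 2 * ((Real.exp (6 * X) - 1) / 6))
  rw [zero_mul, zero_add] at lim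
  have hfin := ge_of_tendsto lim (by filter_upwards [eventually_ge_atTop 0] with R hR using key R hR)
  set a := aF (Yf μ 0) (Yf1 μ 0) (Ps μ 0) (Gs μ 0) (Φs μ 0) with ha
  set b := bF (Yf μ 0) (Yf1 μ 0) (Ps μ 0) (Gs μ 0) (Φs μ 0) with hb
  have e : Yf μ 0 / Φs μ 0 - b0 = a + (b - b0) := by rw [ha, hb]; unfold aF bF; ring
  rw [e]
  have h1 := norm_add_le a (b - b0)
  have h2 : ‖a + (b - b0)‖ ^ 2 ≤ (‖a‖ + ‖b - b0‖) ^ 2 := by gcongr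
  nlinarith [sq_nonneg (‖a‖ - ‖b - b0‖)]

lemma G_main {lam : ℝ} (hl : 1 ≤ lam) (c : ℂ)
    (hc : c = cis (2 * Real.pi / 3) * ((Kconst * lam ^ (5/6:ℝ) : ℝ) : ℂ)) :
    ‖Yf (cis (4 * Real.pi / 5) * lam) 0 * (((lam ^ (1/4:ℝ) : ℝ) : ℂ) * cis (Real.pi / 5)) - Complex.exp c‖ ^ 2
      ≤ ‖Complex.exp c‖ ^ 2 * ((Real.exp (6 * (216 / Real.sqrt lam)) - 1) / 3) := by
  have hpi := Real.pi_pos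
  have hl0 : 0 < lam := by linarith
  have hμ : 0 < (cis (4 * Real.pi / 5) * lam).im := by
    rw [mul_comm, Complex.im_ofReal_mul, cis_im]
    exact mul_pos hl0 (Real.sin_pos_of_pos_of_lt_pi (by positivity) (by linarith))
  have := E_zero hl (mul_comm _ _) hμ c hc
  have e : Φs (cis (4 * Real.pi / 5) * lam) 0 = (((lam ^ (1/4:ℝ) : ℝ) : ℂ) * cis (Real.pi / 5))⁻¹ := by
    unfold Φs HR
    rw [intervalIntegral.integral_same, neg_zero, Complex.exp_zero, mul_one, Complex.ofReal_zero, zero_pow (by norm_num), zero_add, mul_comm]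
    have := polar_cpow (r := lam) hl0 (η := 4 * Real.pi / 5) (by linarith) (by linarith) (-1/4)
    unfold cis
    rw [this, mul_inv, ← Complex.exp_neg, ← Complex.ofReal_inv, ← Real.rpow_neg hl0.le]
    congr 2
    · norm_num
    · push_cast; ring
  rw [e, div_inv_eq_mul] at this
  exact this

end ICO

namespace ICO

lemma K_pos : 0 < Kconst := by
  unfold Kconst
  have hc : Continuous (fun t : ℝ => Real.sqrt (1 - t ^ 3)) := by fun_prop
  have := intervalIntegral.intervalIntegral_pos_of_pos_on (hc.intervalIntegrable 0 1) (fun t ht => by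
    apply Real.sqrt_pos.2
    have : t ^ 3 < 1 := pow_lt_one₀ ht.1.le ht.2 (by norm_num)
    linarith) (by norm_num)
  linarith

noncomputable def hh (lam : ℝ) : ℝ := (cis (-(3 * Real.pi / 10)) * Yf (cis (4 * Real.pi / 5) * lam) 0).im

lemma hh_cont : Continuous hh := by
  unfold hh
  have : Continuous (fun lam : ℝ => Yf (cis (4 * Real.pi / 5) * lam) 0) := Y_cont.comp (by fun_prop)
  fun_prop

lemma H1 {lam : ℝ} (hl : 1 ≤ lam) : ∃ m : ℝ, 0 < m ∧
    (m * hh lam + Real.cos (Real.sqrt 3 / 2 * (Kconst * lam ^ (5/6:ℝ)))) ^ 2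
      ≤ (Real.exp (6 * (216 / Real.sqrt lam)) - 1) / 3 := by
  have hl0 : 0 < lam := by linarith
  set c := cis (2 * Real.pi / 3) * ((Kconst * lam ^ (5/6:ℝ) : ℝ) : ℂ) with hc
  have hG := G_main hl c hc
  set D := (Real.exp (6 * (216 / Real.sqrt lam)) - 1) / 3
  set y := lam ^ (1/4:ℝ) with hy
  have hy0 : 0 < y := Real.rpow_pos_of_pos hl0 _
  set Y := Yf (cis (4 * Real.pi / 5) * lam) 0 with hY
  have hci : c.im = Real.sqrt 3 / 2 * (Kconst * lam ^ (5/6:ℝ)) := by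
    rw [hc, mul_comm, Complex.im_ofReal_mul, cis_im, show 2 * Real.pi / 3 = Real.pi - Real.pi / 3 by ring, Real.sin_pi_sub, Real.sin_pi_div_three]
    ring
  rw [← hci]
  set w := Y * ((y:ℂ) * cis (Real.pi / 5)) - Complex.exp c with hw
  have hI : cis (-(Real.pi / 2)) = -Complex.I := by
    apply Complex.ext
    · rw [cis_re]; simp
    · rw [cis_im]; simp
  have e1 : (y:ℂ) * (cis (-(3 * Real.pi / 10)) * Y) = -Complex.I * (Complex.exp c + w) := by
    rw [← hI, show -(3 * Real.pi / 10) = -(Real.pi / 2) + Real.pi / 5 by ring, cis_add, hw]; ring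
  have e2 : y * hh lam = -((Complex.exp c).re + w.re) := by
    have := congrArg Complex.im e1
    rw [Complex.im_ofReal_mul] at this
    unfold hh
    rw [this]; simp
  refine ⟨y * Real.exp (-c.re), by positivity, ?_⟩
  have e3 : y * Real.exp (-c.re) * hh lam + Real.cos c.im = -(w.re * Real.exp (-c.re)) := by
    have : Real.exp c.re * Real.exp (-c.re) = 1 := by rw [← Real.exp_add]; simp
    rw [Complex.exp_re] at e2
    linear_combination Real.exp (-c.re) * e2 - Real.cos c.im * this
  rw [e3, neg_sq, mul_pow]
  have h1 : w.re ^ 2 ≤ ‖w‖ ^ 2 := by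
    rw [← sq_abs]; gcongr; exact Complex.abs_re_le_norm w
  rw [Complex.norm_exp] at hG
  have h2 : w.re ^ 2 * Real.exp (-c.re) ^ 2 ≤ (Real.exp c.re ^ 2 * D) * Real.exp (-c.re) ^ 2 := by
    gcongr; exact h1.trans hG
  refine h2.trans (le_of_eq ?_)
  have : Real.exp c.re * Real.exp (-c.re) = 1 := by rw [← Real.exp_add]; simp
  linear_combination D * (Real.exp c.re * Real.exp (-c.re) + 1) * this

lemma H1b {lam : ℝ} (hl : 1296 ≤ Real.sqrt lam) : ∃ m : ℝ, 0 < m ∧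
    (m * hh lam + Real.cos (Real.sqrt 3 / 2 * (Kconst * lam ^ (5/6:ℝ)))) ^ 2
      ≤ 864 / Real.sqrt lam := by
  have h0 : 0 < Real.sqrt lam := by linarith
  have hl1 : 1 ≤ lam := by
    have h1 : 0 < lam := Real.sqrt_pos.1 h0
    have := Real.sq_sqrt h1.le
    nlinarith
  obtain ⟨m, hm, h⟩ := H1 hl1
  refine ⟨m, hm, h.trans ?_⟩
  have hx : 0 ≤ 6 * (216 / Real.sqrt lam) := by positivity
  have hx1 : 6 * (216 / Real.sqrt lam) ≤ 1 := by
    rw [← mul_div_assoc, div_le_one h0]; linarith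
  have := Real.abs_exp_sub_one_le (x := 6 * (216 / Real.sqrt lam)) (by rw [abs_of_nonneg hx]; exact hx1)
  rw [abs_of_nonneg hx] at this
  have h3 := (le_abs_self _).trans this
  have e : 864 / Real.sqrt lam = 2 * (6 * (216 / Real.sqrt lam)) / 3 := by ring
  rw [e]; linarith

noncomputable def AA : ℝ := 2 / (Real.sqrt 3 * Kconst)
lemma AA_pos : 0 < AA := by
  have := K_pos
  unfold AA; positivity
noncomputable def LL (θ : ℝ) : ℝ := (AA * θ) ^ (6/5:ℝ)

lemma LL_cont : Continuous LL := by
  unfold LL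
  exact (continuous_const.mul continuous_id).rpow_const (fun _ => Or.inr (by norm_num))

lemma LL_phase {θ : ℝ} (h : 0 < θ) : Real.sqrt 3 / 2 * (Kconst * LL θ ^ (5/6:ℝ)) = θ := by
  have hA := AA_pos
  have hK := K_pos
  unfold LL
  rw [← Real.rpow_mul (by positivity), show (6/5:ℝ) * (5/6) = 1 by norm_num, Real.rpow_one, AA]
  have : Real.sqrt 3 ≠ 0 := by positivity
  field_simp

lemma LL_sqrt {θ : ℝ} (h : 0 < θ) : Real.sqrt (LL θ) = (AA * θ) ^ (3/5:ℝ) := by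
  have hA := AA_pos
  unfold LL
  rw [Real.sqrt_eq_rpow, ← Real.rpow_mul (by positivity)]; norm_num

/-- Sign of `hh` at endpoints. -/
lemma H2 {θ σ S : ℝ} (h : 0 < θ) (hl : 1296 ≤ (AA * θ) ^ (3/5:ℝ)) (hσ : σ ^ 2 = 1) (hc : Real.cos θ = σ * S)
    (hS : 0 < S) (hb : 864 / (AA * θ) ^ (3/5:ℝ) < S ^ 2) : σ * hh (LL θ) < 0 := by
  obtain ⟨m, hm, h1⟩ := H1b (lam := LL θ) (by rw [LL_sqrt h]; exact hl)
  rw [LL_phase h, LL_sqrt h, hc] at h1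
  have h2 := h1.trans_lt hb
  have h3 := abs_lt_of_sq_lt_sq h2 hS.le
  have h3' := abs_lt.1 h3
  have : m * (σ * hh (LL θ)) < 0 := by
    have hσ2 : σ = 1 ∨ σ = -1 := by
      have hz : (σ - 1) * (σ + 1) = 0 := by linear_combination hσ
      rcases mul_eq_zero.1 hz with h | h
      · left; linarith
      · right; linarith
    rcases hσ2 with rfl | rfl <;> nlinarith [h3'.1, h3'.2]
  by_contra hcon
  push Not at hcon
  have := mul_nonneg hm.le hcon
  linarith

lemma H3 : ∃ T : ℝ, ∀ n : ℕ, ∀ x : ℝ, x = (2 * (n:ℝ) + 1) * Real.pi / 2 → T ≤ x →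
    1 ≤ x ∧ ∃ θ : ℝ, |θ - x| ≤ x ^ (-(1/4):ℝ) ∧ x / 2 ≤ θ ∧ hh (LL θ) = 0 := by
  have hA := AA_pos
  have t1 : Tendsto (fun x : ℝ => (AA * (x / 2)) ^ (3/5:ℝ)) atTop atTop :=
    (tendsto_rpow_atTop (by norm_num)).comp ((tendsto_id.atTop_div_const (by norm_num)).const_mul_atTop hA)
  have t2 : Tendsto (fun x : ℝ => x ^ (1/10:ℝ)) atTop atTop := tendsto_rpow_atTop (by norm_num)
  have ev := ((t1.eventually_ge_atTop 1296).and (t2.eventually_gt_atTop (3456 / (AA / 2) ^ (3/5:ℝ)))).and (eventually_ge_atTop (2:ℝ))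
  obtain ⟨T, hT⟩ := eventually_atTop.1 ev
  refine ⟨T, fun n x hx hTx => ?_⟩
  obtain ⟨⟨h1, h2⟩, h3⟩ := hT x hTx
  refine ⟨by linarith, ?_⟩
  have hx0 : 0 < x := by linarith
  set d := x ^ (-(1/4):ℝ) with hd
  have hd0 : 0 < d := Real.rpow_pos_of_pos hx0 _
  have hd1 : d ≤ 1 := Real.rpow_le_one_of_one_le_of_nonpos (by linarith) (by norm_num)
  have hd2 : d ^ 2 = x ^ (-(1/2):ℝ) := by
    rw [hd, ← Real.rpow_natCast, ← Real.rpow_mul hx0.le]; norm_num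
  have hpi := Real.pi_pos
  have hpi3 := Real.pi_gt_three
  have hsin : d / 2 ≤ Real.sin d := by
    have := Real.mul_le_sin hd0.le (by linarith)
    have h4 : 1 / 2 ≤ 2 / Real.pi := by
      rw [div_le_div_iff₀ (by norm_num) hpi]; linarith [Real.pi_le_four]
    nlinarith
  have hS : 0 < Real.sin d := by linarith
  have hcn : Real.cos x = 0 := by
    rw [Real.cos_eq_zero_iff]; exact ⟨n, by rw [hx]; push_cast; ring⟩
  have hsx : Real.sin x ^ 2 = 1 := by
    have := Real.sin_sq_add_cos_sq x; rw [hcn] at this; linarith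
  have big : 864 / (AA * (x / 2)) ^ (3/5:ℝ) < Real.sin d ^ 2 := by
    have h5 : (d / 2) ^ 2 ≤ Real.sin d ^ 2 := by gcongr
    refine lt_of_lt_of_le ?_ h5
    rw [div_pow, hd2, show AA * (x / 2) = AA / 2 * x by ring, Real.mul_rpow (by positivity) hx0.le]
    have hB : 0 < (AA / 2) ^ (3/5:ℝ) := by positivity
    have e : x ^ (-(1/2):ℝ) = x ^ (1/10:ℝ) / x ^ (3/5:ℝ) := by
      rw [← Real.rpow_sub hx0]; norm_num
    rw [e]
    have hp : 0 < x ^ (3/5:ℝ) := by positivity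
    rw [div_lt_iff₀ hB] at h2
    rw [div_lt_iff₀ (by positivity)]
    field_simp
    linarith
  have mono : ∀ θ : ℝ, x / 2 ≤ θ → (AA * (x / 2)) ^ (3/5:ℝ) ≤ (AA * θ) ^ (3/5:ℝ) := by
    intro θ hθ; gcongr
  have bd : ∀ θ : ℝ, x / 2 ≤ θ → 864 / (AA * θ) ^ (3/5:ℝ) < Real.sin d ^ 2 := by
    intro θ hθ
    refine lt_of_le_of_lt ?_ big
    gcongr
  have a1 : x / 2 ≤ x - d := by linarith
  have a2 : x / 2 ≤ x + d := by linarith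
  have s1 := H2 (θ := x - d) (σ := Real.sin x) (S := Real.sin d) (by linarith) (h1.trans (mono _ a1)) hsx
    (by rw [Real.cos_sub, hcn]; ring) hS (bd _ a1)
  have s2 := H2 (θ := x + d) (σ := -Real.sin x) (S := Real.sin d) (by linarith) (h1.trans (mono _ a2)) (by rw [neg_sq]; exact hsx)
    (by rw [Real.cos_add, hcn]; ring) hS (bd _ a2)
  have hcont : ContinuousOn (fun θ => Real.sin x * hh (LL θ)) (Set.Icc (x - d) (x + d)) := by
    have := hh_cont.comp LL_cont
    exact (continuous_const.mul this).continuousOn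
  obtain ⟨θ, hθ, h0⟩ := intermediate_value_Icc (by linarith) hcont ⟨s1.le, by linarith⟩
  refine ⟨θ, abs_le.2 ⟨by linarith [hθ.1], by linarith [hθ.2]⟩, by linarith [hθ.1], ?_⟩
  have hne : Real.sin x ≠ 0 := by intro h; rw [h] at hsx; norm_num at hsx
  exact (mul_eq_zero.1 h0).resolve_left hne

lemma H4 {x θ : ℝ} (hx : 1 ≤ x) (h : |θ - x| ≤ x ^ (-(1/4):ℝ)) (h2 : x / 2 ≤ θ) :
    |LL θ - LL x| ≤ 3 * AA ^ (6/5:ℝ) * x ^ (-(1/20):ℝ) := by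
  have hA := AA_pos
  have hx0 : 0 < x := by linarith
  have hd1 : x ^ (-(1/4):ℝ) ≤ 1 := Real.rpow_le_one_of_one_le_of_nonpos hx (by norm_num)
  have hab := abs_le.1 h
  set u := θ / x with hu
  have hθ : θ = x * u := by rw [hu]; field_simp
  have hu0 : 0 < u := by rw [hu]; apply div_pos _ hx0; linarith
  have hu2 : u ≤ 2 := by rw [hu, div_le_iff₀ hx0]; linarith [hab.2]
  have key : |u ^ (6/5:ℝ) - 1| ≤ 3 * |u - 1| := by
    rcases le_total 1 u with h1 | h1
    · have l1 : 1 ≤ u ^ (6/5:ℝ) := Real.one_le_rpow h1 (by norm_num)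
      have l2 : u ^ (6/5:ℝ) ≤ u ^ (2:ℝ) := Real.rpow_le_rpow_of_exponent_le h1 (by norm_num)
      rw [Real.rpow_two] at l2
      rw [abs_of_nonneg (by linarith), abs_of_nonneg (by linarith)]
      nlinarith
    · have l1 : u ^ (6/5:ℝ) ≤ 1 := Real.rpow_le_one hu0.le h1 (by norm_num)
      have l2 : u ^ (2:ℝ) ≤ u ^ (6/5:ℝ) := Real.rpow_le_rpow_of_exponent_ge hu0 h1 (by norm_num)
      rw [Real.rpow_two] at l2
      rw [abs_of_nonpos (by linarith), abs_of_nonpos (by linarith)]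
      nlinarith
  have e : LL θ - LL x = AA ^ (6/5:ℝ) * (x ^ (6/5:ℝ) * (u ^ (6/5:ℝ) - 1)) := by
    unfold LL
    rw [hθ, Real.mul_rpow hA.le (by positivity), Real.mul_rpow hA.le hx0.le, Real.mul_rpow hx0.le hu0.le]; ring
  have hu1 : |u - 1| ≤ x ^ (-(1/4):ℝ) / x := by
    have : u - 1 = (θ - x) / x := by rw [hu]; field_simp
    rw [this, abs_div, abs_of_pos hx0]; gcongr
  have e2 : x ^ (-(1/20):ℝ) = x ^ (6/5:ℝ) * (x ^ (-(1/4):ℝ) / x) := by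
    rw [← Real.rpow_sub_one hx0.ne', ← Real.rpow_add hx0]; norm_num
  rw [e, abs_mul, abs_mul, abs_of_pos (by positivity : 0 < AA ^ (6/5:ℝ)), abs_of_pos (by positivity : 0 < x ^ (6/5:ℝ)), e2]
  calc AA ^ (6/5:ℝ) * (x ^ (6/5:ℝ) * |u ^ (6/5:ℝ) - 1|) ≤ AA ^ (6/5:ℝ) * (x ^ (6/5:ℝ) * (3 * (x ^ (-(1/4):ℝ) / x))) := by
        gcongr; linarith
    _ = _ := by ring

end ICO

/-- There are infinitely many eigenvalues, and they obey the semiclassical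
asymptotics `λₙ = ((2n+1)π/(√3 K))^{6/5} + o(1)`. -/
theorem eigenvalues_infinite_with_asymptotics :
    {lam : ℂ | IsEigenvalueICO lam}.Infinite ∧
    ∃ N : ℕ, ∃ lamSeq : ℕ → ℂ,
      (∀ n : ℕ, N ≤ n → IsEigenvalueICO (lamSeq n)) ∧
      Tendsto (fun n : ℕ =>
          lamSeq n -
            ((((2 * (n : ℝ) + 1) * Real.pi / (Real.sqrt 3 * Kconst)) ^ ((6 : ℝ) / 5) : ℝ) : ℂ))
        atTop (nhds 0) := by
  have hpi := Real.pi_pos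
  have hA := ICO.AA_pos
  obtain ⟨T, hT⟩ := ICO.H3
  set x : ℕ → ℝ := fun n => (2 * (n:ℝ) + 1) * Real.pi / 2 with hx
  have xlim : Tendsto x atTop atTop := by
    refine tendsto_atTop_mono (f := fun n : ℕ => (n:ℝ)) (fun n => ?_) tendsto_natCast_atTop_atTop
    have := Real.pi_gt_three
    have h0 : (0:ℝ) ≤ n := Nat.cast_nonneg n
    simp only [hx]
    nlinarith
  have eLL : ∀ n : ℕ, ((2 * (n : ℝ) + 1) * Real.pi / (Real.sqrt 3 * Kconst)) ^ ((6 : ℝ) / 5) = ICO.LL (x n) := by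
    intro n
    unfold ICO.LL ICO.AA
    congr 1
    simp only [hx]; ring
  obtain ⟨N, hN⟩ := eventually_atTop.1 (xlim.eventually_ge_atTop T)
  have H : ∀ n : ℕ, ∃ θ : ℝ, N ≤ n → 1 ≤ x n ∧ |θ - x n| ≤ x n ^ (-(1/4):ℝ) ∧ x n / 2 ≤ θ ∧ ICO.hh (ICO.LL θ) = 0 := by
    intro n
    by_cases h : N ≤ n
    · obtain ⟨h1, θ, h2⟩ := hT n (x n) rfl (hN n h)
      exact ⟨θ, fun _ => ⟨h1, h2⟩⟩
    · exact ⟨0, fun h' => absurd h' h⟩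
  choose θ hθ using H
  have eig : ∀ n : ℕ, N ≤ n → IsEigenvalueICO ((ICO.LL (θ n) : ℝ) : ℂ) := by
    intro n hn
    obtain ⟨h1, h2, h3, h4⟩ := hθ n hn
    have hpos : 0 < ICO.LL (θ n) := by
      unfold ICO.LL
      have : 0 < θ n := by linarith
      positivity
    exact ICO.eigen_crit hpos h4
  have lim : Tendsto (fun n : ℕ => ((ICO.LL (θ n) : ℝ) : ℂ) -
            ((((2 * (n : ℝ) + 1) * Real.pi / (Real.sqrt 3 * Kconst)) ^ ((6 : ℝ) / 5) : ℝ) : ℂ))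
        atTop (nhds 0) := by
    have b : Tendsto (fun n => 3 * ICO.AA ^ (6/5:ℝ) * x n ^ (-(1/20):ℝ)) atTop (nhds 0) := by
      have := ((tendsto_rpow_neg_atTop (y := (1/20:ℝ)) (by norm_num)).comp xlim).const_mul (3 * ICO.AA ^ (6/5:ℝ))
      rw [mul_zero] at this
      exact this
    refine squeeze_zero_norm' ?_ b
    filter_upwards [eventually_ge_atTop N] with n hn
    obtain ⟨h1, h2, h3, h4⟩ := hθ n hn
    rw [eLL, ← Complex.ofReal_sub, Complex.norm_real, Real.norm_eq_abs]
    exact ICO.H4 h1 h2 h3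
  refine ⟨?_, N, fun n => ((ICO.LL (θ n) : ℝ) : ℂ), eig, lim⟩
  intro hfin
  obtain ⟨M, hM⟩ := hfin.isBounded.exists_norm_le
  have llim : Tendsto (fun n => ICO.LL (x n)) atTop atTop := by
    have := (tendsto_rpow_atTop (y := (6/5:ℝ)) (by norm_num)).comp (xlim.const_mul_atTop hA)
    exact this
  have ev1 := lim.norm.eventually_lt_const (u := 1) (by simp)
  obtain ⟨n, ⟨h1, h2⟩, h3⟩ := ((ev1.and (llim.eventually_gt_atTop (M + 1))).and (eventually_ge_atTop N)).exists
  have h5 := hM _ (eig n h3)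
  rw [eLL, ← Complex.ofReal_sub, Complex.norm_real, Real.norm_eq_abs, abs_lt] at h1
  rw [Complex.norm_real, Real.norm_eq_abs, abs_le] at h5
  linarith [h1.1, h5.2]
end

section
/- There exists a constant C > 0 such that for every smooth compactly supported function ψ : ℝ → ℂ one has ∫_ℝ |−ψ''(x) + i·x³·ψ(x)|² dx ≥ (1/2)·∫_ℝ |ψ''(x)|² dx + (1/2)·∫_ℝ |x³·ψ(x)|² dx − C·∫_ℝ |ψ(x)|² dx. -/
open MeasureTheory

lemma aux_pt (x a b c d e f : ℝ) :
    0 ≤ ((-c - x^3*b)^2 + (-d + x^3*a)^2) - 1/2*(c^2+d^2) - 1/2*((x^3*a)^2+(x^3*b)^2)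
      + 433*(a^2+b^2)
      - (6*x^2*(e*b-f*a) + 2*x^3*(c*b-d*a) - (c*a+d*b+e^2+f^2)) := by
  have h1 : 0 ≤ x^6/2 - 9*x^4 + 432 := by
    nlinarith [mul_nonneg (sq_nonneg (x^2-12)) (by positivity : 0 ≤ x^2+6)]
  have h2 := mul_nonneg h1 (by positivity : 0 ≤ a^2+b^2)
  nlinarith [sq_nonneg (e-3*x^2*b), sq_nonneg (f+3*x^2*a), sq_nonneg (c+a), sq_nonneg (d+b),
    sq_nonneg a, sq_nonneg b]

/-- The quadratic estimate `‖(p² + i x³)ψ‖² ≥ ½‖p²ψ‖² + ½‖x³ψ‖² - C‖ψ‖²`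
for smooth compactly supported `ψ`. -/
theorem norm_inequality :
    ∃ C > (0 : ℝ), ∀ ψ : ℝ → ℂ, ContDiff ℝ (⊤ : ℕ∞) ψ → HasCompactSupport ψ →
      (∫ x : ℝ, ‖-(deriv (deriv ψ) x) + Complex.I * (x : ℂ) ^ 3 * ψ x‖ ^ 2) ≥
        (1 / 2) * (∫ x : ℝ, ‖deriv (deriv ψ) x‖ ^ 2) +
        (1 / 2) * (∫ x : ℝ, ‖(x : ℂ) ^ 3 * ψ x‖ ^ 2) -
        C * ∫ x : ℝ, ‖ψ x‖ ^ 2 := by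
  refine ⟨433, by norm_num, fun ψ hψ hs => ?_⟩
  have hψ1 : ContDiff ℝ (⊤ : ℕ∞) (deriv ψ) := (contDiff_infty_iff_deriv.1 hψ).2
  have hψ2 : ContDiff ℝ (⊤ : ℕ∞) (deriv (deriv ψ)) := (contDiff_infty_iff_deriv.1 hψ1).2
  have c0 := hψ.continuous
  have c1 := hψ1.continuous
  have c2 := hψ2.continuous
  have s1 : HasCompactSupport (deriv ψ) := hs.deriv
  have s2 : HasCompactSupport (deriv (deriv ψ)) := s1.deriv
  have d0 : ∀ x, HasDerivAt ψ (deriv ψ x) x := fun x =>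
    ((contDiff_infty_iff_deriv.1 hψ).1 x).hasDerivAt
  have d1 : ∀ x, HasDerivAt (deriv ψ) (deriv (deriv ψ) x) x := fun x =>
    ((contDiff_infty_iff_deriv.1 hψ1).1 x).hasDerivAt
  have key : ∀ F : ℝ → ℝ, Continuous F →
      (∀ x, ψ x = 0 → deriv ψ x = 0 → deriv (deriv ψ) x = 0 → F x = 0) → Integrable F := by
    intro F hF h0
    refine hF.integrable_of_hasCompactSupport ?_
    refine HasCompactSupport.intro ((hs.isCompact.union s1.isCompact).union s2.isCompact) ?_
    intro x hx
    simp only [Set.mem_union, not_or] at hx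
    exact h0 x (image_eq_zero_of_notMem_tsupport hx.1.1)
      (image_eq_zero_of_notMem_tsupport hx.1.2) (image_eq_zero_of_notMem_tsupport hx.2)
  generalize hp1 : deriv ψ = p1 at *
  generalize hp2 : deriv p1 = p2 at *
  have re0 : ∀ x, HasDerivAt (fun x => (ψ x).re) (p1 x).re x := fun x =>
    Complex.reCLM.hasFDerivAt.comp_hasDerivAt x (d0 x)
  have im0 : ∀ x, HasDerivAt (fun x => (ψ x).im) (p1 x).im x := fun x =>
    Complex.imCLM.hasFDerivAt.comp_hasDerivAt x (d0 x)
  have re1 : ∀ x, HasDerivAt (fun x => (p1 x).re) (p2 x).re x := fun x =>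
    Complex.reCLM.hasFDerivAt.comp_hasDerivAt x (d1 x)
  have im1 : ∀ x, HasDerivAt (fun x => (p1 x).im) (p2 x).im x := fun x =>
    Complex.imCLM.hasFDerivAt.comp_hasDerivAt x (d1 x)
  let G : ℝ → ℝ := fun x => 2*x^3*((p1 x).re*(ψ x).im - (p1 x).im*(ψ x).re)
    - ((p1 x).re*(ψ x).re + (p1 x).im*(ψ x).im)
  let G' : ℝ → ℝ := fun x => 6*x^2*((p1 x).re*(ψ x).im-(p1 x).im*(ψ x).re)
    + 2*x^3*((p2 x).re*(ψ x).im-(p2 x).im*(ψ x).re)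
    - ((p2 x).re*(ψ x).re+(p2 x).im*(ψ x).im+(p1 x).re^2+(p1 x).im^2)
  have hG : ∀ x, HasDerivAt G (G' x) x := by
    intro x
    have := ((((hasDerivAt_pow 3 x).const_mul 2).mul
      (((re1 x).mul (im0 x)).sub ((im1 x).mul (re0 x))))).sub
      (((re1 x).mul (re0 x)).add ((im1 x).mul (im0 x)))
    refine this.congr_deriv ?_
    simp [G']
    ring
  have iG : Integrable G := key _ (by fun_prop) (by intro x h h1 h2; simp [G, h, h1])
  have iG' : Integrable G' := key _ (by fun_prop) (by intro x h h1 h2; simp [G', h, h1])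
  have zG : ∫ x, G' x = 0 := integral_eq_zero_of_hasDerivAt_of_integrable hG iG' iG
  have iA : Integrable (fun x : ℝ => ‖-(p2 x) + Complex.I * (x : ℂ) ^ 3 * ψ x‖ ^ 2) :=
    key _ (by fun_prop) (by intro x h h1 h2; simp [h, h2])
  have iB : Integrable (fun x : ℝ => ‖p2 x‖ ^ 2) :=
    key _ (by fun_prop) (by intro x h h1 h2; simp [h2])
  have iC : Integrable (fun x : ℝ => ‖(x : ℂ) ^ 3 * ψ x‖ ^ 2) :=
    key _ (by fun_prop) (by intro x h h1 h2; simp [h])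
  have iD : Integrable (fun x : ℝ => ‖ψ x‖ ^ 2) :=
    key _ (by fun_prop) (by intro x h h1 h2; simp [h])
  have main : ∫ x : ℝ, ((1/2) * ‖p2 x‖ ^ 2 + (1/2) * ‖(x : ℂ) ^ 3 * ψ x‖ ^ 2
      - 433 * ‖ψ x‖ ^ 2 + G' x) ≤
      ∫ x : ℝ, ‖-(p2 x) + Complex.I * (x : ℂ) ^ 3 * ψ x‖ ^ 2 := by
    refine integral_mono ((((iB.const_mul _).add (iC.const_mul _)).sub (iD.const_mul _)).add iG')
      iA ?_
    intro x
    have h := aux_pt x (ψ x).re (ψ x).im (p2 x).re (p2 x).im (p1 x).re (p1 x).im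
    have hx : (x : ℂ)^3 = ((x^3 : ℝ) : ℂ) := by push_cast; rfl
    simp only [Complex.sq_norm, Complex.normSq_apply, hx, G']
    simp only [Complex.add_re, Complex.add_im, Complex.neg_re, Complex.neg_im, Complex.mul_re,
      Complex.mul_im, Complex.I_re, Complex.I_im, Complex.ofReal_re, Complex.ofReal_im]
    linarith
  rw [integral_add ?_ iG', integral_sub ?_ (iD.const_mul _),
    integral_add (iB.const_mul _) (iC.const_mul _), integral_const_mul, integral_const_mul,
    integral_const_mul, zG] at main
  · linarith
  · exact (iB.const_mul _).add (iC.const_mul _)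
  · exact ((iB.const_mul _).add (iC.const_mul _)).sub (iD.const_mul _)
end

section
/- Let z ∈ ℂ with Re z < 0. Then the set { x ↦ −ψ''(x) + i·x³·ψ(x) − z·ψ(x) : ψ smooth and compactly supported on ℝ } is dense in L²(ℝ, ℂ): for every square-integrable φ : ℝ → ℂ and every ε > 0 there exists a smooth compactly supported ψ : ℝ → ℂ with ∫_ℝ |−ψ''(x) + i·x³·ψ(x) − z·ψ(x) − φ(x)|² dx < ε². -/
open MeasureTheory

lemma energy_aux (y y1 y2 : ℝ → ℂ) (χ χ1 χ2 : ℝ → ℝ)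
    (h1 : ∀ x, HasDerivAt y (y1 x) x) (h2 : ∀ x, HasDerivAt y1 (y2 x) x) (c2 : Continuous y2)
    (k1 : ∀ x, HasDerivAt χ (χ1 x) x) (k2 : ∀ x, HasDerivAt χ1 (χ2 x) x) (d2 : Continuous χ2)
    (hs : HasCompactSupport χ) :
    ∫ x, χ2 x * ‖y x‖ ^ 2 = ∫ x, χ x * (2 * (inner ℝ (y x) (y2 x) + ‖y1 x‖ ^ 2)) := by
  have cy : Continuous y := continuous_iff_continuousAt.2 fun x => (h1 x).continuousAt
  have cy1 : Continuous y1 := continuous_iff_continuousAt.2 fun x => (h2 x).continuousAt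
  have cχ : Continuous χ := continuous_iff_continuousAt.2 fun x => (k1 x).continuousAt
  have cχ1 : Continuous χ1 := continuous_iff_continuousAt.2 fun x => (k2 x).continuousAt
  have e1 : χ1 = deriv χ := funext fun x => (k1 x).deriv.symm
  have e2 : χ2 = deriv χ1 := funext fun x => (k2 x).deriv.symm
  have hs1 : HasCompactSupport χ1 := by rw [e1]; exact hs.deriv
  have hs2 : HasCompactSupport χ2 := by rw [e2]; exact hs1.deriv
  have w1 : ∀ x, HasDerivAt (fun x => ‖y x‖ ^ 2) (2 * inner ℝ (y x) (y1 x)) x :=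
    fun x => (h1 x).norm_sq
  have w2 : ∀ x, HasDerivAt (fun x => 2 * inner ℝ (y x) (y1 x))
      (2 * (inner ℝ (y x) (y2 x) + ‖y1 x‖ ^ 2)) x := by
    intro x
    have := ((h1 x).inner ℝ (h2 x)).const_mul 2
    rwa [real_inner_self_eq_norm_sq] at this
  have cw : Continuous (fun x => ‖y x‖ ^ 2) := by fun_prop
  have cw1 : Continuous (fun x => 2 * inner ℝ (y x) (y1 x)) := by fun_prop
  have cw2 : Continuous (fun x => 2 * (inner ℝ (y x) (y2 x) + ‖y1 x‖ ^ 2)) := by fun_prop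
  have A := integral_mul_deriv_eq_deriv_mul_of_integrable (u := fun x => ‖y x‖ ^ 2) (v := χ1)
    (fun x _ => w1 x) (fun x _ => k2 x)
    ((cw.mul d2).integrable_of_hasCompactSupport (hs2.mul_left))
    ((cw1.mul cχ1).integrable_of_hasCompactSupport (hs1.mul_left))
    ((cw.mul cχ1).integrable_of_hasCompactSupport (hs1.mul_left))
  have B := integral_mul_deriv_eq_deriv_mul_of_integrable (u := fun x => 2 * inner ℝ (y x) (y1 x))
    (v := χ)
    (fun x _ => w2 x) (fun x _ => k1 x)
    ((cw1.mul cχ1).integrable_of_hasCompactSupport (hs1.mul_left))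
    ((cw2.mul cχ).integrable_of_hasCompactSupport (hs.mul_left))
    ((cw1.mul cχ).integrable_of_hasCompactSupport (hs.mul_left))
  rw [B, neg_neg] at A
  simpa only [mul_comm] using A

lemma jensen_aux (k f : ℝ → ℝ) (hk : ∀ t, 0 ≤ k t) (ik : Integrable k) (h1 : ∫ t, k t = 1)
    (i1 : Integrable fun t => k t * f t) (i2 : Integrable fun t => k t * f t ^ 2) :
    (∫ t, k t * f t) ^ 2 ≤ ∫ t, k t * f t ^ 2 := by
  set m := ∫ t, k t * f t with hm
  have h : 0 ≤ ∫ t, k t * (f t - m) ^ 2 :=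
    integral_nonneg fun t => mul_nonneg (hk t) (sq_nonneg _)
  have e : ∫ t, k t * (f t - m) ^ 2 = ∫ t, (k t * f t ^ 2 - (2 * m) * (k t * f t) + m ^ 2 * k t) := by
    congr 1; ext t; ring
  have e' : ∫ t, (k t * f t ^ 2 - (2 * m) * (k t * f t) + m ^ 2 * k t) =
      (∫ t, (k t * f t ^ 2 - (2 * m) * (k t * f t))) + ∫ t, m ^ 2 * k t :=
    integral_add (i2.sub (i1.const_mul _)) (ik.const_mul _)
  rw [e, e', integral_sub i2 (i1.const_mul _), integral_const_mul, integral_const_mul, h1, ← hm] at h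
  nlinarith

open scoped Convolution in
lemma step_aux (z : ℂ) (u : ℝ → ℂ) (hu : MemLp u 2 volume)
    (heq : ∀ ψ : ℝ → ℝ, ContDiff ℝ (⊤ : ℕ∞) ψ → HasCompactSupport ψ →
      ∫ t, deriv (deriv ψ) t • u t = ∫ t, ψ t • ((-Complex.I * (t : ℂ) ^ 3 - star z) * u t))
    (φ : ContDiffBump (0 : ℝ)) (R δ c : ℝ) (hδ : 0 ≤ δ)
    (hR : ∀ x t : ℝ, |x| ≤ R → |x - t| < φ.rOut → |t ^ 3 - x ^ 3| ≤ δ)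
    (χ : ℝ → ℝ) (sχ : ContDiff ℝ (⊤ : ℕ∞) χ) (hχ : HasCompactSupport χ) (χ0 : ∀ x, 0 ≤ χ x)
    (χ1 : ∀ x, χ x ≤ 1) (hχR : ∀ x, R < |x| → χ x = 0) (hc : ∀ x, |deriv (deriv χ) x| ≤ c) :
    Continuous (φ.normed volume ⋆[ContinuousLinearMap.lsmul ℝ ℝ, volume] u) ∧
    2 * (-z.re) *
      ∫ x, χ x * ‖(φ.normed volume ⋆[ContinuousLinearMap.lsmul ℝ ℝ, volume] u) x‖ ^ 2
      ≤ (c + 2 * δ) * ∫ x, ‖u x‖ ^ 2 := by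
  have hul : LocallyIntegrable u volume := hu.locallyIntegrable (by norm_num)
  have huln : LocallyIntegrable (fun x => ‖u x‖) volume :=
    hu.norm.locallyIntegrable (by norm_num)
  have hu2 : Integrable (fun x => ‖u x‖ ^ 2) := (memLp_two_iff_integrable_sq_norm hu.1).1 hu
  set K : ℝ → ℝ := φ.normed volume with hK
  have sK : ContDiff ℝ (⊤ : ℕ∞) K := φ.contDiff_normed
  have kK : HasCompactSupport K := φ.hasCompactSupport_normed
  have K0 : ∀ x, 0 ≤ K x := φ.nonneg_normed
  have iK : Integrable K := φ.integrable_normed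
  have sK1 : ContDiff ℝ (⊤ : ℕ∞) (deriv K) :=
    ((contDiff_infty_iff_deriv (𝕜 := ℝ)).1 sK).2
  have sK2 : ContDiff ℝ (⊤ : ℕ∞) (deriv (deriv K)) :=
    ((contDiff_infty_iff_deriv (𝕜 := ℝ)).1 sK1).2
  set y := K ⋆[ContinuousLinearMap.lsmul ℝ ℝ, volume] u with hy
  set y1 := deriv K ⋆[ContinuousLinearMap.lsmul ℝ ℝ, volume] u with hy1
  set y2 := deriv (deriv K) ⋆[ContinuousLinearMap.lsmul ℝ ℝ, volume] u with hy2
  have d1 : ∀ x, HasDerivAt y (y1 x) x := fun x =>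
    kK.hasDerivAt_convolution_left _ (sK.of_le (by exact_mod_cast le_top)) hul x
  have d2 : ∀ x, HasDerivAt y1 (y2 x) x := fun x =>
    kK.deriv.hasDerivAt_convolution_left _ (sK1.of_le (by exact_mod_cast le_top)) hul x
  have cy : Continuous y := continuous_iff_continuousAt.2 fun x => (d1 x).continuousAt
  have cy1 : Continuous y1 := continuous_iff_continuousAt.2 fun x => (d2 x).continuousAt
  have cy2 : Continuous y2 :=
    ((kK.deriv.deriv).contDiff_convolution_left (n := ⊤) _ sK2 hul).continuous
  refine ⟨cy, ?_⟩
  set M := K ⋆[ContinuousLinearMap.lsmul ℝ ℝ, volume] (fun x => ‖u x‖ ^ 2) with hM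
  have iM : Integrable M := iK.integrable_convolution _ hu2
  have eM : ∫ x, M x = ∫ x, ‖u x‖ ^ 2 := by
    rw [hM, integral_convolution _ iK hu2, hK, φ.integral_normed]; simp
  -- integrability of things against the kernel
  have sKx : ∀ x, ContDiff ℝ (⊤ : ℕ∞) (fun t => K (x - t)) := fun x => by fun_prop
  have kKx : ∀ x, HasCompactSupport (fun t => K (x - t)) := fun x =>
    kK.comp_homeomorph (Homeomorph.subLeft x)
  have iint : ∀ x (g : ℝ → ℂ), LocallyIntegrable g volume → Integrable (fun t => K (x - t) • g t) :=
    fun x g hg => hg.integrable_smul_left_of_hasCompactSupport (sKx x).continuous (kKx x)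
  have iintr : ∀ x (g : ℝ → ℝ), LocallyIntegrable g volume →
      Integrable (fun t => K (x - t) * g t) :=
    fun x g hg => hg.integrable_smul_left_of_hasCompactSupport (sKx x).continuous (kKx x)
  have key : ∀ x, ‖y x‖ ^ 2 ≤ M x ∧
      (|x| ≤ R → (-z.re) * ‖y x‖ ^ 2 - δ * M x ≤ inner ℝ (y x) (y2 x)) := by
    intro x
    set m := ∫ t, K (x - t) * ‖u t‖ with hm
    have hyx : y x = ∫ t, K (x - t) • u t := convolution_lsmul_swap
    have hMx : M x = ∫ t, K (x - t) * ‖u t‖ ^ 2 := convolution_lsmul_swap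
    have m0 : 0 ≤ m := integral_nonneg fun t => mul_nonneg (K0 _) (norm_nonneg _)
    have hmM : m ^ 2 ≤ M x := by
      rw [hMx]
      refine jensen_aux (fun t => K (x - t)) (fun t => ‖u t‖) (fun t => K0 _)
        (iK.comp_sub_left x) ?_ (iintr x _ huln) (iintr x _ hu2.locallyIntegrable)
      rw [integral_sub_left_eq_self K volume x, hK, φ.integral_normed]
    have hym : ‖y x‖ ≤ m := by
      rw [hyx]
      refine (norm_integral_le_integral_norm _).trans_eq ?_
      congr 1; ext t; rw [norm_smul, Real.norm_of_nonneg (K0 _)]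
    have hyM : ‖y x‖ ^ 2 ≤ M x := (pow_le_pow_left₀ (norm_nonneg _) hym 2).trans hmM
    refine ⟨hyM, fun hx => ?_⟩
    have dd : deriv (deriv fun t => K (x - t)) = fun t => deriv (deriv K) (x - t) := by
      have a1 : deriv (fun t => K (x - t)) = fun t => - deriv K (x - t) := by
        ext t; exact deriv_comp_const_sub K x t
      rw [a1]; ext t
      rw [deriv.fun_neg, deriv_comp_const_sub, neg_neg]
    have hy2x : y2 x = ∫ t, K (x - t) • ((-Complex.I * (t : ℂ) ^ 3 - star z) * u t) := by
      rw [← heq _ (sKx x) (kKx x), dd]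
      exact convolution_lsmul_swap
    set q : ℝ → ℂ := fun t => -Complex.I * (t : ℂ) ^ 3 - star z with hq
    have cq : Continuous q := by fun_prop
    have he : ‖y2 x - q x * y x‖ ≤ δ * m := by
      have : y2 x - q x * y x = ∫ t, K (x - t) • ((q t - q x) * u t) := by
        rw [hy2x, hyx, ← integral_const_mul, ← integral_sub (iint x _ _) ((iint x _ hul).const_mul _)]
        · congr 1; ext t; simp only [Complex.real_smul]; ring
        · exact (locallyIntegrableOn_univ.1 ((locallyIntegrableOn_univ.2 hul).continuousOn_mul
            cq.continuousOn isOpen_univ.isLocallyClosed))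
      rw [this, hm, ← integral_const_mul]
      refine norm_integral_le_of_norm_le ((iintr x _ huln).const_mul _) ?_
      refine Filter.Eventually.of_forall fun t => ?_
      rw [norm_smul, Real.norm_of_nonneg (K0 _), norm_mul]
      by_cases ht : |x - t| < φ.rOut
      · have h3 : ‖q t - q x‖ ≤ δ := by
          have : q t - q x = -Complex.I * (((t ^ 3 - x ^ 3 : ℝ)) : ℂ) := by
            simp only [hq]; push_cast; ring
          rw [this, norm_mul, Complex.norm_real]; simpa using hR x t hx ht
        calc _ ≤ K (x - t) * (δ * ‖u t‖) := by gcongr; exact K0 _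
          _ = _ := by ring
      · have : K (x - t) = 0 := by
          have hn : x - t ∉ Function.support K := by
            rw [hK, φ.support_normed_eq]; simpa using ht
          simpa using hn
        simp [this]
    have e1 : (inner ℝ (y x) (y2 x) : ℝ) = inner ℝ (y x) (q x * y x)
        + inner ℝ (y x) (y2 x - q x * y x) := by
      rw [← inner_add_right]; congr 1; ring
    have e2 : (inner ℝ (y x) (q x * y x) : ℝ) = (-z.re) * ‖y x‖ ^ 2 := by
      have hqr : (q x).re = -z.re := by
        have h3 : ((x : ℂ) ^ 3).im = 0 := by rw [← Complex.ofReal_pow, Complex.ofReal_im]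
        simp [hq, h3]
      rw [← hqr, ← Complex.normSq_eq_norm_sq, Complex.inner, Complex.normSq_apply]
      simp only [Complex.mul_re, Complex.mul_im, Complex.conj_re, Complex.conj_im]
      ring
    have e3 := abs_le.1 (abs_real_inner_le_norm (y x) (y2 x - q x * y x))
    have e4 : ‖y x‖ * ‖y2 x - q x * y x‖ ≤ δ * M x := by
      calc _ ≤ m * (δ * m) := by gcongr
        _ = δ * m ^ 2 := by ring
        _ ≤ _ := by gcongr
    rw [e1, e2]; linarith [e3.1]
  have sχ1 : ContDiff ℝ (⊤ : ℕ∞) (deriv χ) := ((contDiff_infty_iff_deriv (𝕜 := ℝ)).1 sχ).2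
  have sχ2 : ContDiff ℝ (⊤ : ℕ∞) (deriv (deriv χ)) :=
    ((contDiff_infty_iff_deriv (𝕜 := ℝ)).1 sχ1).2
  have E := energy_aux y y1 y2 χ (deriv χ) (deriv (deriv χ)) d1 d2 cy2
    (fun x => (sχ.differentiable (by simp) x).hasDerivAt)
    (fun x => (sχ1.differentiable (by simp) x).hasDerivAt) sχ2.continuous hχ
  have I1 : Integrable (fun x => χ x * ‖y x‖ ^ 2) :=
    (sχ.continuous.mul (by fun_prop : Continuous fun x => ‖y x‖ ^ 2)).integrable_of_hasCompactSupport
      hχ.mul_right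
  have I2 : Integrable (fun x => χ x * (2 * (inner ℝ (y x) (y2 x) + ‖y1 x‖ ^ 2))) :=
    (sχ.continuous.mul (by fun_prop : Continuous fun x =>
      (2 * (inner ℝ (y x) (y2 x) + ‖y1 x‖ ^ 2)))).integrable_of_hasCompactSupport
      hχ.mul_right
  have I3 : Integrable (fun x => deriv (deriv χ) x * ‖y x‖ ^ 2) :=
    (sχ2.continuous.mul (by fun_prop : Continuous fun x => ‖y x‖ ^ 2)).integrable_of_hasCompactSupport
      hχ.deriv.deriv.mul_right
  have L1 : ∫ x, (2 * (-z.re) * (χ x * ‖y x‖ ^ 2) - 2 * δ * M x) ≤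
      ∫ x, χ x * (2 * (inner ℝ (y x) (y2 x) + ‖y1 x‖ ^ 2)) := by
    refine integral_mono ((I1.const_mul _).sub (iM.const_mul _)) I2 fun x => ?_
    have hMx : 0 ≤ M x := (sq_nonneg _).trans (key x).1
    dsimp only
    rcases le_or_gt |x| R with hx | hx
    · have a := (key x).2 hx
      have b : χ x * (δ * M x) ≤ 1 * (δ * M x) := by gcongr; exact χ1 x
      have c' := mul_le_mul_of_nonneg_left a (χ0 x)
      have d := mul_nonneg (χ0 x) (sq_nonneg ‖y1 x‖)
      linarith
    · rw [hχR x hx]; simp; positivity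
  have L2 : ∫ x, deriv (deriv χ) x * ‖y x‖ ^ 2 ≤ ∫ x, c * M x := by
    refine integral_mono I3 (iM.const_mul _) fun x => ?_
    have c0 : 0 ≤ c := (abs_nonneg _).trans (hc 0)
    calc _ ≤ c * ‖y x‖ ^ 2 := by gcongr; exact (le_abs_self _).trans (hc x)
      _ ≤ _ := by gcongr; exact (key x).1
  rw [integral_sub (I1.const_mul _) (iM.const_mul _), integral_const_mul, integral_const_mul, eM] at L1
  rw [integral_const_mul, eM] at L2
  linarith

lemma vanish_aux (z : ℂ) (hz : z.re < 0) (u : ℝ → ℂ) (hu : MemLp u 2 volume)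
    (heq : ∀ ψ : ℝ → ℝ, ContDiff ℝ (⊤ : ℕ∞) ψ → HasCompactSupport ψ →
      ∫ t, deriv (deriv ψ) t • u t = ∫ t, ψ t • ((-Complex.I * (t : ℂ) ^ 3 - star z) * u t)) :
    u =ᵐ[volume] 0 := by
  have hul : LocallyIntegrable u volume := hu.locallyIntegrable (by norm_num)
  let f : ContDiffBump (0 : ℝ) := ⟨1, 2, by norm_num, by norm_num⟩
  have sf : ContDiff ℝ (⊤ : ℕ∞) f := f.contDiff
  have sf1 : ContDiff ℝ (⊤ : ℕ∞) (deriv f) := ((contDiff_infty_iff_deriv (𝕜 := ℝ)).1 sf).2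
  have sf2 : ContDiff ℝ (⊤ : ℕ∞) (deriv (deriv f)) :=
    ((contDiff_infty_iff_deriv (𝕜 := ℝ)).1 sf1).2
  obtain ⟨c, hc⟩ := sf2.continuous.bounded_above_of_compact_support f.hasCompactSupport.deriv.deriv
  have c0 : 0 ≤ c := (norm_nonneg _).trans (hc 0)
  let N : ℕ → ℝ := fun n => (n : ℝ) + 1
  have N1 : ∀ n, 1 ≤ N n := fun n => by simp [N]
  have N0 : ∀ n, 0 < N n := fun n => by linarith [N1 n]
  have NT : Filter.Tendsto N Filter.atTop Filter.atTop :=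
    Filter.tendsto_atTop_add_const_right _ _ tendsto_natCast_atTop_atTop
  let r : ℕ → ℝ := fun n => 1 / (3 * (2 * N n + 1) ^ 2 * N n)
  have r0 : ∀ n, 0 < r n := fun n => by have := N0 n; positivity
  have rN : ∀ n, r n * (3 * (2 * N n + 1) ^ 2) = (N n)⁻¹ := fun n => by
    have := N0 n; simp only [r]; field_simp
  have rle : ∀ n, r n ≤ (N n)⁻¹ := fun n => by
    rw [← rN n]
    have := r0 n; have := N1 n
    nlinarith [sq_nonneg (N n)]
  let φ : ℕ → ContDiffBump (0 : ℝ) := fun n => ⟨r n / 2, r n, by linarith [r0 n], by linarith [r0 n]⟩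
  let χ : ℕ → ℝ → ℝ := fun n x => f ((N n)⁻¹ * x)
  let y : ℕ → ℝ → ℂ := fun n =>
    MeasureTheory.convolution ((φ n).normed volume) u (ContinuousLinearMap.lsmul ℝ ℝ) volume
  have invT : Filter.Tendsto (fun n => (N n)⁻¹) Filter.atTop (nhds 0) :=
    tendsto_inv_atTop_zero.comp NT
  have conv : ∀ᵐ x, Filter.Tendsto (fun n => y n x) Filter.atTop (nhds (u x)) := by
    refine ContDiffBump.ae_convolution_tendsto_right_of_locallyIntegrable (φ := φ) (K := 2) ?_ ?_ hul
    · exact squeeze_zero (fun n => (r0 n).le) rle invT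
    · exact Filter.Eventually.of_forall fun n => by simp only [φ]; linarith
  have sχ : ∀ n, ContDiff ℝ (⊤ : ℕ∞) (χ n) := fun n =>
    sf.comp (contDiff_const.mul contDiff_id)
  have zχ : ∀ n x, 2 * N n < |x| → χ n x = 0 := fun n x hx => by
    refine f.zero_of_le_dist ?_
    rw [dist_zero_right, Real.norm_eq_abs, abs_mul, abs_of_pos (inv_pos.2 (N0 n))]
    change 2 ≤ _
    rw [inv_mul_eq_div, le_div_iff₀ (N0 n)]; exact hx.le
  have kχ : ∀ n, HasCompactSupport (χ n) := fun n => by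
    refine HasCompactSupport.of_support_subset_isCompact (isCompact_Icc (a := -(2 * N n)) (b := 2 * N n)) ?_
    intro x hx
    rw [Set.mem_Icc, ← abs_le]
    by_contra h
    exact hx (zχ n x (not_le.1 h))
  have st : ∀ n, Continuous (y n) ∧ 2 * (-z.re) * ∫ x, χ n x * ‖y n x‖ ^ 2
      ≤ (c * (N n)⁻¹ + 2 * (N n)⁻¹) * ∫ x, ‖u x‖ ^ 2 := by
    intro n
    have Ni : (N n)⁻¹ ≤ 1 := inv_le_one_of_one_le₀ (N1 n)
    have Np : 0 < (N n)⁻¹ := inv_pos.2 (N0 n)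
    refine step_aux z u hu heq (φ n) (2 * N n) (N n)⁻¹ (c * (N n)⁻¹) Np.le ?_ (χ n) (sχ n) (kχ n)
      (fun x => f.nonneg) (fun x => f.le_one) (zχ n) ?_
    · intro x t hx hxt
      change |x - t| < r n at hxt
      have hr1 : r n ≤ 1 := (rle n).trans Ni
      have hxa := abs_le.1 hx
      have hxb := abs_lt.1 hxt
      have ht : |t| ≤ 2 * N n + 1 := abs_le.2 ⟨by linarith, by linarith⟩
      have hx' : |x| ≤ 2 * N n + 1 := by linarith
      have : t ^ 3 - x ^ 3 = (t - x) * (t ^ 2 + t * x + x ^ 2) := by ring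
      rw [this, abs_mul, ← rN n, abs_sub_comm]
      have h1 : |t ^ 2 + t * x + x ^ 2| ≤ 3 * (2 * N n + 1) ^ 2 := by
        calc _ ≤ |t| ^ 2 + |t| * |x| + |x| ^ 2 := by
              rw [← abs_pow, ← abs_pow, ← abs_mul]; exact abs_add_three _ _ _
          _ ≤ (2 * N n + 1) ^ 2 + (2 * N n + 1) * (2 * N n + 1) + (2 * N n + 1) ^ 2 := by
              gcongr
          _ = _ := by ring
      gcongr
    · intro x
      have a1 : deriv (χ n) = fun t => (N n)⁻¹ * deriv f ((N n)⁻¹ * t) := by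
        ext t; exact deriv_comp_mul_left _ f t
      have a2 : deriv (deriv (χ n)) x = (N n)⁻¹ * ((N n)⁻¹ * deriv (deriv f) ((N n)⁻¹ * x)) := by
        rw [a1, deriv_const_mul_field]; congr 1; exact deriv_comp_mul_left _ (deriv f) x
      rw [a2, abs_mul, abs_mul, abs_of_pos Np]
      calc _ ≤ (N n)⁻¹ * (1 * c) := by gcongr; exact hc _
        _ = _ := by ring
  -- Fatou
  have F := lintegral_liminf_le (μ := volume) (u := Filter.atTop)
    (f := fun n x => ENNReal.ofReal (χ n x * ‖y n x‖ ^ 2)) (fun n => by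
      have := (st n).1; have := (sχ n).continuous
      exact (ENNReal.continuous_ofReal.comp
        (by fun_prop : Continuous fun x => χ n x * ‖y n x‖ ^ 2)).measurable)
  have lim0 : Filter.Tendsto (fun n => ∫⁻ x, ENNReal.ofReal (χ n x * ‖y n x‖ ^ 2)) Filter.atTop
      (nhds 0) := by
    have T : Filter.Tendsto (fun n => ENNReal.ofReal
        ((c * (N n)⁻¹ + 2 * (N n)⁻¹) * (∫ x, ‖u x‖ ^ 2) / (2 * (-z.re)))) Filter.atTop (nhds 0) := by
      have := ((((invT.const_mul c).add (invT.const_mul 2)).mul_const (∫ x, ‖u x‖ ^ 2)).div_const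
        (2 * (-z.re)))
      simpa using ENNReal.tendsto_ofReal this
    refine tendsto_of_tendsto_of_tendsto_of_le_of_le tendsto_const_nhds T (fun _ => zero_le) ?_
    intro n
    dsimp only
    have := (st n).1; have := (sχ n).continuous
    rw [← ofReal_integral_eq_lintegral_ofReal]
    · apply ENNReal.ofReal_le_ofReal
      rw [le_div_iff₀ (by linarith), mul_comm]
      exact (st n).2
    · exact (by fun_prop : Continuous fun x => χ n x * ‖y n x‖ ^ 2).integrable_of_hasCompactSupport
        (kχ n).mul_right
    · exact Filter.Eventually.of_forall fun x => mul_nonneg f.nonneg (sq_nonneg _)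
  rw [lim0.liminf_eq, nonpos_iff_eq_zero] at F
  have eqae : ∀ᵐ x, Filter.liminf (fun n => ENNReal.ofReal (χ n x * ‖y n x‖ ^ 2)) Filter.atTop
      = ENNReal.ofReal (‖u x‖ ^ 2) := by
    filter_upwards [conv] with x hx
    refine Filter.Tendsto.liminf_eq (ENNReal.tendsto_ofReal ?_)
    refine (hx.norm.pow 2).congr' ?_
    filter_upwards [NT.eventually_ge_atTop |x|] with n hn
    have : χ n x = 1 := by
      refine f.one_of_mem_closedBall ?_
      rw [mem_closedBall_zero_iff, Real.norm_eq_abs, abs_mul, abs_of_pos (inv_pos.2 (N0 n))]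
      change _ ≤ 1
      rw [inv_mul_eq_div, div_le_one (N0 n)]; exact hn
    rw [this, one_mul]
  rw [lintegral_congr_ae eqae, lintegral_eq_zero_iff'] at F
  · filter_upwards [F] with x hx
    have : ‖u x‖ ^ 2 ≤ 0 := by simpa using hx
    have : ‖u x‖ = 0 := by nlinarith [norm_nonneg (u x)]
    simpa using this
  · exact (hu.1.norm.pow 2).aemeasurable.ennreal_ofReal

/-- The operator `H - z`. -/
noncomputable def opT (z : ℂ) (ψ : ℝ → ℂ) (x : ℝ) : ℂ :=
  -(deriv (deriv ψ) x) + Complex.I * (x : ℂ) ^ 3 * ψ x - z * ψ x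

lemma opT_cont (z : ℂ) (ψ : ℝ → ℂ) (h : ContDiff ℝ (⊤ : ℕ∞) ψ) : Continuous (opT z ψ) := by
  have h1 : ContDiff ℝ (⊤ : ℕ∞) (deriv ψ) := ((contDiff_infty_iff_deriv (𝕜 := ℝ)).1 h).2
  have h2 : Continuous (deriv (deriv ψ)) :=
    ((contDiff_infty_iff_deriv (𝕜 := ℝ)).1 h1).2.continuous
  have h0 := h.continuous
  unfold opT; fun_prop

lemma opT_supp (z : ℂ) (ψ : ℝ → ℂ) (h : HasCompactSupport ψ) : HasCompactSupport (opT z ψ) :=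
  (h.deriv.deriv.neg.add h.mul_left).sub h.mul_left

lemma opT_add (z : ℂ) (ψ η : ℝ → ℂ) (h : ContDiff ℝ (⊤ : ℕ∞) ψ) (h' : ContDiff ℝ (⊤ : ℕ∞) η) :
    opT z (ψ + η) = opT z ψ + opT z η := by
  have h1 : ContDiff ℝ (⊤ : ℕ∞) (deriv ψ) := ((contDiff_infty_iff_deriv (𝕜 := ℝ)).1 h).2
  have h1' : ContDiff ℝ (⊤ : ℕ∞) (deriv η) := ((contDiff_infty_iff_deriv (𝕜 := ℝ)).1 h').2
  have e : deriv (ψ + η) = deriv ψ + deriv η := by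
    ext x; exact deriv_add (h.differentiable (by simp) x) (h'.differentiable (by simp) x)
  ext x
  simp only [opT, e, Pi.add_apply]
  rw [deriv_add (h1.differentiable (by simp) x) (h1'.differentiable (by simp) x)]
  ring

lemma opT_smul (z c : ℂ) (ψ : ℝ → ℂ) : opT z (c • ψ) = c • opT z ψ := by
  have e : ∀ ψ : ℝ → ℂ, deriv (c • ψ) = c • deriv ψ := by
    intro ψ; ext x; exact deriv_const_smul_field c ψ
  ext x
  simp only [opT, e, Pi.smul_apply, smul_eq_mul]
  ring

/-- The range of `H - z` in `L²`. -/
noncomputable def rangeT (z : ℂ) : Submodule ℂ (Lp ℂ 2 (volume : Measure ℝ)) where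
  carrier := {g | ∃ ψ : ℝ → ℂ, ContDiff ℝ (⊤ : ℕ∞) ψ ∧ HasCompactSupport ψ ∧ g =ᵐ[volume] opT z ψ}
  zero_mem' := ⟨0, contDiff_const, HasCompactSupport.zero, by
    have : opT z 0 = 0 := by simpa using opT_smul z 0 0
    rw [this]; exact Lp.coeFn_zero _ _ _⟩
  add_mem' := by
    rintro a b ⟨ψ, h1, h2, h3⟩ ⟨η, k1, k2, k3⟩
    refine ⟨ψ + η, h1.add k1, h2.add k2, ?_⟩
    rw [opT_add z ψ η h1 k1]
    exact (Lp.coeFn_add a b).trans (h3.add k3)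
  smul_mem' := by
    rintro c a ⟨ψ, h1, h2, h3⟩
    refine ⟨c • ψ, h1.const_smul c, h2.smul_left (f := fun _ => c), ?_⟩
    rw [opT_smul]
    exact (Lp.coeFn_smul c a).trans (h3.const_smul c)

lemma rangeT_dense (z : ℂ) (hz : z.re < 0) : (rangeT z).topologicalClosure = ⊤ := by
  rw [Submodule.topologicalClosure_eq_top_iff, Submodule.eq_bot_iff]
  intro u hu
  refine (Lp.eq_zero_iff_ae_eq_zero).2 (vanish_aux z hz u (Lp.memLp u) ?_)
  intro ψ sψ kψ
  have hul : LocallyIntegrable u volume := (Lp.memLp u).locallyIntegrable (by norm_num)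
  have sψ1 : ContDiff ℝ (⊤ : ℕ∞) (deriv ψ) := ((contDiff_infty_iff_deriv (𝕜 := ℝ)).1 sψ).2
  have sψ2 : ContDiff ℝ (⊤ : ℕ∞) (deriv (deriv ψ)) :=
    ((contDiff_infty_iff_deriv (𝕜 := ℝ)).1 sψ1).2
  let Ψ : ℝ → ℂ := fun x => (ψ x : ℂ)
  have sΨ : ContDiff ℝ (⊤ : ℕ∞) Ψ := Complex.ofRealCLM.contDiff.comp sψ
  have kΨ : HasCompactSupport Ψ := kψ.comp_left (g := fun t : ℝ => (t : ℂ)) Complex.ofReal_zero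
  have D1 : deriv Ψ = fun x => ((deriv ψ x : ℝ) : ℂ) := by
    ext x; exact ((sψ.differentiable (by simp) x).hasDerivAt.ofReal_comp).deriv
  have D2 : deriv (deriv Ψ) = fun x => ((deriv (deriv ψ) x : ℝ) : ℂ) := by
    rw [D1]; ext x; exact ((sψ1.differentiable (by simp) x).hasDerivAt.ofReal_comp).deriv
  have mem : MemLp (opT z Ψ) 2 volume :=
    (opT_cont z Ψ sΨ).memLp_of_hasCompactSupport (opT_supp z Ψ kΨ)
  have h := (Submodule.mem_orthogonal _ _).1 hu (mem.toLp) ⟨Ψ, sΨ, kΨ, mem.coeFn_toLp⟩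
  rw [L2.inner_def] at h
  have h' : ∫ t, (ψ t • ((-Complex.I * (t : ℂ) ^ 3 - star z) * u t) - deriv (deriv ψ) t • u t) = 0 := by
    rw [← h]
    refine integral_congr_ae ?_
    filter_upwards [mem.coeFn_toLp] with t ht
    rw [ht]
    simp only [opT, D2, Ψ, RCLike.inner_apply, map_sub, map_add, map_mul, map_neg, map_pow,
      Complex.conj_ofReal, Complex.conj_I, Complex.real_smul, ← starRingEnd_apply]
    ring
  rw [integral_sub] at h'
  · exact (sub_eq_zero.1 h').symm
  · refine LocallyIntegrable.integrable_smul_left_of_hasCompactSupport ?_ sψ.continuous kψ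
    exact (locallyIntegrableOn_univ.1 ((locallyIntegrableOn_univ.2 hul).continuousOn_mul
            (by fun_prop) isOpen_univ.isLocallyClosed))
  · exact hul.integrable_smul_left_of_hasCompactSupport sψ2.continuous kψ.deriv.deriv

lemma dense_aux (z : ℂ) (hz : z.re < 0) (φ : ℝ → ℂ) (hφ : MemLp φ 2 volume) (ε : ℝ) (hε : 0 < ε) :
    ∃ ψ : ℝ → ℂ, ContDiff ℝ (⊤ : ℕ∞) ψ ∧ HasCompactSupport ψ ∧
      (∫ x : ℝ, ‖opT z ψ x - φ x‖ ^ 2) < ε ^ 2 := by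
  have h : hφ.toLp ∈ (rangeT z).topologicalClosure := by rw [rangeT_dense z hz]; trivial
  obtain ⟨g, ⟨ψ, h1, h2, h3⟩, hg⟩ := Metric.mem_closure_iff.1 h ε hε
  refine ⟨ψ, h1, h2, ?_⟩
  rw [dist_comm, dist_eq_norm] at hg
  have e : ‖g - hφ.toLp‖ ^ 2 = ∫ x : ℝ, ‖opT z ψ x - φ x‖ ^ 2 := by
    have a : (inner ℝ (g - hφ.toLp) (g - hφ.toLp) : ℝ) = ‖g - hφ.toLp‖ ^ 2 :=
      real_inner_self_eq_norm_sq _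
    rw [← a, L2.inner_def]
    refine integral_congr_ae ?_
    filter_upwards [Lp.coeFn_sub g hφ.toLp, hφ.coeFn_toLp, h3] with x x1 x2 x3
    rw [real_inner_self_eq_norm_sq, x1, Pi.sub_apply, x2, x3]
  rw [← e]
  gcongr

theorem range_dense (z : ℂ) (hz : z.re < 0) :
    ∀ φ : ℝ → ℂ, Integrable (fun x : ℝ => ‖φ x‖ ^ 2) →
      ∀ ε > (0 : ℝ), ∃ ψ : ℝ → ℂ, ContDiff ℝ (⊤ : ℕ∞) ψ ∧ HasCompactSupport ψ ∧
        (∫ x : ℝ,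
            ‖-(deriv (deriv ψ) x) + Complex.I * (x : ℂ) ^ 3 * ψ x - z * ψ x - φ x‖ ^ 2)
          < ε ^ 2 := by
  intro φ hφ ε hε
  by_cases hm : AEStronglyMeasurable φ volume
  · exact dense_aux z hz φ ((memLp_two_iff_integrable_sq_norm hm).2 hφ) ε hε
  -- a non-measurable `φ`: some choice makes the integrand non-measurable
  by_contra hcon
  push Not at hcon
  have A : ∀ ψ : ℝ → ℂ, ContDiff ℝ (⊤ : ℕ∞) ψ → HasCompactSupport ψ →
      AEStronglyMeasurable (fun x => (inner ℝ (opT z ψ x) (φ x) : ℝ)) volume := by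
    intro ψ h1 h2
    have h := hcon ψ h1 h2
    have hi : Integrable (fun x => ‖opT z ψ x - φ x‖ ^ 2) := by
      by_contra hn
      have h0 : ∫ x, ‖opT z ψ x - φ x‖ ^ 2 = 0 := integral_undef hn
      have : ε ^ 2 ≤ 0 := h0 ▸ h
      have : 0 < ε ^ 2 := by positivity
      linarith
    have hT : AEStronglyMeasurable (fun x => ‖opT z ψ x‖ ^ 2) volume :=
      ((opT_cont z ψ h1).norm.pow 2).aestronglyMeasurable
    have := ((hT.add hφ.1).sub hi.1).const_mul (1 / 2)
    refine this.congr (Filter.Eventually.of_forall fun x => ?_)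
    simp only [Pi.add_apply, Pi.sub_apply]
    rw [norm_sub_sq_real]; ring
  have B : ∀ n : ℕ, AEStronglyMeasurable φ (volume.restrict (Metric.closedBall 0 ((n : ℝ) + 1))) := by
    intro n
    let f : ContDiffBump (0 : ℝ) := ⟨(n : ℝ) + 2, (n : ℝ) + 3, by positivity, by linarith⟩
    let F : ℝ → ℂ := fun x => (f x : ℂ)
    have sF : ContDiff ℝ (⊤ : ℕ∞) F := Complex.ofRealCLM.contDiff.comp f.contDiff
    have kF : HasCompactSupport F :=
      f.hasCompactSupport.comp_left (g := fun t : ℝ => (t : ℂ)) Complex.ofReal_zero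
    have a1 := (A F sF kF)
    have a2 := (A (Complex.I • F) (sF.const_smul Complex.I) (kF.smul_left (f := fun _ => Complex.I)))
    have a3 : AEStronglyMeasurable (fun x => (starRingEnd ℂ (opT z F x)) * φ x) volume := by
      have := (Complex.continuous_ofReal.comp_aestronglyMeasurable a1).add
        ((Complex.continuous_ofReal.comp_aestronglyMeasurable a2).const_mul Complex.I)
      refine this.congr (Filter.Eventually.of_forall fun x => ?_)
      rw [opT_smul]
      apply Complex.ext
      · simp [Complex.inner]; ring
      · simp [Complex.inner]; ring
    have a4 : AEStronglyMeasurable (fun x => (starRingEnd ℂ (opT z F x))⁻¹) volume :=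
      ((Complex.continuous_conj.comp (opT_cont z F sF)).measurable.inv).aestronglyMeasurable
    refine ((a4.mul a3).restrict).congr ?_
    filter_upwards [ae_restrict_mem measurableSet_closedBall] with x hx
    have hx' : x ∈ Metric.ball (0 : ℝ) ((n : ℝ) + 2) :=
      Metric.closedBall_subset_ball (by linarith) hx
    have ev : F =ᶠ[nhds x] fun _ => 1 := by
      filter_upwards [Metric.isOpen_ball.mem_nhds hx'] with t ht
      simp only [F]
      rw [f.one_of_mem_closedBall (Metric.ball_subset_closedBall ht)]; simp
    have d : deriv (deriv F) x = 0 := by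
      rw [ev.deriv.deriv_eq]; simp
    have hT : opT z F x = Complex.I * (x : ℂ) ^ 3 - z := by
      simp only [opT, d, ev.eq_of_nhds]; ring
    have hne : starRingEnd ℂ (opT z F x) ≠ 0 := by
      rw [hT]
      intro h
      rw [map_eq_zero] at h
      have h3 : ((x : ℂ) ^ 3).im = 0 := by rw [← Complex.ofReal_pow, Complex.ofReal_im]
      have := congrArg Complex.re h
      simp [h3] at this
      linarith
    simp only [Pi.mul_apply]
    field_simp
  apply hm
  have hU : (⋃ n : ℕ, Metric.closedBall (0 : ℝ) ((n : ℝ) + 1)) = Set.univ := by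
    refine Set.eq_univ_of_forall fun x => Set.mem_iUnion.2 ?_
    obtain ⟨n, hn⟩ := exists_nat_ge |x|
    exact ⟨n, by rw [mem_closedBall_zero_iff, Real.norm_eq_abs]; linarith⟩
  rw [← Measure.restrict_univ (μ := (volume : Measure ℝ)), ← hU]
  exact (aestronglyMeasurable_iUnion_iff).2 B
end
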